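/- Let K = ℚ(A) be the field of rational functions over ℚ, and regard s = X² − 2(A+1)·X + (A−1)², w = X − (A+1) and the recursively defined polynomials Q_k (with Q_1 = −(X³ − (3A−1)(A−3)·X + 2(A+1)(A−1)²)/4 and Q_{k+1} = (3(k+1)·X·w − s)·Q_k − X·s·Q_k′ − X·∑_{j=1}^{k−1} Q_j·Q_{k−j}) as elements of K[X]. Then for every k ≥ 1: (i) there is exactly one polynomial P ∈ K[X] satisfying s·P′ − 3(2k−1)·w·P = Q_{2k−1}; its degree in X is exactly 6k−3, all its coefficients lie in the subring ℚ[A, A^{−1}], and its leading coefficient equals (2^{1−2k} − 1)·B_{2k}·(1 + A^{1−2k})/(4k(2k−1)), where B_{2k} is the 2k-th Bernoulli number; and (ii) there is exactly one polynomial P ∈ K[X] of degree < 6k satisfying s·P′ − 6k·w·P = Q_{2k}; its degree in X is exactly 4k and all its coefficients lie in ℚ[A]. -/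

import Mathlib

open Polynomial

/-- The indeterminate `A`, as an element of the coefficient ring `ℚ[A]`. -/
noncomputable def Av : Polynomial ℚ := X

/-- `s = X² − 2(A+1)X + (A−1)² ∈ ℚ[A][X]`. -/
noncomputable def sLag : Polynomial (Polynomial ℚ) :=
  X ^ 2 - C (2 * (Av + 1)) * X + C ((Av - 1) ^ 2)

/-- `w = X − (A+1) ∈ ℚ[A][X]`. -/
noncomputable def wLag : Polynomial (Polynomial ℚ) := X - C (Av + 1)

/-- The polynomials `Q_k ∈ ℚ[A][X]`:
`Q_1 = −(X³ − (3A−1)(A−3)X + 2(A+1)(A−1)²)/4` and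
`Q_{k+1} = (3(k+1)·X·w − s)·Q_k − X·s·Q_k′ − X·∑_{j=1}^{k−1} Q_j·Q_{k−j}`. -/
noncomputable def QLag : ℕ → Polynomial (Polynomial ℚ)
  | 0 => 0
  | 1 => (-(1 : ℚ) / 4) •
      (X ^ 3 - C ((3 * Av - 1) * (Av - 3)) * X + C (2 * (Av + 1) * (Av - 1) ^ 2))
  | (k + 2) =>
      ((3 * ((k : ℚ) + 2)) • (X * wLag) - sLag) * QLag (k + 1)
        - X * sLag * derivative (QLag (k + 1))
        - X * ∑ j ∈ (Finset.Ico 1 (k + 1)).attach, QLag j.1 * QLag (k + 1 - j.1)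
  decreasing_by
    all_goals try (have hj := Finset.mem_Ico.mp j.2)
    all_goals omega

/-- The field `K = ℚ(A)` of rational functions. -/
abbrev KA : Type := RatFunc ℚ

/-- The element `A` of `K = ℚ(A)`. -/
noncomputable def AK : KA := algebraMap (Polynomial ℚ) KA Polynomial.X

/-- The embedding `ℚ[A][X] → K[X]`. -/
noncomputable def toKA (P : Polynomial (Polynomial ℚ)) : Polynomial KA :=
  P.map (algebraMap (Polynomial ℚ) KA)

namespace Lag

section abstractPart
variable {M : Type*} [CommRing M] [Algebra ℚ M]

/-- Coefficientwise extension of a derivation to power series. -/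
noncomputable def cD (D : Derivation ℚ M M) : Derivation ℚ (PowerSeries M) (PowerSeries M) :=
  Derivation.mk'
    { toFun := fun F => PowerSeries.mk fun n => D (PowerSeries.coeff n F)
      map_add' := by intro F G; ext n; simp
      map_smul' := by intro c F; ext n; simp }
    (by
      intro F G
      ext n
      simp only [LinearMap.coe_mk, AddHom.coe_mk, PowerSeries.coeff_mk, PowerSeries.coeff_mul,
        map_sum, map_add, smul_eq_mul, Derivation.leibniz, Finset.sum_add_distrib]
      congr 1
      rw [← Finset.Nat.sum_antidiagonal_swap]
      rfl)

@[simp] lemma coeff_cD (D : Derivation ℚ M M) (F : PowerSeries M) (n : ℕ) :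
    PowerSeries.coeff n (cD D F) = D (PowerSeries.coeff n F) := by
  simp [cD]

lemma cD_C (D : Derivation ℚ M M) (a : M) : cD D (PowerSeries.C a) = PowerSeries.C (D a) := by
  ext n
  simp only [coeff_cD, PowerSeries.coeff_C]
  split_ifs <;> simp

lemma cD_X (D : Derivation ℚ M M) : cD D (PowerSeries.X) = 0 := by
  ext n
  simp only [coeff_cD, PowerSeries.coeff_X]
  split_ifs <;> simp

lemma cD_comm {D E : Derivation ℚ M M} (h : ∀ a, D (E a) = E (D a)) (F : PowerSeries M) :
    cD D (cD E F) = cD E (cD D F) := by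
  ext n; simp [h]

/-- derivative of an inverse -/
lemma der_inv (D : Derivation ℚ M M) {F I : M} (h : F * I = 1) : D I = - (D F * I * I) := by
  have h1 : D (F * I) = 0 := by rw [h]; simp
  rw [Derivation.leibniz] at h1
  simp only [smul_eq_mul] at h1
  linear_combination I * h1 - D I * h

/-- `D (E F / F) = E (D F / F)`. -/
lemma der_log_comm {D E : Derivation ℚ M M} (hDE : ∀ a, D (E a) = E (D a)) {F I : M}
    (h : F * I = 1) : D (E F * I) = E (D F * I) := by
  rw [Derivation.leibniz, Derivation.leibniz, der_inv D h, der_inv E h, hDE]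
  simp only [smul_eq_mul]
  ring

/-- The Taylor shift `exp(ħ E)`. -/
noncomputable def Th (E : Derivation ℚ M M) (F : PowerSeries M) : PowerSeries M :=
  PowerSeries.mk fun n => ∑ ij ∈ Finset.HasAntidiagonal.antidiagonal n,
    ((ij.1.factorial : ℚ)⁻¹) • ((E : M → M)^[ij.1] (PowerSeries.coeff ij.2 F))

lemma it_add (E : Derivation ℚ M M) (i : ℕ) (a b : M) :
    (E : M → M)^[i] (a + b) = (E : M → M)^[i] a + (E : M → M)^[i] b := by
  induction i generalizing a b with
  | zero => simp
  | succ i ih => simp [Function.iterate_succ_apply, ih]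

lemma it_smul (E : Derivation ℚ M M) (i : ℕ) (c : ℚ) (b : M) :
    (E : M → M)^[i] (c • b) = c • (E : M → M)^[i] b := by
  induction i generalizing b with
  | zero => simp
  | succ i ih => simp [Function.iterate_succ_apply, ih]

lemma it_comm {D E : Derivation ℚ M M} (h : ∀ a, D (E a) = E (D a)) (i : ℕ) (b : M) :
    D ((E : M → M)^[i] b) = (E : M → M)^[i] (D b) := by
  induction i generalizing b with
  | zero => simp
  | succ i ih => simp [Function.iterate_succ_apply, ih, h]

lemma it_zero (E : Derivation ℚ M M) (i : ℕ) :
    (E : M → M)^[i] 0 = 0 := by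
  induction i with
  | zero => simp
  | succ i ih => simp [Function.iterate_succ_apply, ih]

lemma coeff_Th (E : Derivation ℚ M M) (F : PowerSeries M) (n : ℕ) :
    PowerSeries.coeff n (Th E F) = ∑ ij ∈ Finset.HasAntidiagonal.antidiagonal n,
      ((ij.1.factorial : ℚ)⁻¹) • ((E : M → M)^[ij.1] (PowerSeries.coeff ij.2 F)) := by
  simp [Th]

lemma Th_add (E : Derivation ℚ M M) (F G : PowerSeries M) : Th E (F + G) = Th E F + Th E G := by
  ext n
  simp [coeff_Th, it_add, Finset.sum_add_distrib]

lemma Th_smul (E : Derivation ℚ M M) (c : ℚ) (G : PowerSeries M) : Th E (c • G) = c • Th E G := by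
  ext n
  simp only [coeff_Th, it_smul, Finset.smul_sum, PowerSeries.coeff_smul]
  exact Finset.sum_congr rfl fun _ _ => smul_comm _ _ _

lemma Th_neg (E : Derivation ℚ M M) (G : PowerSeries M) : Th E (-G) = - Th E G := by
  have := Th_smul E (-1) G
  simpa using this

lemma Th_sub (E : Derivation ℚ M M) (F G : PowerSeries M) : Th E (F - G) = Th E F - Th E G := by
  rw [sub_eq_add_neg, Th_add, Th_neg, ← sub_eq_add_neg]

lemma Th_cD {D E : Derivation ℚ M M} (h : ∀ a, D (E a) = E (D a)) (F : PowerSeries M) :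
    cD D (Th E F) = Th E (cD D F) := by
  ext n
  simp [coeff_Th, it_comm h]

lemma constantCoeff_Th (E : Derivation ℚ M M) (F : PowerSeries M) :
    PowerSeries.constantCoeff (Th E F) = PowerSeries.constantCoeff F := by
  rw [← PowerSeries.coeff_zero_eq_constantCoeff_apply, coeff_Th]
  simp

/-- `∂_ħ Θ = Θ ∂_ħ + E Θ`. -/
lemma Th_dh (E : Derivation ℚ M M) (F : PowerSeries M) :
    PowerSeries.derivative M (Th E F) = Th E (PowerSeries.derivative M F) + cD E (Th E F) := by
  ext n
  rw [PowerSeries.coeff_derivative, map_add, coeff_cD, coeff_Th, coeff_Th, coeff_Th, map_sum]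
  have key : (∑ ij ∈ Finset.HasAntidiagonal.antidiagonal (n+1), ((ij.1.factorial : ℚ)⁻¹) •
      ((E : M → M)^[ij.1] (PowerSeries.coeff ij.2 F))) * ((n : M) + 1) =
      (∑ ij ∈ Finset.HasAntidiagonal.antidiagonal (n+1), ((ij.2 : ℚ) * (ij.1.factorial : ℚ)⁻¹) •
      ((E : M → M)^[ij.1] (PowerSeries.coeff ij.2 F))) +
      (∑ ij ∈ Finset.HasAntidiagonal.antidiagonal (n+1), ((ij.1 : ℚ) * (ij.1.factorial : ℚ)⁻¹) •
      ((E : M → M)^[ij.1] (PowerSeries.coeff ij.2 F))) := by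
    rw [Finset.sum_mul, ← Finset.sum_add_distrib]
    apply Finset.sum_congr rfl
    intro ij hij
    rw [Finset.HasAntidiagonal.mem_antidiagonal] at hij
    rw [← add_smul, ← add_mul]
    have : ((ij.2 : ℚ) + ij.1) = ((n + 1 : ℕ) : ℚ) := by rw [← hij]; push_cast; ring
    rw [this, mul_smul, Nat.cast_smul_eq_nsmul, nsmul_eq_mul]
    push_cast; ring
  rw [key]
  congr 1
  · rw [Finset.Nat.antidiagonal_succ']
    simp only [Finset.sum_cons, Finset.sum_map]
    simp only [Nat.cast_zero, zero_mul, zero_smul, zero_add, Function.Embedding.prodMap,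
      Function.Embedding.coeFn_mk, Prod.map, Function.Embedding.refl_apply, Nat.succ_eq_add_one]
    apply Finset.sum_congr rfl
    intro ij hij
    rw [PowerSeries.coeff_derivative]
    have : (PowerSeries.coeff (ij.2 + 1)) F * ((ij.2 : M) + 1)
      = ((ij.2 + 1 : ℕ) : ℚ) • (PowerSeries.coeff (ij.2 + 1)) F := by
      rw [Nat.cast_smul_eq_nsmul, nsmul_eq_mul]; push_cast; ring
    rw [this, it_smul, smul_smul, mul_comm]
  · rw [Finset.Nat.antidiagonal_succ]
    simp only [Finset.sum_cons, Finset.sum_map]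
    simp only [Nat.cast_zero, zero_mul, zero_smul, zero_add, Function.Embedding.prodMap,
      Function.Embedding.coeFn_mk, Prod.map, Function.Embedding.refl_apply, Nat.succ_eq_add_one]
    apply Finset.sum_congr rfl
    intro ij hij
    rw [Function.iterate_succ_apply', Derivation.map_smul]
    congr 1
    rw [Nat.factorial_succ]
    push_cast
    have := Nat.factorial_ne_zero ij.1
    field_simp

lemma Th_mul (E : Derivation ℚ M M) (F G : PowerSeries M) : Th E (F * G) = Th E F * Th E G := by
  have key : ∀ n : ℕ, ∀ F G : PowerSeries M,
      PowerSeries.coeff n (Th E (F * G)) = PowerSeries.coeff n (Th E F * Th E G) := by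
    intro n
    induction n with
    | zero =>
      intro F G
      simp [constantCoeff_Th]
    | succ n ih =>
      intro F G
      have h1 : PowerSeries.coeff n (PowerSeries.derivative M (Th E (F * G))) =
          PowerSeries.coeff n (PowerSeries.derivative M (Th E F * Th E G)) := by
        rw [Th_dh, Derivation.leibniz, Derivation.leibniz, Th_dh, Th_dh, Th_add, map_add, map_add,
          coeff_cD, ih, smul_eq_mul, smul_eq_mul, ih, ih, ← coeff_cD, Derivation.leibniz]
        simp only [smul_eq_mul, ← map_add]
        congr 1
        ring
      rw [PowerSeries.coeff_derivative, PowerSeries.coeff_derivative] at h1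
      have h2 : ∀ a : M, a * ((n : M) + 1) = ((n + 1 : ℕ) : ℚ) • a := by
        intro a
        rw [Nat.cast_smul_eq_nsmul, nsmul_eq_mul]; push_cast; ring
      rw [h2, h2] at h1
      have h3 := congrArg (fun a => ((n + 1 : ℕ) : ℚ)⁻¹ • a) h1
      have h4 : ((n + 1 : ℕ) : ℚ) ≠ 0 := by positivity
      beta_reduce at h3
      rw [smul_smul, smul_smul, inv_mul_cancel₀ h4, one_smul, one_smul] at h3
      exact h3
  ext n
  exact key n F G

lemma Th_X (E : Derivation ℚ M M) : Th E PowerSeries.X = PowerSeries.X := by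
  ext n
  rw [coeff_Th]
  cases n with
  | zero => simp
  | succ n =>
    rw [Finset.Nat.antidiagonal_succ]
    simp only [Finset.sum_cons, Finset.sum_map]
    have : ∀ x ∈ Finset.HasAntidiagonal.antidiagonal n, ((((x.1+1).factorial : ℚ)⁻¹) •
      ((E : M → M)^[x.1+1] (PowerSeries.coeff x.2 (PowerSeries.X : PowerSeries M)))) = 0 := by
      intro x hx
      rw [Function.iterate_succ_apply]
      have : E (PowerSeries.coeff x.2 (PowerSeries.X : PowerSeries M)) = 0 := by
        rw [PowerSeries.coeff_X]; split_ifs <;> simp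
      rw [this, it_zero, smul_zero]
    simp only [Function.Embedding.prodMap,
      Function.Embedding.coeFn_mk, Prod.map, Function.Embedding.refl_apply, Nat.succ_eq_add_one]
    rw [Finset.sum_eq_zero this]
    simp

lemma Th_C (E : Derivation ℚ M M) (a : M) : Th E (PowerSeries.C a) =
    PowerSeries.mk fun n => ((n.factorial : ℚ)⁻¹) • (E : M → M)^[n] a := by
  ext n
  rw [coeff_Th, PowerSeries.coeff_mk]
  rw [Finset.sum_eq_single (n, 0)]
  · simp
  · rintro ⟨i, j⟩ hij h
    have : j ≠ 0 := by
      rintro rfl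
      rw [Finset.HasAntidiagonal.mem_antidiagonal] at hij
      apply h; simp at hij; simp [hij]
    simp [PowerSeries.coeff_C, this, it_zero]
  · intro h; simp at h

lemma Th_C_const (E : Derivation ℚ M M) (a : M) (ha : E a = 0) :
    Th E (PowerSeries.C a) = PowerSeries.C a := by
  rw [Th_C]
  ext n
  rw [PowerSeries.coeff_mk, PowerSeries.coeff_C]
  cases n with
  | zero => simp
  | succ n => rw [Function.iterate_succ_apply, ha, it_zero]; simp

lemma Th_C_A (E : Derivation ℚ M M) (a : M) (ha : E a = 1) :
    Th E (PowerSeries.C a) = PowerSeries.C a + PowerSeries.X := by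
  rw [Th_C]
  ext n
  rw [PowerSeries.coeff_mk, map_add, PowerSeries.coeff_C, PowerSeries.coeff_X]
  rcases n with _ | _ | n
  · simp
  · simp [ha]
  · rw [Function.iterate_succ_apply, Function.iterate_succ_apply, ha]; simp [it_zero]

end abstractPart
end Lag

namespace Lag

section ladderPart
set_option linter.unusedSectionVars false
variable {M : Type*} [CommRing M] [Algebra ℚ M]

lemma Th_one (E : Derivation ℚ M M) : Th E 1 = 1 := by
  have := Th_C_const E (1 : M) (by simp)
  simpa using this

/-- The Taylor shift as a ring homomorphism. -/
noncomputable def ThR (E : Derivation ℚ M M) : PowerSeries M →+* PowerSeries M where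
  toFun := Th E
  map_one' := Th_one E
  map_mul' := Th_mul E
  map_zero' := by ext n; simp [coeff_Th]
  map_add' := Th_add E

lemma ThR_apply (E : Derivation ℚ M M) (F : PowerSeries M) : ThR E F = Th E F := rfl

lemma exists_inv (F : PowerSeries M) (a : M) (h : PowerSeries.constantCoeff F * a = 1) :
    ∃ I : PowerSeries M, F * I = 1 := by
  refine ⟨PowerSeries.invOfUnit F ⟨_, a, h, by rw [mul_comm]; exact h⟩, ?_⟩
  exact PowerSeries.mul_invOfUnit F _ rfl

lemma ric_unique_aux (D : Derivation ℚ M M) (d u : PowerSeries M) (c : M)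
    (hc : PowerSeries.constantCoeff u * c = 1)
    (h : 2 * PowerSeries.X * cD D d + d * u = 0) : d = 0 := by
  obtain ⟨I, hI⟩ := exists_inv u c hc
  have h2 : d = PowerSeries.X * (-2 * cD D d * I) := by
    linear_combination I * h - d * hI
  have h3 : ∀ n, PowerSeries.coeff n d = 0 := by
    intro n
    induction n using Nat.strong_induction_on with
    | _ n ih =>
      rw [h2]
      cases n with
      | zero => simp
      | succ n =>
        rw [PowerSeries.coeff_succ_X_mul, PowerSeries.coeff_mul]
        apply Finset.sum_eq_zero
        rintro ⟨i, j⟩ hij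
        have hij' : i + j = n := by simpa using hij
        have : PowerSeries.coeff i (-2 * cD D d) = 0 := by
          have h4 : (-2 * cD D d) = (-2 : ℚ) • cD D d := by
            rw [neg_smul, ofNat_smul_eq_nsmul, nsmul_eq_mul]; simp
          rw [h4, PowerSeries.coeff_smul, coeff_cD, ih i (by omega)]
          simp
        rw [this, zero_mul]
  ext n
  simpa using h3 n

lemma ric_unique (D : Derivation ℚ M M) (r r' U : PowerSeries M) (c : M)
    (hr : 2 * PowerSeries.X * cD D r + r ^ 2 = U)
    (hr' : 2 * PowerSeries.X * cD D r' + r' ^ 2 = U)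
    (h0 : PowerSeries.constantCoeff r = PowerSeries.constantCoeff r')
    (hc : PowerSeries.constantCoeff r * c = 1) : r = r' := by
  have h : r - r' = 0 := by
    apply ric_unique_aux D (r - r') (r + r') ((1 / 2 : ℚ) • c)
    · rw [map_add, ← h0, ← two_mul, mul_assoc, mul_smul_comm, hc]
      have h4 : (2 : M) = (2 : ℚ) • 1 := by
        rw [ofNat_smul_eq_nsmul, nsmul_eq_mul]; simp
      rw [h4, smul_mul_smul_comm]; norm_num
    · rw [map_sub]
      linear_combination hr - hr'
  exact sub_eq_zero.mp h

/-- Data for the ladder argument. -/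
structure Ladder (M : Type*) [CommRing M] [Algebra ℚ M] where
  D : Derivation ℚ M M
  E : Derivation ℚ M M
  hDE : ∀ a, D (E a) = E (D a)
  y : M
  A : M
  ρ : M
  σ : M
  Ai : M
  τ : M
  hDy : D y = - y ^ 2
  hEy : E y = 0
  hDA : D A = 0
  hEA : E A = 1
  hρ : ρ ^ 2 = 1 - 2 * (A + 1) * y + (A - 1) ^ 2 * y ^ 2
  hσ : ρ * σ = 1
  hAi : A * Ai = 1
  hτ : (ρ + 1 + (A - 1) * y) * τ = 1
  V : PowerSeries M
  hV0 : PowerSeries.constantCoeff V = ρ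
  ric : 2 * PowerSeries.X * cD D V + V ^ 2 =
    PowerSeries.C (ρ ^ 2) - PowerSeries.X ^ 2 * PowerSeries.C y ^ 2

namespace Ladder
variable (L : Ladder M)

/-- the conjugate solution -/
noncomputable def V' : PowerSeries M := - PowerSeries.evalNegHom L.V

lemma evalNeg_cD (D : Derivation ℚ M M) (F : PowerSeries M) :
    cD D (PowerSeries.evalNegHom F) = PowerSeries.evalNegHom (cD D F) := by
  ext n
  simp only [PowerSeries.evalNegHom, coeff_cD, PowerSeries.coeff_rescale]
  rcases neg_one_pow_eq_or M n with h | h <;> rw [h] <;> simp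

lemma evalNeg_C (a : M) :
    PowerSeries.evalNegHom (PowerSeries.C a) = PowerSeries.C a := by
  ext n
  simp only [PowerSeries.evalNegHom, PowerSeries.coeff_rescale, PowerSeries.coeff_C]
  split_ifs with h <;> simp [h]

lemma evalNeg_X :
    PowerSeries.evalNegHom (PowerSeries.X : PowerSeries M) = - PowerSeries.X := by
  simp

lemma ric' : 2 * PowerSeries.X * cD L.D L.V' + L.V' ^ 2 =
    PowerSeries.C (L.ρ ^ 2) - PowerSeries.X ^ 2 * PowerSeries.C L.y ^ 2 := by
  have h := congrArg PowerSeries.evalNegHom L.ric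
  simp only [map_add, map_sub, map_mul, map_pow, evalNeg_C, evalNeg_X, ← evalNeg_cD] at h
  have h2 : (PowerSeries.evalNegHom (2 : PowerSeries M)) = 2 := map_ofNat _ 2
  rw [h2] at h
  rw [V', map_neg]
  simp only [map_pow]
  linear_combination h

lemma hV'0 : PowerSeries.constantCoeff L.V' = - L.ρ := by
  rw [V', map_neg, ← L.hV0, ← PowerSeries.coeff_zero_eq_constantCoeff_apply,
   ← PowerSeries.coeff_zero_eq_constantCoeff_apply]
  simp only [PowerSeries.evalNegHom, PowerSeries.coeff_rescale]
  simp

noncomputable def g : PowerSeries M :=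
  1 + (PowerSeries.C L.A - 1 + PowerSeries.X) * PowerSeries.C L.y
noncomputable def g' : PowerSeries M :=
  1 + (PowerSeries.C L.A - 1) * PowerSeries.C L.y
noncomputable def κ : PowerSeries M := 2 * PowerSeries.C L.A + PowerSeries.X
noncomputable def G : PowerSeries M := L.g - L.V
noncomputable def G' : PowerSeries M := L.g - L.V'
noncomputable def O : PowerSeries M := L.V - L.V'
noncomputable def S : PowerSeries M := L.V + L.V'

lemma cρ : PowerSeries.C (L.ρ ^ 2) = 1 - 2 * (PowerSeries.C L.A + 1) * PowerSeries.C L.y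
    + (PowerSeries.C L.A - 1) ^ 2 * PowerSeries.C L.y ^ 2 := by
  rw [L.hρ]
  simp [map_ofNat]

lemma two_der {N : Type*} [CommRing N] [Algebra ℚ N] (D : Derivation ℚ N N) : D 2 = 0 := by
  have := D.map_natCast 2
  simpa using this

lemma Dg : cD L.D L.g = - (PowerSeries.C L.A - 1 + PowerSeries.X) * PowerSeries.C L.y ^ 2 := by
  simp [g, cD_C, cD_X, L.hDA, L.hDy]
  ring

lemma Dg' : cD L.D L.g' = - (PowerSeries.C L.A - 1) * PowerSeries.C L.y ^ 2 := by
  simp [g', cD_C, L.hDA, L.hDy]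
  ring

lemma Dκ : cD L.D L.κ = 0 := by
  simp [κ, cD_C, cD_X, L.hDA, two_der]

lemma Eκ : cD L.E L.κ = 2 := by
  simp [κ, cD_C, cD_X, L.hEA, two_der]

lemma Dy : cD L.D (PowerSeries.C L.y) = - PowerSeries.C L.y ^ 2 := by
  simp [cD_C, L.hDy]
lemma Ey : cD L.E (PowerSeries.C L.y) = 0 := by
  simp [cD_C, L.hEy]

lemma Θy : ThR L.E (PowerSeries.C L.y) = PowerSeries.C L.y := Th_C_const _ _ L.hEy
lemma ΘA : ThR L.E (PowerSeries.C L.A) = PowerSeries.C L.A + PowerSeries.X := Th_C_A _ _ L.hEA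
lemma ΘX : ThR L.E PowerSeries.X = PowerSeries.X := Th_X _

lemma ΘU : ThR L.E (PowerSeries.C (L.ρ ^ 2) - PowerSeries.X ^ 2 * PowerSeries.C L.y ^ 2) =
    1 - 2 * (PowerSeries.C L.A + PowerSeries.X + 1) * PowerSeries.C L.y
    + (PowerSeries.C L.A + PowerSeries.X - 1) ^ 2 * PowerSeries.C L.y ^ 2
    - PowerSeries.X ^ 2 * PowerSeries.C L.y ^ 2 := by
  rw [L.cρ]
  simp only [map_sub, map_add, map_mul, map_pow, map_one, map_ofNat, L.Θy, L.ΘA, L.ΘX]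

lemma Θric (F : PowerSeries M) (h : 2 * PowerSeries.X * cD L.D F + F ^ 2 =
    PowerSeries.C (L.ρ ^ 2) - PowerSeries.X ^ 2 * PowerSeries.C L.y ^ 2) :
    2 * PowerSeries.X * cD L.D (ThR L.E F) + (ThR L.E F) ^ 2 =
    1 - 2 * (PowerSeries.C L.A + PowerSeries.X + 1) * PowerSeries.C L.y
    + (PowerSeries.C L.A + PowerSeries.X - 1) ^ 2 * PowerSeries.C L.y ^ 2
    - PowerSeries.X ^ 2 * PowerSeries.C L.y ^ 2 := by
  rw [← L.ΘU, ← h, map_add, map_mul, map_mul, map_pow, L.ΘX, map_ofNat]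
  rw [ThR_apply, ThR_apply, Th_cD L.hDE]

lemma G'_inv : ∃ I, L.G' * I = 1 := by
  apply exists_inv _ L.τ
  rw [← L.hτ]
  simp [G', g, L.hV'0]
  ring

lemma u_inv : ∃ I, (ThR L.E L.V + L.g') * I = 1 := by
  apply exists_inv _ L.τ
  rw [← L.hτ]
  simp [ThR_apply, constantCoeff_Th, g', L.hV0]
  ring

lemma ladder' : (ThR L.E L.V' + L.g') * L.G' = 2 * L.κ * PowerSeries.C L.y := by
  obtain ⟨I, hI⟩ := L.G'_inv
  have hDI := der_inv (cD L.D) hI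
  have hDG : cD L.D L.G' = cD L.D L.g - cD L.D L.V' := by rw [G', map_sub]
  have hDg := L.Dg
  have hric := L.ric'
  have hcρ := L.cρ
  have hΘ := L.Θric _ L.ric'
  have hG : L.G' = L.g - L.V' := rfl
  have hDr : cD L.D (2 * L.κ * PowerSeries.C L.y * I - L.g') =
      - 2 * L.κ * PowerSeries.C L.y ^ 2 * I + 2 * L.κ * PowerSeries.C L.y * cD L.D I
      + (PowerSeries.C L.A - 1) * PowerSeries.C L.y ^ 2 := by
    simp only [map_sub, Derivation.leibniz, L.Dy, L.Dκ, L.Dg', smul_eq_mul, two_der]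
    ring
  have hric2 : 2 * PowerSeries.X * cD L.D L.G' = 2 * L.κ * PowerSeries.C L.y - L.G' * (2 * L.g - L.G') := by
    rw [hDG, hDg, hG, κ]
    rw [g]
    linear_combination -hric - hcρ
  have key : 2 * L.κ * PowerSeries.C L.y * I - L.g' = ThR L.E L.V' := by
    apply ric_unique L.D _ _ _ (-L.σ) _ hΘ
    · rw [ThR_apply, constantCoeff_Th, L.hV'0]
      have h1 : PowerSeries.constantCoeff (L.G' * I) = 1 := by rw [hI]; simp
      have h2 : PowerSeries.constantCoeff L.G' = 1 + (L.A - 1) * L.y + L.ρ := by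
        simp [G', g, L.hV'0]
      rw [map_mul, h2] at h1
      simp only [map_sub, map_mul, g', κ, map_add, PowerSeries.constantCoeff_C, map_one,
        PowerSeries.constantCoeff_X, map_ofNat]
      linear_combination (1 + (L.A - 1) * L.y - L.ρ) * h1 - L.hρ * (- (PowerSeries.constantCoeff I))
    · have h1 : PowerSeries.constantCoeff (L.G' * I) = 1 := by rw [hI]; simp
      have h2 : PowerSeries.constantCoeff L.G' = 1 + (L.A - 1) * L.y + L.ρ := by
        simp [G', g, L.hV'0]
      rw [map_mul, h2] at h1
      simp only [map_sub, map_mul, g', κ, map_add, PowerSeries.constantCoeff_C, map_one,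
        PowerSeries.constantCoeff_X, map_ofNat]
      linear_combination -L.σ * ((1 + (L.A - 1) * L.y - L.ρ) * h1 - L.hρ * (- (PowerSeries.constantCoeff I))) + L.hσ
    · rw [hDr, hDI]
      have e : 2 * PowerSeries.X * (-2 * L.κ * PowerSeries.C L.y ^ 2 * I + 2 * L.κ * PowerSeries.C L.y * -(cD L.D L.G' * I * I) +
          (PowerSeries.C L.A - 1) * PowerSeries.C L.y ^ 2) =
        -4 * PowerSeries.X * L.κ * PowerSeries.C L.y ^ 2 * I - 2 * L.κ * PowerSeries.C L.y * I * I *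
          (2 * L.κ * PowerSeries.C L.y - L.G' * (2 * L.g - L.G')) + 2 * PowerSeries.X *
          (PowerSeries.C L.A - 1) * PowerSeries.C L.y ^ 2 := by
        rw [← hric2]; ring
      rw [e]
      have hg : L.g = L.g' + PowerSeries.X * PowerSeries.C L.y := by rw [g, g']; ring
      rw [hg]
      have e2 : 2 * L.κ * PowerSeries.C L.y * I * I * (L.G' * (2 * (L.g' + PowerSeries.X * PowerSeries.C L.y) - L.G'))
          = 2 * L.κ * PowerSeries.C L.y * (2 * (L.g' + PowerSeries.X * PowerSeries.C L.y)) * I - 2 * L.κ * PowerSeries.C L.y := by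
        linear_combination (2 * L.κ * PowerSeries.C L.y * (2 * (L.g' + PowerSeries.X * PowerSeries.C L.y)) * I - 2 * L.κ * PowerSeries.C L.y * (L.G' * I + 1)) * hI
      rw [mul_sub, e2, g', κ]
      ring
  rw [← key]
  linear_combination 2 * L.κ * PowerSeries.C L.y * hI

lemma ladder : (ThR L.E L.V + L.g') * L.G = 2 * L.κ * PowerSeries.C L.y := by
  obtain ⟨I, hI⟩ := L.u_inv
  have hDI := der_inv (cD L.D) hI
  have hric := L.ric
  have hcρ := L.cρ
  have hΘ := L.Θric _ L.ric
  have hG : L.G = L.g - L.V := rfl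
  have hDr : cD L.D (L.g - 2 * L.κ * PowerSeries.C L.y * I) =
      - (PowerSeries.C L.A - 1 + PowerSeries.X) * PowerSeries.C L.y ^ 2
       + 2 * L.κ * PowerSeries.C L.y ^ 2 * I - 2 * L.κ * PowerSeries.C L.y * cD L.D I := by
    simp only [map_sub, Derivation.leibniz, L.Dy, L.Dκ, L.Dg, smul_eq_mul, two_der]
    ring
  set u := ThR L.E L.V + L.g' with hu
  have hDu : 2 * PowerSeries.X * cD L.D u = 2 * PowerSeries.X * cD L.D (ThR L.E L.V) + 2 * PowerSeries.X * cD L.D L.g' := by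
    rw [hu, map_add]; ring
  have hΘV : ThR L.E L.V = u - L.g' := by rw [hu]; ring
  rw [hΘV] at hΘ
  have hric2 : 2 * PowerSeries.X * cD L.D u = 2 * u * L.g' - u ^ 2 - 2 * L.κ * PowerSeries.C L.y := by
    rw [hDu, hΘV, L.Dg']
    rw [κ]
    have hg' : L.g' = 1 + (PowerSeries.C L.A - 1) * PowerSeries.C L.y := rfl
    linear_combination hΘ + (- L.g' - 1 - (PowerSeries.C L.A - 1) * PowerSeries.C L.y) * hg'
  have hu0 : PowerSeries.constantCoeff u = L.ρ + 1 + (L.A - 1) * L.y := by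
    rw [hu]
    simp [ThR_apply, constantCoeff_Th, g', L.hV0]
    ring
  have h1 : PowerSeries.constantCoeff (u * I) = 1 := by rw [hI]; simp
  rw [map_mul, hu0] at h1
  have key : L.g - 2 * L.κ * PowerSeries.C L.y * I = L.V := by
    apply ric_unique L.D _ _ _ (L.σ) _ hric
    · rw [L.hV0]
      simp only [map_sub, map_mul, g, κ, map_add, PowerSeries.constantCoeff_C, map_one,
        PowerSeries.constantCoeff_X, map_ofNat]
      linear_combination -(1 + (L.A - 1) * L.y - L.ρ) * h1 + L.hρ * (- (PowerSeries.constantCoeff I))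
    · simp only [map_sub, map_mul, g, κ, map_add, PowerSeries.constantCoeff_C, map_one,
        PowerSeries.constantCoeff_X, map_ofNat]
      linear_combination L.σ * (-(1 + (L.A - 1) * L.y - L.ρ) * h1 + L.hρ * (- (PowerSeries.constantCoeff I))) + L.hσ
    · rw [hDr, hDI]
      have e : 2 * PowerSeries.X * (- (PowerSeries.C L.A - 1 + PowerSeries.X) * PowerSeries.C L.y ^ 2
       + 2 * L.κ * PowerSeries.C L.y ^ 2 * I - 2 * L.κ * PowerSeries.C L.y * -(cD L.D u * I * I)) =
        - 2 * PowerSeries.X * (PowerSeries.C L.A - 1 + PowerSeries.X) * PowerSeries.C L.y ^ 2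
       + 4 * PowerSeries.X * L.κ * PowerSeries.C L.y ^ 2 * I + 2 * L.κ * PowerSeries.C L.y * I * I *
         (2 * u * L.g' - u ^ 2 - 2 * L.κ * PowerSeries.C L.y) := by
        rw [← hric2]; ring
      rw [e]
      have hg : L.g = L.g' + PowerSeries.X * PowerSeries.C L.y := by rw [g, g']; ring
      have e2 : 2 * L.κ * PowerSeries.C L.y * I * I *
         (2 * u * L.g' - u ^ 2 - 2 * L.κ * PowerSeries.C L.y) =
         4 * L.κ * PowerSeries.C L.y * I * L.g' - 2 * L.κ * PowerSeries.C L.y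
         - 4 * L.κ ^ 2 * PowerSeries.C L.y ^ 2 * I ^ 2 := by
        linear_combination (4 * L.κ * PowerSeries.C L.y * I * L.g' - 2 * L.κ * PowerSeries.C L.y * (u * I + 1)) * hI
      rw [e2, hcρ, hg, g', κ]
      ring
  have : L.G = 2 * L.κ * PowerSeries.C L.y * I := by rw [hG]; linear_combination key
  rw [this]
  linear_combination 2 * L.κ * PowerSeries.C L.y * hI


lemma ladder_O : ThR L.E L.O * (L.G * L.G') = 2 * L.κ * PowerSeries.C L.y * L.O := by
  have h1 := L.ladder
  have h2 := L.ladder'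
  have h3 : L.G' - L.G = L.O := by rw [G, G', O]; ring
  rw [← h3]
  have h4 : ThR L.E (L.G' - L.G) = ThR L.E L.V - ThR L.E L.V' := by
    rw [h3, O, map_sub]
  rw [h4]
  linear_combination L.G' * h1 - L.G * h2

lemma DlogG' (I : PowerSeries M) (hI : L.G' * I = 1) :
    2 * PowerSeries.X * (cD L.D L.G' * I) =
      ThR L.E L.V' - L.V' - PowerSeries.X * PowerSeries.C L.y := by
  have hDG : cD L.D L.G' = cD L.D L.g - cD L.D L.V' := by rw [G', map_sub]
  have hDg := L.Dg
  have hric := L.ric'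
  have hcρ := L.cρ
  have hG : L.G' = L.g - L.V' := rfl
  have hric2 : 2 * PowerSeries.X * cD L.D L.G' = 2 * L.κ * PowerSeries.C L.y - L.G' * (2 * L.g - L.G') := by
    rw [hDG, hDg, hG, κ]
    rw [g]
    linear_combination -hric - hcρ
  have hl := L.ladder'
  have hg : L.g = L.g' + PowerSeries.X * PowerSeries.C L.y := by rw [g, g']; ring
  have h5 : L.G' * (2 * L.g - L.G') * I = L.g + L.V' := by
    rw [hG] at hI ⊢
    linear_combination (2 * L.g - (L.g - L.V')) * hI
  have h6 : 2 * L.κ * PowerSeries.C L.y * I = ThR L.E L.V' + L.g' := by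
    rw [← hl]
    linear_combination (ThR L.E L.V' + L.g') * hI
  linear_combination I * hric2 - h5 + h6 - hg

lemma DO : 2 * PowerSeries.X * cD L.D L.O = - (L.O * L.S) := by
  have h1 := L.ric
  have h2 := L.ric'
  rw [O, S, map_sub]
  linear_combination h1 - h2

/-- the function `Ψ` (depending on chosen inverses) -/
noncomputable def Ψ (I J k : PowerSeries M) : PowerSeries M :=
  2 * k - (2 * (cD L.E L.G' * I) + ThR L.E (cD L.E L.O * J) - cD L.E L.O * J)

lemma X_const (E : Derivation ℚ M M) (F : PowerSeries M) :
    cD E (PowerSeries.X * F) = PowerSeries.X * cD E F := by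
  simp [cD_X]

lemma two_const {N : Type*} [CommRing N] [Algebra ℚ N] (E : Derivation ℚ N N) (F : N) :
    E (2 * F) = 2 * E F := by
  rw [Derivation.leibniz, two_der]; simp

lemma DΨ (I J k : PowerSeries M) (hI : L.G' * I = 1) (hJ : L.O * J = 1) (hk : L.κ * k = 1) :
    4 * PowerSeries.X * cD L.D (L.Ψ I J k) = 2 * (ThR L.E (cD L.E L.O) - cD L.E L.O) := by
  have hcomm : ∀ a, cD L.D (cD L.E a) = cD L.E (cD L.D a) := cD_comm L.hDE
  have h1 : cD L.D k = 0 := by rw [der_inv _ hk, L.Dκ]; simp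
  have h2 : 2 * PowerSeries.X * cD L.D (cD L.E L.G' * I) =
      ThR L.E (cD L.E L.V') - cD L.E L.V' := by
    rw [der_log_comm hcomm hI]
    have := congrArg (cD L.E) (L.DlogG' I hI)
    rw [mul_assoc, two_const, X_const, map_sub, map_sub, X_const, L.Ey] at this
    rw [mul_assoc, this, ThR_apply, ThR_apply, Th_cD (D := L.E) (E := L.E) (fun _ => rfl)]
    ring
  have h3 : 2 * PowerSeries.X * cD L.D (cD L.E L.O * J) = - cD L.E L.S := by
    rw [der_log_comm hcomm hJ]
    have : 2 * PowerSeries.X * (cD L.D L.O * J) = - L.S := by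
      linear_combination J * L.DO - L.S * hJ
    have := congrArg (cD L.E) this
    rw [mul_assoc, two_const, X_const, map_neg] at this
    rw [mul_assoc, this]
  have h4 : 2 * PowerSeries.X * cD L.D (ThR L.E (cD L.E L.O * J)) = - ThR L.E (cD L.E L.S) := by
    rw [ThR_apply, Th_cD L.hDE, ← ThR_apply, ← map_neg, ← h3,
      map_mul (ThR L.E) (2 * PowerSeries.X), map_mul (ThR L.E) 2, L.ΘX, map_ofNat]
  have hV : L.V' + L.V' = L.S - L.O := by rw [S, O]; ring
  have h5 : ThR L.E (cD L.E L.V') + ThR L.E (cD L.E L.V') =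
      ThR L.E (cD L.E L.S) - ThR L.E (cD L.E L.O) := by
    rw [← map_add, ← map_add, hV, map_sub, map_sub]
  have h6 : cD L.E L.V' + cD L.E L.V' = cD L.E L.S - cD L.E L.O := by
    rw [← map_add, hV, map_sub]
  rw [Ψ, map_sub, map_sub, map_add, two_const, two_const, h1]
  linear_combination -4 * h2 + 2 * h3 - 2 * h4 - 2 * h5 + 2 * h6

lemma yΨ (I J k : PowerSeries M) (hI : L.G' * I = 1) (hJ : L.O * J = 1) (hk : L.κ * k = 1) :
    4 * L.κ * PowerSeries.C L.y * L.O * L.Ψ I J k =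
      ThR L.E L.O * (L.O * cD L.E (2 * L.g - L.S) - (2 * L.g - L.S) * cD L.E L.O) := by
  have hX := L.ladder_O
  have hJ' : ThR L.E L.O * ThR L.E J = 1 := by rw [← map_mul, hJ, map_one]
  have hE := congrArg (cD L.E) hX
  rw [Derivation.leibniz, Derivation.leibniz, mul_assoc 2, mul_assoc 2, two_const,
    Derivation.leibniz, Derivation.leibniz, L.Ey, L.Eκ] at hE
  have hc : cD L.E (ThR L.E L.O) = ThR L.E (cD L.E L.O) := by
    rw [ThR_apply, ThR_apply, Th_cD (D := L.E) (E := L.E) (fun _ => rfl)]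
  rw [hc] at hE
  simp only [smul_eq_mul] at hE
  have hG : 2 * L.G = (2 * L.g - L.S) - L.O := by rw [G, S, O]; ring
  have hG' : 2 * L.G' = (2 * L.g - L.S) + L.O := by rw [G', S, O]; ring
  have hEG : 2 * cD L.E L.G = cD L.E (2 * L.g - L.S) - cD L.E L.O := by
    rw [← two_const, hG, map_sub]
  have hEG' : 2 * cD L.E L.G' = cD L.E (2 * L.g - L.S) + cD L.E L.O := by
    rw [← two_const, hG', map_add]
  have main : 4 * L.κ * PowerSeries.C L.y * L.O * L.Ψ I J k =
      2 * ThR L.E L.O * (cD L.E L.G * L.G' - L.G * cD L.E L.G') := by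
    rw [Ψ, map_mul]
    linear_combination 8 * PowerSeries.C L.y * L.O * hk
      + 4 * (L.κ * PowerSeries.C L.y) * cD L.E L.O * hJ
      - 4 * ThR L.E L.O * L.G * cD L.E L.G' * hI
      - 2 * L.G * L.G' * ThR L.E (cD L.E L.O) * hJ'
      + 4 * cD L.E L.G' * I * hX + 2 * ThR L.E (cD L.E L.O) * ThR L.E J * hX
      - 2 * hE
  have h7 : 4 * (cD L.E L.G * L.G' - L.G * cD L.E L.G') =
      2 * (L.O * cD L.E (2 * L.g - L.S) - (2 * L.g - L.S) * cD L.E L.O) := by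
    linear_combination 2 * L.G' * hEG - 2 * L.G * hEG' + (cD L.E (2 * L.g - L.S) - cD L.E L.O) * hG'
     - (cD L.E (2 * L.g - L.S) + cD L.E L.O) * hG
  have h8 : (2 : PowerSeries M) * (4 * L.κ * PowerSeries.C L.y * L.O * L.Ψ I J k) =
      2 * (ThR L.E L.O * (L.O * cD L.E (2 * L.g - L.S) - (2 * L.g - L.S) * cD L.E L.O)) := by
    rw [main]; linear_combination ThR L.E L.O * h7
  have h9 : ∀ F : PowerSeries M, (1 / 2 : ℚ) • (2 * F) = F := by
    intro F
    have : 2 * F = (2 : ℚ) • F := by rw [ofNat_smul_eq_nsmul, nsmul_eq_mul]; simp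
    rw [this, smul_smul]; norm_num
  rw [← h9 (4 * L.κ * PowerSeries.C L.y * L.O * L.Ψ I J k), h8, h9]

end Ladder
end ladderPart
end Lag

namespace Lag

section evenPart
set_option linter.unusedSectionVars false
variable {M : Type*} [CommRing M] [Algebra ℚ M]

/-- All coefficients lie in a subalgebra. -/
def evS (Be : Subalgebra ℚ M) (F : PowerSeries M) : Prop := ∀ n, PowerSeries.coeff n F ∈ Be

lemma evS.mul {Be : Subalgebra ℚ M} {F G : PowerSeries M} (hF : evS Be F) (hG : evS Be G) :
    evS Be (F * G) := by
  intro n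
  rw [PowerSeries.coeff_mul]
  exact Subalgebra.sum_mem _ fun i _ => Subalgebra.mul_mem _ (hF _) (hG _)

lemma evS.add {Be : Subalgebra ℚ M} {F G : PowerSeries M} (hF : evS Be F) (hG : evS Be G) :
    evS Be (F + G) := by
  intro n
  rw [map_add]
  exact Subalgebra.add_mem _ (hF _) (hG _)

lemma evS.sub {Be : Subalgebra ℚ M} {F G : PowerSeries M} (hF : evS Be F) (hG : evS Be G) :
    evS Be (F - G) := by
  intro n
  rw [map_sub]
  exact Subalgebra.sub_mem _ (hF _) (hG _)

lemma evS_C {Be : Subalgebra ℚ M} {a : M} (h : a ∈ Be) : evS Be (PowerSeries.C a) := by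
  intro n
  rw [PowerSeries.coeff_C]
  split_ifs
  · exact h
  · exact Subalgebra.zero_mem _

lemma evS_X {Be : Subalgebra ℚ M} : evS Be (PowerSeries.X) := by
  intro n
  rw [PowerSeries.coeff_X]
  split_ifs
  · exact Subalgebra.one_mem _
  · exact Subalgebra.zero_mem _

lemma evS_one {Be : Subalgebra ℚ M} : evS Be 1 := by
  have := evS_C (Be := Be) (Subalgebra.one_mem Be)
  simpa using this

lemma evS_two {Be : Subalgebra ℚ M} : evS Be 2 := by
  have := (evS_one (Be := Be)).add evS_one
  norm_num at this
  exact this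

lemma evS_div {Be : Subalgebra ℚ M} {a x : PowerSeries M} {b : M} (ha : evS Be a)
    (hax : evS Be (a * x)) (hb : b ∈ Be) (h : PowerSeries.constantCoeff a * b = 1) :
    evS Be x := by
  intro n
  induction n using Nat.strong_induction_on with
  | _ n ih =>
    have h1 := hax n
    rw [PowerSeries.coeff_mul] at h1
    have hmem : ((0, n) : ℕ × ℕ) ∈ Finset.HasAntidiagonal.antidiagonal n := by simp
    rw [← Finset.add_sum_erase _ _ hmem] at h1
    have h2 : ∑ p ∈ (Finset.HasAntidiagonal.antidiagonal n).erase (0, n),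
        PowerSeries.coeff p.1 a * PowerSeries.coeff p.2 x ∈ Be := by
      apply Subalgebra.sum_mem
      rintro ⟨i, j⟩ hij
      simp only [Finset.mem_erase, ne_eq, Prod.mk.injEq, not_and,
        Finset.HasAntidiagonal.mem_antidiagonal] at hij
      refine Subalgebra.mul_mem _ (ha _) (ih _ ?_)
      have : i ≠ 0 := by
        intro h0
        have := hij.1 h0
        omega
      simp only
      omega
    have h3 := Subalgebra.mul_mem _ hb (Subalgebra.sub_mem _ h1 h2)
    convert h3 using 1
    simp only [PowerSeries.coeff_zero_eq_constantCoeff]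
    linear_combination (-PowerSeries.coeff n x) * h

namespace Ladder
variable (L : Ladder M)

/-- The parity data. -/
structure Par (Be : Subalgebra ℚ M) : Prop where
  y : L.y ∈ Be
  A : L.A ∈ Be
  Ai : L.Ai ∈ Be
  ρ2 : L.ρ ^ 2 ∈ Be
  σ2 : L.σ ^ 2 ∈ Be
  E : ∀ x ∈ Be, L.E x ∈ Be
  const : ∀ c, L.D c = 0 → L.ρ * L.y * c ∈ Be → c = 0
  Ve : ∀ n, Even n → L.ρ * PowerSeries.coeff n L.V ∈ Be
  Vo : ∀ n, Odd n → PowerSeries.coeff n L.V ∈ Be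

variable {L} {Be : Subalgebra ℚ M}

lemma Par.oddE (hP : L.Par Be) {x : M} (hx : L.ρ * x ∈ Be) : L.ρ * L.E x ∈ Be := by
  have h1 := hP.E _ hx
  have h2 := hP.E _ hP.ρ2
  have h3 : L.ρ * L.E x = L.E (L.ρ * x) - (1 / 2 : ℚ) • (L.E (L.ρ ^ 2) * L.σ ^ 2 * (L.ρ * x)) := by
    have e : L.E (L.ρ ^ 2) * L.σ ^ 2 * (L.ρ * x) = (2 : ℚ) • (x * L.E L.ρ) := by
      rw [ofNat_smul_eq_nsmul, nsmul_eq_mul, Derivation.leibniz_pow]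
      simp only [smul_eq_mul, nsmul_eq_mul]
      have := L.hσ
      push_cast
      have h4 : L.ρ ^ 2 * L.σ ^ 2 = 1 := by rw [← mul_pow, this, one_pow]
      linear_combination (2 * L.E L.ρ * x) * h4
    rw [e, smul_smul, Derivation.leibniz]
    norm_num
  rw [h3]
  exact Subalgebra.sub_mem _ h1 (Subalgebra.smul_mem _
    (Subalgebra.mul_mem _ (Subalgebra.mul_mem _ h2 hP.σ2) hx) _)

lemma Par.oddEit (hP : L.Par Be) {x : M} (hx : L.ρ * x ∈ Be) (n : ℕ) : L.ρ * (L.E : M → M)^[n] x ∈ Be := by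
  induction n with
  | zero => exact hx
  | succ n ih => rw [Function.iterate_succ_apply']; exact hP.oddE ih

lemma Par.oddTh (hP : L.Par Be) {F : PowerSeries M} (hF : evS Be (PowerSeries.C L.ρ * F)) :
    evS Be (PowerSeries.C L.ρ * ThR L.E F) := by
  intro n
  rw [PowerSeries.coeff_C_mul, ThR_apply, coeff_Th, Finset.mul_sum]
  apply Subalgebra.sum_mem
  intro i _
  rw [mul_smul_comm]
  apply Subalgebra.smul_mem
  apply hP.oddEit
  have := hF i.2
  rwa [PowerSeries.coeff_C_mul] at this

lemma Par.oddcE (hP : L.Par Be) {F : PowerSeries M} (hF : evS Be (PowerSeries.C L.ρ * F)) :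
    evS Be (PowerSeries.C L.ρ * cD L.E F) := by
  intro n
  have := hF n
  rw [PowerSeries.coeff_C_mul] at this ⊢
  rw [coeff_cD]
  exact hP.oddE this

lemma coeff_V' (n : ℕ) : PowerSeries.coeff n L.V' = - ((-1) ^ n * PowerSeries.coeff n L.V) := by
  rw [V', map_neg, PowerSeries.evalNegHom, PowerSeries.coeff_rescale]

lemma Par.oddO (hP : L.Par Be) : evS Be (PowerSeries.C L.ρ * L.O) := by
  intro n
  rw [PowerSeries.coeff_C_mul, O, map_sub, coeff_V']
  rcases Nat.even_or_odd n with h | h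
  · rw [h.neg_one_pow]
    have := Subalgebra.add_mem _ (hP.Ve n h) (hP.Ve n h)
    convert this using 1
    ring
  · rw [h.neg_one_pow]
    have := Subalgebra.zero_mem Be
    convert this using 1
    ring

lemma Par.evE (hP : L.Par Be) : evS Be (2 * L.g - L.S) := by
  apply evS.sub
  · apply evS.mul evS_two
    rw [g]
    exact evS_one.add ((((evS_C hP.A).sub evS_one).add evS_X).mul (evS_C hP.y))
  · intro n
    rw [S, map_add, coeff_V']
    rcases Nat.even_or_odd n with h | h
    · rw [h.neg_one_pow]
      have := Subalgebra.zero_mem Be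
      convert this using 1
      ring
    · rw [h.neg_one_pow]
      have := Subalgebra.add_mem _ (hP.Vo n h) (hP.Vo n h)
      convert this using 1
      ring

lemma Par.evEE (hP : L.Par Be) {F : PowerSeries M} (hF : evS Be F) : evS Be (cD L.E F) := by
  intro n
  rw [coeff_cD]
  exact hP.E _ (hF n)

lemma Par.oddΨ (hP : L.Par Be) (I J k : PowerSeries M) (hI : L.G' * I = 1) (hJ : L.O * J = 1) (hk : L.κ * k = 1) :
    evS Be (PowerSeries.C (L.ρ * L.y) * L.Ψ I J k) := by
  have h1 := L.yΨ I J k hI hJ hk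
  have hO := hP.oddO
  have hσ : PowerSeries.C L.ρ * PowerSeries.C L.σ = 1 := by
    rw [← map_mul, L.hσ, map_one]
  have ha : evS Be (L.κ * (PowerSeries.C L.ρ * L.O)) := by
    apply evS.mul _ hO
    rw [κ]
    exact (evS_two.mul (evS_C hP.A)).add evS_X
  have h4 : ∀ F : PowerSeries M, (1 / 4 : ℚ) • (4 * F) = F := by
    intro F
    have : 4 * F = (4 : ℚ) • F := by rw [ofNat_smul_eq_nsmul, nsmul_eq_mul]; simp
    rw [this, smul_smul]; norm_num
  have h5 : evS Be (4 * ((L.κ * (PowerSeries.C L.ρ * L.O)) *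
      (PowerSeries.C (L.ρ * L.y) * L.Ψ I J k))) := by
    have e : 4 * ((L.κ * (PowerSeries.C L.ρ * L.O)) *
      (PowerSeries.C (L.ρ * L.y) * L.Ψ I J k)) =
      (PowerSeries.C L.ρ * ThR L.E L.O) * ((PowerSeries.C L.ρ * L.O) * cD L.E (2 * L.g - L.S) -
        (2 * L.g - L.S) * (PowerSeries.C L.ρ * cD L.E L.O)) := by
      rw [map_mul]
      linear_combination (PowerSeries.C L.ρ) ^ 2 * h1
    rw [e]
    exact (hP.oddTh hO).mul ((hO.mul (hP.evEE hP.evE)).sub (hP.evE.mul (hP.oddcE hO)))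
  have h6 : evS Be ((L.κ * (PowerSeries.C L.ρ * L.O)) *
      (PowerSeries.C (L.ρ * L.y) * L.Ψ I J k)) := by
    rw [← h4 ((L.κ * (PowerSeries.C L.ρ * L.O)) *
      (PowerSeries.C (L.ρ * L.y) * L.Ψ I J k))]
    intro n
    rw [PowerSeries.coeff_smul]
    exact Subalgebra.smul_mem _ (h5 n) _
  refine evS_div (b := (1 / 4 : ℚ) • (L.Ai * L.σ ^ 2)) ha h6
    (Subalgebra.smul_mem _ (Subalgebra.mul_mem _ hP.Ai hP.σ2) _) ?_
  rw [mul_smul_comm]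
  have e : PowerSeries.constantCoeff (L.κ * (PowerSeries.C L.ρ * L.O)) * (L.Ai * L.σ ^ 2)
      = (4 : ℚ) • 1 := by
    rw [ofNat_smul_eq_nsmul, nsmul_eq_mul]
    simp only [map_mul, κ, O, map_sub, map_add, PowerSeries.constantCoeff_C,
      PowerSeries.constantCoeff_X, L.hV0, L.hV'0, map_ofNat]
    have h7 : L.ρ ^ 2 * L.σ ^ 2 = 1 := by rw [← mul_pow, L.hσ, one_pow]
    push_cast
    linear_combination 4 * L.A * L.Ai * h7 + 4 * L.hAi
  rw [e, smul_smul]; norm_num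

/-- correction series -/
noncomputable def om (E : Derivation ℚ M M) (φ2 : M) : PowerSeries M :=
  PowerSeries.mk fun n => if n = 0 then 0 else ((n.factorial : ℚ)⁻¹) • (E : M → M)^[n - 1] φ2

theorem Par.main (hP : L.Par Be) (I J k : PowerSeries M) (hI : L.G' * I = 1) (hJ : L.O * J = 1)
    (hk : L.κ * k = 1) (φ : PowerSeries M) (φ2 : M)
    (hφ : 4 * cD L.D φ = L.O - 2 * PowerSeries.C L.ρ)
    (hφo : ∀ n, L.ρ * PowerSeries.coeff n φ ∈ Be)
    (hφ2 : 2 * L.D φ2 = L.E (L.E L.ρ)) (hφoo : L.ρ * φ2 ∈ Be) :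
    2 * (ThR L.E (cD L.E φ) - cD L.E φ + om L.E φ2) = PowerSeries.X * L.Ψ I J k := by
  have hDom : 2 * cD L.D (om L.E φ2) = ThR L.E (cD L.E (PowerSeries.C L.ρ))
      - cD L.E (PowerSeries.C L.ρ) := by
    rw [cD_C, ThR_apply, Th_C]
    have h2 : ∀ F : PowerSeries M, 2 * F = (2 : ℚ) • F := by
      intro F; rw [ofNat_smul_eq_nsmul, nsmul_eq_mul]; simp
    have h2' : ∀ F : M, 2 * F = (2 : ℚ) • F := by
      intro F; rw [ofNat_smul_eq_nsmul, nsmul_eq_mul]; simp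
    ext n
    rw [h2, PowerSeries.coeff_smul, coeff_cD, om, PowerSeries.coeff_mk, map_sub,
      PowerSeries.coeff_mk, PowerSeries.coeff_C]
    cases n with
    | zero => simp
    | succ n =>
      simp only [Nat.succ_ne_zero, if_false, Nat.add_sub_cancel, sub_zero]
      rw [Derivation.map_smul, it_comm L.hDE, smul_comm, ← it_smul, ← h2', hφ2,
        ← Function.iterate_succ_apply, ← Function.iterate_succ_apply]
  have hD := L.DΨ I J k hI hJ hk
  have hodd : evS Be (PowerSeries.C (L.ρ * L.y) * (2 * (ThR L.E (cD L.E φ) - cD L.E φ + om L.E φ2)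
      - PowerSeries.X * L.Ψ I J k)) := by
    have e : (PowerSeries.C (L.ρ * L.y) * (2 * (ThR L.E (cD L.E φ) - cD L.E φ + om L.E φ2)
      - PowerSeries.X * L.Ψ I J k)) = PowerSeries.C L.y * (2 * (PowerSeries.C L.ρ * ThR L.E (cD L.E φ)
       - PowerSeries.C L.ρ * cD L.E φ + PowerSeries.C L.ρ * om L.E φ2)) -
       PowerSeries.X * (PowerSeries.C (L.ρ * L.y) * L.Ψ I J k) := by
      simp only [map_mul]; ring
    rw [e]
    have hφ' : evS Be (PowerSeries.C L.ρ * φ) := by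
      intro n; rw [PowerSeries.coeff_C_mul]; exact hφo n
    refine evS.sub ((evS_C hP.y).mul (evS_two.mul (((hP.oddTh (hP.oddcE hφ')).sub
      (hP.oddcE hφ')).add ?_))) (evS_X.mul (hP.oddΨ I J k hI hJ hk))
    intro n
    rw [PowerSeries.coeff_C_mul, om, PowerSeries.coeff_mk]
    split_ifs
    · rw [mul_zero]; exact Subalgebra.zero_mem _
    · rw [mul_smul_comm]
      exact Subalgebra.smul_mem _ (hP.oddEit hφoo _) _
  have hDZ : cD L.D (2 * (ThR L.E (cD L.E φ) - cD L.E φ + om L.E φ2)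
      - PowerSeries.X * L.Ψ I J k) = 0 := by
    have hcomm : ∀ a, cD L.D (cD L.E a) = cD L.E (cD L.D a) := cD_comm L.hDE
    have h8 : ∀ F : PowerSeries M, (1 / 4 : ℚ) • (4 * F) = F := by
      intro F
      have : 4 * F = (4 : ℚ) • F := by rw [ofNat_smul_eq_nsmul, nsmul_eq_mul]; simp
      rw [this, smul_smul]; norm_num
    have h9 : 4 * cD L.D (2 * (ThR L.E (cD L.E φ) - cD L.E φ + om L.E φ2)
      - PowerSeries.X * L.Ψ I J k) = 0 := by
      rw [map_sub, X_const, two_const, map_add, map_sub, ThR_apply, Th_cD L.hDE, hcomm, ← ThR_apply]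
      have e1 : 4 * cD L.E (cD L.D φ) = cD L.E L.O - 2 * cD L.E (PowerSeries.C L.ρ) := by
        rw [← two_const, ← map_sub, ← hφ]
        have : (4 : PowerSeries M) * cD L.D φ = 2 * (2 * cD L.D φ) := by ring
        rw [this, two_const, two_const]; ring
      have e2 := congrArg (ThR L.E) e1
      simp only [map_sub, map_mul, map_ofNat] at e2
      linear_combination 2 * e2 - 2 * e1 + 4 * hDom - hD
    rw [← h8 (cD L.D (2 * (ThR L.E (cD L.E φ) - cD L.E φ + om L.E φ2)
      - PowerSeries.X * L.Ψ I J k)), h9, smul_zero]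
  rw [← sub_eq_zero]
  ext n
  rw [map_zero]
  apply hP.const
  · rw [← coeff_cD, hDZ, map_zero]
  · have := hodd n
    rwa [PowerSeries.coeff_C_mul] at this

end Ladder
end evenPart
end Lag

namespace Lag

section piPart
set_option linter.unusedSectionVars false
variable {M : Type*} [CommRing M] [Algebra ℚ M] {R : Type*} [CommRing R] [Algebra ℚ R]

lemma map_it (π : M →ₐ[ℚ] R) (E : Derivation ℚ M M) (d : Derivation ℚ R R)
    (h : ∀ x, π (E x) = d (π x)) (n : ℕ) (x : M) :
    π ((E : M → M)^[n] x) = (d : R → R)^[n] (π x) := by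
  induction n generalizing x with
  | zero => rfl
  | succ n ih => rw [Function.iterate_succ_apply, Function.iterate_succ_apply, ih, h]

lemma map_cD (π : M →ₐ[ℚ] R) (E : Derivation ℚ M M) (d : Derivation ℚ R R)
    (h : ∀ x, π (E x) = d (π x)) (F : PowerSeries M) :
    PowerSeries.map (π : M →+* R) (cD E F) = cD d (PowerSeries.map (π : M →+* R) F) := by
  ext n; simp [h]

lemma map_Th (π : M →ₐ[ℚ] R) (E : Derivation ℚ M M) (d : Derivation ℚ R R)
    (h : ∀ x, π (E x) = d (π x)) (F : PowerSeries M) :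
    PowerSeries.map (π : M →+* R) (ThR E F) = ThR d (PowerSeries.map (π : M →+* R) F) := by
  ext n; simp [ThR_apply, coeff_Th, map_it π E d h]

lemma map_om (π : M →ₐ[ℚ] R) (E : Derivation ℚ M M) (d : Derivation ℚ R R)
    (h : ∀ x, π (E x) = d (π x)) (x : M) :
    PowerSeries.map (π : M →+* R) (Ladder.om E x) = Ladder.om d (π x) := by
  ext n
  simp only [Ladder.om, PowerSeries.coeff_map, PowerSeries.coeff_mk]
  split_ifs
  · simp
  · simp [map_it π E d h]

namespace Ladder
variable (L : Ladder M) {Be : Subalgebra ℚ M}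

theorem Par.limit {L : Ladder M} (hP : L.Par Be) (φ : PowerSeries M) (φ2 : M)
    (hφ : 4 * cD L.D φ = L.O - 2 * PowerSeries.C L.ρ)
    (hφo : ∀ n, L.ρ * PowerSeries.coeff n φ ∈ Be)
    (hφ2 : 2 * L.D φ2 = L.E (L.E L.ρ)) (hφoo : L.ρ * φ2 ∈ Be)
    (π : M →ₐ[ℚ] R) (d : Derivation ℚ R R) (h : ∀ x, π (L.E x) = d (π x))
    (hy : π L.y = 0) (hρ : π L.ρ = 1) (hV : ∀ n, 1 ≤ n → π (PowerSeries.coeff n L.V) = 0) :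
    2 * (ThR d (cD d (PowerSeries.map (π : M →+* R) φ)) - cD d (PowerSeries.map (π : M →+* R) φ)
      + om d (π φ2)) * (2 * PowerSeries.C (π L.A) + PowerSeries.X) = 2 * PowerSeries.X := by
  have half : ∀ F : M, (1 / 2 : ℚ) • (2 * F) = F := by
    intro F
    have : 2 * F = (2 : ℚ) • F := by rw [ofNat_smul_eq_nsmul, nsmul_eq_mul]; simp
    rw [this, smul_smul]; norm_num
  obtain ⟨I, hI⟩ := L.G'_inv
  obtain ⟨J, hJ⟩ : ∃ J, L.O * J = 1 := by
    apply exists_inv _ ((1 / 2 : ℚ) • L.σ)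
    rw [mul_smul_comm]
    have : PowerSeries.constantCoeff L.O * L.σ = 2 * 1 := by
      rw [O, map_sub, L.hV0, L.hV'0]; linear_combination 2 * L.hσ
    rw [this, half]
  obtain ⟨k, hk⟩ : ∃ k, L.κ * k = 1 := by
    apply exists_inv _ ((1 / 2 : ℚ) • L.Ai)
    rw [mul_smul_comm]
    have : PowerSeries.constantCoeff L.κ * L.Ai = 2 * 1 := by
      simp [κ, map_ofNat]; linear_combination 2 * L.hAi
    rw [this, half]
  have hm := hP.main I J k hI hJ hk φ φ2 hφ hφo hφ2 hφoo
  have hV1 : PowerSeries.map (π : M →+* R) L.V = 1 := by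
    ext n
    rw [PowerSeries.coeff_map, PowerSeries.coeff_one]
    split_ifs with h0
    · rw [h0, PowerSeries.coeff_zero_eq_constantCoeff_apply, L.hV0]; exact hρ
    · exact hV n (by omega)
  have hV2 : PowerSeries.map (π : M →+* R) L.V' = -1 := by
    ext n
    rw [PowerSeries.coeff_map, coeff_V', map_neg, map_neg (PowerSeries.coeff n), PowerSeries.coeff_one]
    split_ifs with h0
    · rw [h0, PowerSeries.coeff_zero_eq_constantCoeff_apply, L.hV0]; simp [hρ]
    · simp [hV n (by omega)]
  have e1 : PowerSeries.map (π : M →+* R) (cD L.E L.G') = 0 := by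
    rw [map_cD π L.E d h, G', map_sub, hV2, g]
    simp [hy]
  have e2 : PowerSeries.map (π : M →+* R) (cD L.E L.O) = 0 := by
    rw [map_cD π L.E d h, O, map_sub, hV2, hV1]
    simp
  have e3 := congrArg (PowerSeries.map (π : M →+* R)) hm
  have e4 := congrArg (PowerSeries.map (π : M →+* R)) hk
  rw [map_mul, κ, map_add, map_mul, PowerSeries.map_C, PowerSeries.map_X, map_one, map_ofNat] at e4
  rw [Ψ] at e3
  simp only [map_mul, map_sub, map_add, map_Th π L.E d h, e1, e2, map_ofNat,
    map_om π L.E d h, PowerSeries.map_X] at e3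
  rw [map_cD π L.E d h] at e3
  rw [e3]
  simp only [RingHom.coe_coe] at e4
  simp only [zero_mul, mul_zero, sub_zero, map_zero, add_zero]
  linear_combination (2 * PowerSeries.X) * e4

end Ladder
end piPart
end Lag

namespace Lag

lemma exists_sqrt {R : Type*} [CommRing R] [Algebra ℚ R] (F : PowerSeries R)
    (h : PowerSeries.constantCoeff F = 1) :
    ∃ ρ : PowerSeries R, ρ ^ 2 = F ∧ PowerSeries.constantCoeff ρ = 1 := by
  have h0 : PowerSeries.constantCoeff (F - 1) = 0 := by simp [h]
  have hs : PowerSeries.HasSubst (F - 1) := PowerSeries.HasSubst.of_constantCoeff_zero' h0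
  set b : PowerSeries R := PowerSeries.binomialSeries R (1 / 2 : ℚ) with hb
  have hb2 : b * b = 1 + PowerSeries.X := by
    have := PowerSeries.binomialSeries_add (A := R) (1 / 2 : ℚ) (1 / 2)
    rw [← hb] at this
    rw [← this]
    have h2 := PowerSeries.binomialSeries_nat (A := R) (R := ℚ) 1
    norm_num at h2 ⊢
    exact h2
  refine ⟨PowerSeries.substAlgHom (R := R) hs b, ?_, ?_⟩
  · rw [pow_two, ← map_mul, hb2, map_add, map_one, PowerSeries.substAlgHom_X]
    ring
  · have e : b = 1 + (b - 1) := by ring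
    rw [e, map_add, map_one, map_add, map_one]
    have := PowerSeries.constantCoeff_subst_eq_zero (R := R) (a := F - 1) h0 (b - 1)
      (by simp [hb])
    rw [PowerSeries.coe_substAlgHom]
    have h3 : PowerSeries.constantCoeff (PowerSeries.subst (F - 1) (b - 1)) = 0 := this
    rw [h3, add_zero]

/-- Laurent polynomials over `ℚ`. -/
abbrev LR : Type := LaurentPolynomial ℚ

/-- `d/dA` as a linear map -/
noncomputable def dTl : LR →ₗ[ℚ] LR :=
  (Finsupp.lsum ℚ fun n : ℤ => LinearMap.toSpanSingleton ℚ LR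
    ((n : ℚ) • (LaurentPolynomial.T (n - 1) : LR))).comp
    (AddMonoidAlgebra.coeffLinearEquiv ℚ).toLinearMap

lemma dTl_CT (a : ℚ) (n : ℤ) : dTl (LaurentPolynomial.C a * LaurentPolynomial.T n) =
    (a * n) • (LaurentPolynomial.T (n - 1) : LR) := by
  rw [← LaurentPolynomial.single_eq_C_mul_T]
  change (Finsupp.lsum ℚ fun n : ℤ => LinearMap.toSpanSingleton ℚ LR
    ((n : ℚ) • (LaurentPolynomial.T (n - 1) : LR))) (Finsupp.single n a) = _
  rw [Finsupp.lsum_single, LinearMap.toSpanSingleton_apply, smul_smul]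

/-- `d/dA` -/
noncomputable def dT : Derivation ℚ LR LR :=
  Derivation.mk' dTl (by
    intro F G
    induction F using LaurentPolynomial.induction_on' with
    | add p q hp hq => rw [add_mul, map_add, map_add, add_smul, smul_add, hp, hq]; abel
    | C_mul_T n a =>
      induction G using LaurentPolynomial.induction_on' with
      | add p q hp hq => rw [mul_add, map_add, map_add, add_smul, smul_add, hp, hq]; abel
      | C_mul_T m b =>
        have e : (LaurentPolynomial.C a * LaurentPolynomial.T n : LR) *
          (LaurentPolynomial.C b * LaurentPolynomial.T m) =
          LaurentPolynomial.C (a * b) * LaurentPolynomial.T (n + m) := by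
          rw [map_mul, LaurentPolynomial.T_add]; ring
        rw [e, dTl_CT, dTl_CT, dTl_CT]
        simp only [smul_eq_mul, LaurentPolynomial.smul_eq_C_mul]
        have e1 : (LaurentPolynomial.T n : LR) * LaurentPolynomial.T (m - 1) = LaurentPolynomial.T (n + m - 1) := by
          rw [← LaurentPolynomial.T_add]; congr 1; ring
        have e2 : (LaurentPolynomial.T m : LR) * LaurentPolynomial.T (n - 1) = LaurentPolynomial.T (n + m - 1) := by
          rw [← LaurentPolynomial.T_add]; congr 1; ring
        have e3 : (LaurentPolynomial.C (a * b * ((n + m : ℤ) : ℚ)) : LR) =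
          LaurentPolynomial.C a * LaurentPolynomial.C (b * m) + LaurentPolynomial.C b * LaurentPolynomial.C (a * n) := by
          rw [← map_mul, ← map_mul, ← map_add]; congr 1; push_cast; ring
        rw [e3]
        linear_combination (-LaurentPolynomial.C a * LaurentPolynomial.C (b * m)) * e1
          - (LaurentPolynomial.C b * LaurentPolynomial.C (a * n)) * e2)

lemma dT_CT (a : ℚ) (n : ℤ) : dT (LaurentPolynomial.C a * LaurentPolynomial.T n) =
    LaurentPolynomial.C (a * n) * (LaurentPolynomial.T (n - 1) : LR) := by
  exact (dTl_CT a n).trans (LaurentPolynomial.smul_eq_C_mul _ _)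

lemma dT_T (n : ℤ) : dT (LaurentPolynomial.T n) =
    LaurentPolynomial.C (n : ℚ) * (LaurentPolynomial.T (n - 1) : LR) := by
  have := dT_CT 1 n
  simpa using this

lemma coeff_dT (F : LR) (j : ℤ) : (dT F).coeff j = (j + 1 : ℚ) * F.coeff (j + 1) := by
  induction F using LaurentPolynomial.induction_on' with
  | add p q hp hq => rw [map_add]; simp [hp, hq, mul_add]
  | C_mul_T n a =>
    rw [dT_CT, ← LaurentPolynomial.single_eq_C_mul_T, ← LaurentPolynomial.single_eq_C_mul_T]
    simp only [AddMonoidAlgebra.coeff_single, Finsupp.single_apply]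
    by_cases h : n = j + 1
    · subst h; simp; ring
    · rw [if_neg h, if_neg (by omega)]; simp

/-- `A` as a unit in `ℚ(A)` -/
noncomputable def AKu : (RatFunc ℚ)ˣ := Units.mk0 RatFunc.X RatFunc.X_ne_zero

/-- The embedding into `ℚ(A)`. -/
noncomputable def toK : LR →+* RatFunc ℚ := LaurentPolynomial.eval₂ (algebraMap ℚ (RatFunc ℚ)) AKu

lemma toK_toLaurent (p : ℚ[X]) : toK (toLaurent p) = algebraMap ℚ[X] (RatFunc ℚ) p := by
  rw [toK, LaurentPolynomial.eval₂_toLaurent]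
  induction p using Polynomial.induction_on' with
  | add p q hp hq => rw [eval₂_add, hp, hq, map_add]
  | monomial n a =>
    rw [eval₂_monomial, ← C_mul_X_pow_eq_monomial, map_mul, map_pow, RatFunc.algebraMap_X,
      IsScalarTower.algebraMap_apply ℚ ℚ[X] (RatFunc ℚ), Polynomial.algebraMap_eq]
    rfl

lemma toK_T (n : ℤ) : toK (LaurentPolynomial.T n) = RatFunc.X ^ n := by
  rw [toK, LaurentPolynomial.eval₂_T]; simp [AKu]

lemma toK_injective : Function.Injective toK := by
  rw [injective_iff_map_eq_zero]
  intro f hf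
  obtain ⟨n, p, hp⟩ := LaurentPolynomial.exists_T_pow f
  have h1 : algebraMap ℚ[X] (RatFunc ℚ) p = 0 := by
    rw [← toK_toLaurent, hp, map_mul, hf, zero_mul]
  have h2 : p = 0 := by
    apply RatFunc.algebraMap_injective ℚ
    rw [h1, map_zero]
  rw [h2, map_zero] at hp
  have h3 := congrArg (fun x => x * LaurentPolynomial.T (-(n : ℤ))) hp
  simp only [zero_mul, mul_assoc, ← LaurentPolynomial.T_add] at h3
  simpa using h3.symm

/-- The ring `ℚ[A,A⁻¹]⟦y⟧`. -/
abbrev MM : Type := PowerSeries LR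

noncomputable def yy : MM := PowerSeries.X
noncomputable def AA : MM := PowerSeries.C (LaurentPolynomial.T 1)
noncomputable def AAi : MM := PowerSeries.C (LaurentPolynomial.T (-1))

noncomputable def DD : Derivation ℚ MM MM :=
  -((PowerSeries.X ^ 2 : MM) • (PowerSeries.derivative LR).restrictScalars ℚ)

lemma DD_apply (F : MM) : DD F = - (PowerSeries.X ^ 2 * PowerSeries.derivative LR F) := by
  simp [DD]

noncomputable def EE : Derivation ℚ MM MM := cD dT

lemma EE_der (F : MM) : EE (PowerSeries.derivative LR F) = PowerSeries.derivative LR (EE F) := by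
  ext1 n
  simp only [EE, coeff_cD, PowerSeries.coeff_derivative]
  have : ((PowerSeries.coeff (n + 1)) F) * ((n : LR) + 1) = ((n + 1 : ℕ) : ℚ) • (PowerSeries.coeff (n + 1)) F := by
    rw [Nat.cast_smul_eq_nsmul, nsmul_eq_mul]; push_cast; ring
  rw [this, Derivation.map_smul, Nat.cast_smul_eq_nsmul, nsmul_eq_mul]; push_cast; ring

lemma EE_yy : EE yy = 0 := cD_X dT

lemma DE_comm (F : MM) : DD (EE F) = EE (DD F) := by
  have h : EE (PowerSeries.X : MM) = 0 := EE_yy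
  rw [DD_apply, DD_apply, map_neg, Derivation.leibniz, Derivation.leibniz_pow, h, EE_der]
  simp

lemma DD_yy : DD yy = - yy ^ 2 := by
  rw [DD_apply, yy]; simp [PowerSeries.derivative_X]

lemma DD_C (a : LR) : DD (PowerSeries.C a) = 0 := by
  rw [DD_apply]; simp

lemma EE_AA : EE AA = 1 := by
  rw [EE, AA, cD_C, dT_T]; simp

/-- `s̄` as a polynomial in `y` -/
noncomputable def sP : LR[X] := 1 - C (2 * (LaurentPolynomial.T 1 + 1)) * X
    + C ((LaurentPolynomial.T 1 - 1) ^ 2) * X ^ 2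

lemma sP_coe : ((sP : LR[X]) : MM) = 1 - 2 * (AA + 1) * yy + (AA - 1) ^ 2 * yy ^ 2 := by
  simp only [sP, AA, yy]
  push_cast
  simp [map_ofNat]

lemma exists_rho : ∃ ρ : MM, ρ ^ 2 = (sP : MM) ∧ PowerSeries.constantCoeff ρ = 1 :=
  exists_sqrt _ (by rw [sP_coe]; simp [yy])

noncomputable def rho : MM := exists_rho.choose
lemma rho_sq : rho ^ 2 = (sP : MM) := exists_rho.choose_spec.1
lemma rho_0 : PowerSeries.constantCoeff rho = 1 := exists_rho.choose_spec.2

lemma exists_sig : ∃ σ : MM, rho * σ = 1 := exists_inv _ 1 (by rw [rho_0, one_mul])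
noncomputable def sig : MM := exists_sig.choose
lemma rho_sig : rho * sig = 1 := exists_sig.choose_spec
lemma sig_0 : PowerSeries.constantCoeff sig = 1 := by
  have := congrArg PowerSeries.constantCoeff rho_sig
  simpa [rho_0] using this

lemma exists_tau : ∃ τ : MM, (rho + 1 + (AA - 1) * yy) * τ = 1 :=
  exists_inv _ ((1 / 2 : ℚ) • 1) (by
    rw [mul_smul_comm]
    have : PowerSeries.constantCoeff (rho + 1 + (AA - 1) * yy) * 1 = (2 : ℚ) • (1 : LR) := by
      rw [ofNat_smul_eq_nsmul, nsmul_eq_mul]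
      simp [rho_0, yy]; norm_num
    rw [this, smul_smul]; norm_num)

/-- even elements -/
noncomputable def Bev : Subalgebra ℚ MM where
  carrier := {x | ∃ (k : ℕ) (P : LR[X]), x * (sP : MM) ^ k = (P : MM)}
  mul_mem' := by
    rintro a b ⟨k, P, h⟩ ⟨l, Q, h'⟩
    refine ⟨k + l, P * Q, ?_⟩
    rw [Polynomial.coe_mul, ← h, ← h', pow_add]; ring
  add_mem' := by
    rintro a b ⟨k, P, h⟩ ⟨l, Q, h'⟩
    refine ⟨k + l, P * sP ^ l + Q * sP ^ k, ?_⟩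
    rw [Polynomial.coe_add, Polynomial.coe_mul, Polynomial.coe_mul, ← h, ← h', pow_add,
      Polynomial.coe_pow, Polynomial.coe_pow]; ring
  algebraMap_mem' := by
    intro r
    refine ⟨0, algebraMap ℚ LR[X] r, ?_⟩
    rw [pow_zero, mul_one]
    rw [Polynomial.algebraMap_apply, Polynomial.coe_C, PowerSeries.algebraMap_apply]

lemma mem_Bev {x : MM} : x ∈ Bev ↔ ∃ (k : ℕ) (P : LR[X]), x * (sP : MM) ^ k = (P : MM) := Iff.rfl

lemma coe_mem_Bev (P : LR[X]) : (P : MM) ∈ Bev := ⟨0, P, by simp⟩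

lemma EE_coe (P : LR[X]) : ∃ Q : LR[X], EE (P : MM) = (Q : MM) := by
  induction P using Polynomial.induction_on' with
  | add p q hp hq =>
    obtain ⟨a, ha⟩ := hp
    obtain ⟨b, hb⟩ := hq
    exact ⟨a + b, by rw [Polynomial.coe_add, map_add, ha, hb, Polynomial.coe_add]⟩
  | monomial n a =>
    refine ⟨C (dT a) * X ^ n, ?_⟩
    have h : EE (PowerSeries.X : MM) = 0 := EE_yy
    rw [← C_mul_X_pow_eq_monomial, Polynomial.coe_mul, Polynomial.coe_mul, Polynomial.coe_pow, Polynomial.coe_C,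
      Polynomial.coe_C, Polynomial.coe_X, Derivation.leibniz, Derivation.leibniz_pow, h]
    simp [EE, cD_C, mul_comm]

lemma Bev_E (x : MM) (hx : x ∈ Bev) : EE x ∈ Bev := by
  obtain ⟨k, P, h⟩ := hx
  obtain ⟨Q, hQ⟩ := EE_coe P
  obtain ⟨t, ht⟩ := EE_coe sP
  refine ⟨k + 1, Q * sP - (k : LR[X]) * P * t, ?_⟩
  have h1 := congrArg EE h
  rw [Derivation.leibniz, Derivation.leibniz_pow, hQ, ht] at h1
  push_cast
  rw [← h, ← h1]
  simp only [smul_eq_mul, nsmul_eq_mul]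
  rcases k with _ | k
  · simp
  · simp only [Nat.add_sub_cancel]
    have e : (((k : ℕ) : LR[X]) : MM) = (k : MM) :=
      map_natCast (Polynomial.coeToPowerSeries.ringHom (R := LR)) k
    push_cast
    rw [e]
    ring

lemma sig_mem : sig ^ 2 ∈ Bev := by
  refine ⟨1, 1, ?_⟩
  rw [pow_one, ← rho_sq, ← mul_pow, mul_comm, rho_sig]; simp

lemma const_lemma (c : MM) (hc : DD c = 0) (h : rho * yy * c ∈ Bev) : c = 0 := by
  have h1 : PowerSeries.derivative LR c = 0 := by
    rw [DD_apply, neg_eq_zero] at hc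
    ext1 n
    have := congrArg (PowerSeries.coeff (n + 2)) hc
    rw [PowerSeries.coeff_X_pow_mul] at this
    simpa using this
  have h2 : ∀ n, PowerSeries.coeff (n + 1) c = 0 := by
    intro n
    have := congrArg (PowerSeries.coeff n) h1
    rw [PowerSeries.coeff_derivative] at this
    have h3 : ((PowerSeries.coeff (n + 1)) c) * ((n : LR) + 1) = ((n + 1 : ℕ) : ℚ) • (PowerSeries.coeff (n + 1)) c := by
      rw [Nat.cast_smul_eq_nsmul, nsmul_eq_mul]; push_cast; ring
    rw [h3, map_zero] at this
    have h4 : ((n + 1 : ℕ) : ℚ) ≠ 0 := by positivity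
    exact (smul_eq_zero.mp this).resolve_left h4
  obtain ⟨a, rfl⟩ : ∃ a, c = PowerSeries.C a := by
    refine ⟨PowerSeries.constantCoeff c, ?_⟩
    ext1 n
    rcases n with _ | n
    · simp
    · rw [h2, PowerSeries.coeff_C]; simp
  obtain ⟨k, P, hP⟩ := h
  have h5 : ((sP ^ (2 * k + 1) * X ^ 2 * C (a ^ 2) : LR[X]) : MM) = ((P ^ 2 : LR[X]) : MM) := by
    push_cast
    rw [← hP, pow_succ, ← rho_sq, yy, map_pow]
    ring
  have h6 := Polynomial.coe_injective LR h5
  have h7 := congrArg (fun p => Polynomial.eval₂ toK ((RatFunc.X + 1)⁻¹) p) h6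
  simp only [eval₂_mul, eval₂_pow, eval₂_X, eval₂_C] at h7
  have hX1 : (RatFunc.X + 1 : RatFunc ℚ) ≠ 0 := by
    have : (RatFunc.X + 1 : RatFunc ℚ) = algebraMap ℚ[X] (RatFunc ℚ) (X + C 1) := by
      simp [RatFunc.algebraMap_X]
    rw [this]
    exact RatFunc.algebraMap_ne_zero (X_add_C_ne_zero 1)
  have hX1d : (RatFunc.X + 1 : RatFunc ℚ).intDegree = 1 := by
    have : (RatFunc.X + 1 : RatFunc ℚ) = algebraMap ℚ[X] (RatFunc ℚ) (X + C 1) := by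
      simp [RatFunc.algebraMap_X]
    rw [this, RatFunc.intDegree_polynomial, natDegree_X_add_C]; rfl
  have hs : eval₂ toK ((RatFunc.X + 1)⁻¹) sP = RatFunc.C (-4) * RatFunc.X / (RatFunc.X + 1) ^ 2 := by
    simp only [sP, eval₂_add, eval₂_sub, eval₂_mul, eval₂_pow, eval₂_X, eval₂_C, eval₂_one,
      map_mul, map_add, map_sub, map_pow, toK_T, map_one, zpow_one, map_ofNat, map_neg, eval₂_ofNat]
    field_simp
    ring
  have h4 : (RatFunc.C (-4 : ℚ) : RatFunc ℚ) ≠ 0 := by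
    intro h
    have := (map_eq_zero_iff _ (RatFunc.C_injective (K := ℚ))).mp h
    norm_num at this
  have hsne : RatFunc.C (-4 : ℚ) * RatFunc.X / (RatFunc.X + 1 : RatFunc ℚ) ^ 2 ≠ 0 := by
    apply div_ne_zero _ (pow_ne_zero _ hX1)
    exact mul_ne_zero h4 RatFunc.X_ne_zero
  have hpow : ∀ (x : RatFunc ℚ) (n : ℕ), x ≠ 0 → (x ^ n).intDegree = n * x.intDegree := by
    intro x n hx
    induction n with
    | zero => simp
    | succ n ih => rw [pow_succ, RatFunc.intDegree_mul (pow_ne_zero _ hx) hx, ih]; push_cast; ring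
  rw [hs] at h7
  have ha : toK a = 0 := by
    by_contra hne
    have hdeg := congrArg RatFunc.intDegree h7
    have hane : toK (a ^ 2) ≠ 0 := by rw [map_pow]; exact pow_ne_zero _ hne
    have hyne : ((RatFunc.X + 1 : RatFunc ℚ)⁻¹) ^ 2 ≠ 0 := pow_ne_zero _ (inv_ne_zero hX1)
    have hPne : eval₂ toK ((RatFunc.X + 1)⁻¹) P ≠ 0 := by
      intro h0
      rw [h0] at h7
      exact (mul_ne_zero (mul_ne_zero (pow_ne_zero _ hsne) hyne) hane) (by rw [h7]; simp)
    rw [RatFunc.intDegree_mul (mul_ne_zero (pow_ne_zero _ hsne) hyne) hane,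
      RatFunc.intDegree_mul (pow_ne_zero _ hsne) hyne, hpow _ _ hsne, hpow _ _ (inv_ne_zero hX1),
      map_pow, hpow _ _ hne, hpow _ _ hPne, RatFunc.intDegree_inv, hX1d,
      RatFunc.intDegree_div _ (pow_ne_zero _ hX1), hpow _ _ hX1, hX1d, RatFunc.intDegree_mul _ RatFunc.X_ne_zero,
      RatFunc.intDegree_C, RatFunc.intDegree_X] at hdeg
    · push_cast at hdeg
      omega
    · exact h4
    · exact mul_ne_zero h4 RatFunc.X_ne_zero
  have : a = 0 := toK_injective (by rw [ha, map_zero])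
  rw [this, map_zero]

end Lag

namespace Lag

lemma smulQ (r : ℚ) (p : Polynomial (Polynomial ℚ)) : r • p = C (C r) * p := by
  rw [← Polynomial.smul_eq_C_mul]
  ext i j
  simp

lemma Q_zero : QLag 0 = 0 := by rw [QLag]

lemma Q_one : QLag 1 = C (C (-(1 : ℚ) / 4)) *
      (X ^ 3 - C ((3 * Av - 1) * (Av - 3)) * X + C (2 * (Av + 1) * (Av - 1) ^ 2)) := by
  rw [QLag, smulQ]

lemma sum_Ico_anti {R : Type*} [CommRing R] (f : ℕ → R) (h0 : f 0 = 0) (n : ℕ) :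
    ∑ j ∈ Finset.Ico 1 n, f j * f (n - j) =
      ∑ p ∈ Finset.HasAntidiagonal.antidiagonal n, f p.1 * f p.2 := by
  rw [Finset.Nat.sum_antidiagonal_eq_sum_range_succ (fun i j => f i * f j) n]
  symm
  rw [Finset.sum_range_succ]
  simp only [Nat.sub_self, h0, mul_zero, add_zero]
  rcases n with _ | n
  · simp
  · rw [Finset.sum_range_succ', h0]
    simp only [zero_mul, add_zero]
    rw [Finset.sum_Ico_eq_sum_range]
    apply Finset.sum_congr (by simp)
    intro i hi
    rw [add_comm i 1]

lemma Q_succ (k : ℕ) (hk : 1 ≤ k) : QLag (k + 1) =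
      (C (C (3 * ((k : ℚ) + 1))) * (X * wLag) - sLag) * QLag k
        - X * sLag * derivative (QLag k)
        - X * ∑ p ∈ Finset.HasAntidiagonal.antidiagonal k, QLag p.1 * QLag p.2 := by
  obtain ⟨k, rfl⟩ : ∃ l, k = l + 1 := ⟨k - 1, by omega⟩
  rw [QLag, ← sum_Ico_anti QLag Q_zero, smulQ]
  rw [Finset.sum_attach (Finset.Ico 1 (k + 1)) (fun j => QLag j * QLag (k + 1 - j))]
  push_cast
  have : (k : ℚ) + 1 + 1 = k + 2 := by ring
  rw [this]

lemma sLag_deg : natDegree sLag ≤ 2 := by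
  unfold sLag; compute_degree
lemma wLag_deg : natDegree wLag ≤ 1 := by
  unfold wLag; compute_degree

lemma deg_add_le {R : Type*} [CommRing R] {p q : R[X]} {n : ℕ} (a : ℕ) {b : ℕ} (hp : natDegree p ≤ a)
    (hq : natDegree q ≤ b) (h : a + b ≤ n) : natDegree (p * q) ≤ n :=
  (natDegree_mul_le_of_le hp hq).trans h

lemma deg_sub_le {R : Type*} [CommRing R] {p q : R[X]} {n : ℕ} (hp : natDegree p ≤ n)
    (hq : natDegree q ≤ n) : natDegree (p - q) ≤ n :=
  (natDegree_sub_le_of_le hp hq).trans (by omega)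

lemma Q_deg (m : ℕ) : natDegree (QLag m) ≤ 2 * m + 1 := by
  induction m using Nat.strong_induction_on with
  | _ m ih =>
    rcases m with _ | _ | m
    · simp [Q_zero]
    · rw [Q_one]; compute_degree
    · rw [Q_succ _ (by omega)]
      have h1 := ih (m + 1) (by omega)
      refine deg_sub_le (deg_sub_le ?_ ?_) ?_
      · refine deg_add_le 2 ?_ h1 (by omega)
        refine natDegree_sub_le_of_le (m := 2) ?_ sLag_deg |>.trans (by omega)
        refine deg_add_le 0 (natDegree_C _).le (b := 2) ?_ (by omega)
        exact deg_add_le 1 natDegree_X_le wLag_deg (by omega)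
      · rcases Nat.eq_zero_or_pos (natDegree (QLag (m + 1))) with h0 | h0
        · rw [derivative_of_natDegree_zero h0]; simp
        · refine deg_add_le (3) (deg_add_le 1 natDegree_X_le sLag_deg (by omega)) (natDegree_derivative_le _) (by omega)
      · refine deg_add_le 1 natDegree_X_le (b := 2 * (m + 1) + 2) ?_ (by omega)
        apply natDegree_sum_le_of_forall_le
        rintro ⟨i, j⟩ hij
        rw [Finset.HasAntidiagonal.mem_antidiagonal] at hij
        simp only at hij
        rcases Nat.eq_zero_or_pos i with h0 | h0
        · subst h0; simp [Q_zero]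
        rcases Nat.eq_zero_or_pos j with h0 | h0
        · subst h0; simp [Q_zero]
        exact deg_add_le _ (ih i (by omega)) (ih j (by omega)) (by omega)

/-- minus the leading coefficient of `Q` -/
lemma Q_lead (m : ℕ) : ∃ r : ℚ, (QLag m).coeff (2 * m + 1) = C (-r) ∧ 0 ≤ r ∧ (1 ≤ m → 0 < r) := by
  induction m using Nat.strong_induction_on with
  | _ m ih =>
    rcases m with _ | _ | m
    · exact ⟨0, by simp [Q_zero]⟩
    · refine ⟨1 / 4, ?_, by norm_num, by norm_num⟩
      rw [Q_one, coeff_C_mul]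
      simp only [coeff_add, coeff_sub, coeff_C_mul, coeff_X_pow, coeff_X, coeff_C]
      norm_num
    · obtain ⟨r, hr, -, hr2⟩ := ih (m + 1) (by omega)
      have hr2 := hr2 (by omega)
      have hS : ∃ t : ℚ, 0 ≤ t ∧ (∑ p ∈ Finset.HasAntidiagonal.antidiagonal (m + 1), QLag p.1 * QLag p.2).coeff (2 * (m + 1) + 2) = C t := by
        rw [finsetSum_coeff]
        apply Finset.sum_induction _ (fun x => ∃ t : ℚ, 0 ≤ t ∧ x = C t)
        · rintro a b ⟨t, ht, rfl⟩ ⟨u, hu, rfl⟩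
          exact ⟨t + u, by positivity, by simp⟩
        · exact ⟨0, le_refl _, by simp⟩
        · rintro ⟨i, j⟩ hij
          rw [Finset.HasAntidiagonal.mem_antidiagonal] at hij
          simp only at hij
          rcases Nat.eq_zero_or_pos i with h0 | h0
          · subst h0; exact ⟨0, le_refl _, by simp [Q_zero]⟩
          rcases Nat.eq_zero_or_pos j with h0 | h0
          · subst h0; exact ⟨0, le_refl _, by simp [Q_zero]⟩
          obtain ⟨t, ht, ht1, -⟩ := ih i (by omega)
          obtain ⟨u, hu, hu1, -⟩ := ih j (by omega)
          refine ⟨t * u, by positivity, ?_⟩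
          have := coeff_mul_add_eq_of_natDegree_le (Q_deg i) (Q_deg j)
          rw [show 2 * (m + 1) + 2 = 2 * i + 1 + (2 * j + 1) by omega]
          rw [this, ht, hu, ← C_mul]; congr 1; ring
      obtain ⟨t, ht, hS⟩ := hS
      refine ⟨(m + 2) * r + t, ?_, by positivity, fun _ => by positivity⟩
      have hdeg := Q_deg (m + 1)
      have hsc : sLag.coeff 2 = 1 := by
        simp only [sLag, coeff_add, coeff_sub, coeff_C_mul, coeff_X_pow, coeff_X, coeff_C]; norm_num
      have hwc : wLag.coeff 1 = 1 := by
        simp only [wLag, coeff_add, coeff_sub, coeff_C_mul, coeff_X_pow, coeff_X, coeff_C]; norm_num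
      have hXw : (X * wLag).coeff 2 = 1 := by rw [coeff_X_mul, hwc]
      have hd : (derivative (QLag (m + 1))).coeff (2 * (m + 1)) = C (-r) * (2 * ((m : ℚ[X]) + 1) + 1) := by
        rw [coeff_derivative, hr]; push_cast; ring
      have e1 := coeff_mul_add_eq_of_natDegree_le
        (natDegree_sub_le_of_le (m := 2) (n := 2) (deg_add_le 0 (natDegree_C (C (3 * (((m + 1 : ℕ) : ℚ) + 1)))).le (b := 2)
          (deg_add_le 1 natDegree_X_le wLag_deg (by omega)) (by omega)) sLag_deg) hdeg
      have e2 := coeff_mul_add_eq_of_natDegree_le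
        (sLag_deg) ((natDegree_derivative_le (QLag (m + 1))).trans (show _ ≤ 2 * (m + 1) by omega))
      rw [max_self] at e1
      rw [Q_succ _ (by omega), coeff_sub, coeff_sub]
      rw [show 2 * (m + 1 + 1) + 1 = 2 + (2 * (m + 1) + 1) by omega, e1]
      rw [show 2 + (2 * (m + 1) + 1) = (2 + 2 * (m + 1)) + 1 by omega, mul_assoc, coeff_X_mul, e2, coeff_X_mul,
        show 2 + 2 * (m + 1) = 2 * (m + 1) + 2 by omega, hS, coeff_sub, coeff_C_mul, hXw, hsc, hr, hd]
      simp only [map_neg, map_mul, map_add, map_natCast, map_ofNat, map_one]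
      push_cast
      ring

lemma Q_degree (m : ℕ) (hm : 1 ≤ m) : natDegree (QLag m) = 2 * m + 1 := by
  apply le_antisymm (Q_deg m)
  apply le_natDegree_of_ne_zero
  obtain ⟨r, hr, -, h⟩ := Q_lead m
  rw [hr]
  have := h hm
  intro h0
  rw [C_eq_zero] at h0
  linarith

end Lag

namespace Lag

/-- homogenisation `y^d P(1/y)` -/
noncomputable def hh (d : ℕ) (P : LR[X]) : MM :=
  PowerSeries.mk fun n => if n ≤ d then P.coeff (d - n) else 0

lemma coeff_hh (d : ℕ) (P : LR[X]) (n : ℕ) : PowerSeries.coeff n (hh d P) =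
    if n ≤ d then P.coeff (d - n) else 0 := by rw [hh, PowerSeries.coeff_mk]

lemma hh_add (d : ℕ) (P Q : LR[X]) : hh d (P + Q) = hh d P + hh d Q := by
  ext1 n; simp only [coeff_hh, map_add]; split_ifs <;> simp

lemma hh_sub (d : ℕ) (P Q : LR[X]) : hh d (P - Q) = hh d P - hh d Q := by
  ext1 n; simp only [coeff_hh, map_sub]; split_ifs <;> simp

lemma hh_C_mul (d : ℕ) (a : LR) (P : LR[X]) : hh d (C a * P) = PowerSeries.C a * hh d P := by
  ext1 n; rw [PowerSeries.coeff_C_mul]; simp only [coeff_hh]; split_ifs <;> simp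

lemma hh_zero (d : ℕ) : hh d 0 = 0 := by
  ext1 n; simp only [coeff_hh, map_zero]; split_ifs <;> simp

lemma hh_sum {ι : Type*} (t : Finset ι) (f : ι → LR[X]) (d : ℕ) :
    hh d (∑ i ∈ t, f i) = ∑ i ∈ t, hh d (f i) := by
  classical
  induction t using Finset.induction_on with
  | empty => simp [hh_zero]
  | insert a t ha ih => rw [Finset.sum_insert ha, Finset.sum_insert ha, hh_add, ih]

lemma hh_reflect (d : ℕ) (P : LR[X]) (h : natDegree P ≤ d) : hh d P = ((reflect d P : LR[X]) : MM) := by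
  ext1 n
  rw [coeff_hh, Polynomial.coeff_coe, coeff_reflect]
  split_ifs with hn
  · rw [revAt_le hn]
  · rw [revAt_eq_self_of_lt (by omega), coeff_eq_zero_of_natDegree_lt (by omega)]

lemma hh_mul {d e : ℕ} {P Q : LR[X]} (hP : natDegree P ≤ d) (hQ : natDegree Q ≤ e) :
    hh (d + e) (P * Q) = hh d P * hh e Q := by
  rw [hh_reflect _ _ (deg_add_le d hP hQ le_rfl), hh_reflect _ _ hP, hh_reflect _ _ hQ, reflect_mul _ _ hP hQ,
    Polynomial.coe_mul]

lemma hh_X_mul (d : ℕ) (P : LR[X]) (h : natDegree P ≤ d) : hh (d + 1) (X * P) = hh d P := by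
  rw [add_comm, hh_mul natDegree_X_le h]
  have : hh 1 X = 1 := by
    ext1 n
    rw [coeff_hh, PowerSeries.coeff_one]
    rcases n with _ | _ | n
    · simp
    · simp
    · simp
  rw [this, one_mul]

lemma hh_succ (d : ℕ) (P : LR[X]) (h : natDegree P ≤ d) : hh (d + 1) P = yy * hh d P := by
  have h1 : hh 1 1 = yy := by
    ext1 n
    rw [coeff_hh, yy, PowerSeries.coeff_X]
    rcases n with _ | _ | n
    · simp [coeff_one]
    · simp
    · simp
  have := hh_mul (d := 1) (e := d) (P := 1) (by simp) h
  rw [one_mul, h1, add_comm] at this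
  exact this

lemma DD_hh (d : ℕ) (P : LR[X]) (h : natDegree P ≤ d) :
    DD (hh d P) = yy * hh d (X * derivative P) - d * yy * hh d P := by
  have e : yy * hh d (X * derivative P) - d * yy * hh d P = yy * (hh d (X * derivative P - C (d : LR) * P)) := by
    rw [hh_sub, hh_C_mul]; simp; ring
  rw [e, DD_apply]
  ext1 n
  rw [yy]
  rcases n with _ | _ | n
  · simp
  · simp [coeff_hh, pow_two, mul_assoc]
    rcases d with _ | d
    · simp
    · rw [coeff_X_mul, coeff_derivative]; push_cast; ring
  · rw [PowerSeries.coeff_succ_X_mul, map_neg, show n + 1 + 1 = n + 2 from rfl, PowerSeries.coeff_X_pow_mul, PowerSeries.coeff_derivative,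
      coeff_hh, coeff_hh]
    split_ifs with hn
    · rw [coeff_sub, coeff_C_mul]
      obtain ⟨t, rfl⟩ : ∃ t, d = t + (n + 1) := ⟨d - (n + 1), by omega⟩
      rw [Nat.add_sub_cancel]
      rcases t with _ | t
      · simp [mul_comm]
      · rw [coeff_X_mul, coeff_derivative]; push_cast; ring
    · simp

noncomputable def sL : LR[X] := X ^ 2 - C (2 * (LaurentPolynomial.T 1 + 1)) * X + C ((LaurentPolynomial.T 1 - 1) ^ 2)
noncomputable def wL : LR[X] := X - C (LaurentPolynomial.T 1 + 1)
noncomputable def QL (m : ℕ) : LR[X] := (QLag m).map (toLaurent : ℚ[X] →+* LR)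

lemma toL_Av : (toLaurent Av : LR) = LaurentPolynomial.T 1 := by rw [Av, toLaurent_X]

lemma sL_eq : sLag.map (toLaurent : ℚ[X] →+* LR) = sL := by
  simp only [sLag, sL, Polynomial.map_add, Polynomial.map_sub, Polynomial.map_mul, Polynomial.map_pow, map_X, map_C,
    map_mul, map_add, map_sub, map_pow, map_one, map_ofNat, toL_Av]
  simp
lemma wL_eq : wLag.map (toLaurent : ℚ[X] →+* LR) = wL := by
  simp only [wLag, wL, Polynomial.map_sub, map_X, map_C, Polynomial.map_add, map_add, Polynomial.map_one, map_one, toL_Av]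

lemma QL_zero : QL 0 = 0 := by rw [QL, Q_zero, Polynomial.map_zero]

lemma QL_one : QL 1 = C (LaurentPolynomial.C (-(1 : ℚ) / 4)) *
      (X ^ 3 - C ((3 * LaurentPolynomial.T 1 - 1) * (LaurentPolynomial.T 1 - 3)) * X
        + C (2 * (LaurentPolynomial.T 1 + 1) * (LaurentPolynomial.T 1 - 1) ^ 2)) := by
  rw [QL, Q_one, Polynomial.map_mul, Polynomial.map_add, Polynomial.map_sub, Polynomial.map_mul, Polynomial.map_pow,
    map_C, map_C, map_C, map_X, toLaurent_C]
  simp only [map_mul, map_add, map_sub, map_pow, map_one, map_ofNat, toL_Av]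

lemma QL_succ (k : ℕ) (hk : 1 ≤ k) : QL (k + 1) =
      (C (3 * ((k : LR) + 1)) * (X * wL) - sL) * QL k
        - X * sL * derivative (QL k)
        - X * ∑ p ∈ Finset.HasAntidiagonal.antidiagonal k, QL p.1 * QL p.2 := by
  rw [QL, Q_succ k hk]
  simp only [Polynomial.map_sub, Polynomial.map_mul, Polynomial.map_sum, map_X, map_C, wL_eq, sL_eq, derivative_map, QL]
  simp only [map_mul, map_add, map_natCast, map_ofNat, map_one]

lemma sL_deg : natDegree sL ≤ 2 := by
  unfold sL; compute_degree
lemma wL_deg : natDegree wL ≤ 1 := by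
  unfold wL; compute_degree

lemma QL_deg (m : ℕ) : natDegree (QL m) ≤ 3 * m := by
  rcases m with _ | m
  · simp [QL_zero]
  · exact (natDegree_map_le).trans ((Q_deg _).trans (by omega))

lemma hh_sL : hh 2 sL = (sP : MM) := by
  rw [sP_coe]
  rw [hh_reflect _ _ sL_deg]
  rw [sL, reflect_add, reflect_sub, reflect_C]
  have h1 := reflect_C_mul_X_pow 2 1 (c := (2 * (LaurentPolynomial.T 1 + 1) : LR))
  have h2 := reflect_C_mul_X_pow 2 2 (c := (1 : LR))
  rw [C_1, one_mul] at h2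
  rw [pow_one] at h1
  rw [h1, h2, revAt_le (by omega), revAt_le (by omega)]
  push_cast
  simp [AA, yy, map_ofNat]

lemma hh_wL : hh 1 wL = 1 - (AA + 1) * yy := by
  rw [hh_reflect _ _ wL_deg]
  rw [wL, reflect_sub, reflect_C]
  have h2 := reflect_C_mul_X_pow 1 1 (c := (1 : LR))
  rw [C_1, one_mul, pow_one] at h2
  rw [h2, revAt_le (by omega)]
  push_cast
  simp [AA, yy]

/-- homogenised `Q` -/
noncomputable def Qh (m : ℕ) : MM := hh (3 * m) (QL m)

lemma Qh_zero : Qh 0 = 0 := by rw [Qh, QL_zero, hh_zero]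

lemma XD_deg {P : LR[X]} {d : ℕ} (h : natDegree P ≤ d) : natDegree (X * derivative P) ≤ d := by
  rcases Nat.eq_zero_or_pos (natDegree P) with h0 | h0
  · rw [derivative_of_natDegree_zero h0]; simp
  · exact deg_add_le 1 natDegree_X_le (natDegree_derivative_le P) (by omega)

lemma Qh_succ (k : ℕ) (hk : 1 ≤ k) : Qh (k + 1) =
    (3 * ((k : MM) + 1) * yy * (1 - (AA + 1) * yy) - yy * (sP : MM)) * Qh k
      - (sP : MM) * (DD (Qh k) + 3 * k * yy * Qh k)
      - yy ^ 2 * ∑ p ∈ Finset.HasAntidiagonal.antidiagonal k, Qh p.1 * Qh p.2 := by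
  have hd := QL_deg k
  rw [Qh, QL_succ k hk, hh_sub, hh_sub, sub_mul, hh_sub]
  have e1 : hh (3 * (k + 1)) (C (3 * ((k : LR) + 1)) * (X * wL) * QL k) =
      3 * ((k : MM) + 1) * yy * (1 - (AA + 1) * yy) * Qh k := by
    have h1 : natDegree (wL * QL k) ≤ 1 + 3 * k := deg_add_le 1 wL_deg hd le_rfl
    rw [mul_assoc, hh_C_mul, show 3 * (k + 1) = (1 + 3 * k + 1) + 1 by ring, mul_assoc,
      hh_X_mul _ _ (h1.trans (by omega)), hh_succ _ _ h1, hh_mul wL_deg hd, hh_wL, Qh]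
    simp [map_ofNat]; ring
  have e2 : hh (3 * (k + 1)) (sL * QL k) = yy * (sP : MM) * Qh k := by
    rw [show 3 * (k + 1) = (2 + 3 * k) + 1 by ring, hh_succ _ _ (deg_add_le 2 sL_deg hd le_rfl),
      hh_mul sL_deg hd, hh_sL, Qh]; ring
  have e3 : hh (3 * (k + 1)) (X * sL * derivative (QL k)) = (sP : MM) * (DD (Qh k) + 3 * k * yy * Qh k) := by
    have h1 := XD_deg hd
    rw [show X * sL * derivative (QL k) = sL * (X * derivative (QL k)) by ring,
      show 3 * (k + 1) = (2 + 3 * k) + 1 by ring, hh_succ _ _ (deg_add_le 2 sL_deg h1 le_rfl),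
      hh_mul sL_deg h1, hh_sL, Qh, DD_hh _ _ hd]
    push_cast; ring
  have e4 : hh (3 * (k + 1)) (X * ∑ p ∈ Finset.HasAntidiagonal.antidiagonal k, QL p.1 * QL p.2) =
      yy ^ 2 * ∑ p ∈ Finset.HasAntidiagonal.antidiagonal k, Qh p.1 * Qh p.2 := by
    have h0 : ∀ p ∈ Finset.HasAntidiagonal.antidiagonal k, natDegree (QL p.1 * QL p.2) ≤ 3 * k := by
      rintro ⟨i, j⟩ hij
      rw [Finset.HasAntidiagonal.mem_antidiagonal] at hij
      exact deg_add_le _ (QL_deg i) (QL_deg j) (by simp only at hij; omega)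
    have h1 := natDegree_sum_le_of_forall_le _ _ h0
    rw [show 3 * (k + 1) = (3 * k + 1 + 1) + 1 by ring, hh_X_mul _ _ (h1.trans (by omega)),
      hh_succ _ _ (h1.trans (by omega)), hh_succ _ _ h1, hh_sum]
    rw [← mul_assoc, ← pow_two]
    congr 1
    apply Finset.sum_congr rfl
    rintro ⟨i, j⟩ hij
    rw [Finset.HasAntidiagonal.mem_antidiagonal] at hij
    simp only at hij ⊢
    subst hij
    rw [mul_add, hh_mul (QL_deg i) (QL_deg j)]; rfl
  rw [e1, e2, e3, e4]
  ring

lemma Qh_one : 4 * Qh 1 = -(1 - (3 * AA - 1) * (AA - 3) * yy ^ 2 + 2 * (AA + 1) * (AA - 1) ^ 2 * yy ^ 3) := by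
  have h : (4 : LR) * LaurentPolynomial.C (-(1 : ℚ) / 4) = -1 := by
    have : (4 : LR) = LaurentPolynomial.C 4 := (map_ofNat _ 4).symm
    rw [this, ← map_mul]; norm_num
  have h1 := reflect_C_mul_X_pow 3 1 (c := ((3 * LaurentPolynomial.T 1 - 1) * (LaurentPolynomial.T 1 - 3) : LR))
  have h2 := reflect_C_mul_X_pow 3 3 (c := (1 : LR))
  rw [C_1, one_mul] at h2
  rw [pow_one] at h1
  have e : (4 : MM) = PowerSeries.C (4 : LR) := by simp [map_ofNat]
  rw [Qh, QL_one, mul_one, hh_C_mul, e, ← mul_assoc, ← map_mul, h, hh_reflect _ _ (by compute_degree), reflect_add, reflect_sub,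
    h1, h2, reflect_C, revAt_le (by omega), revAt_le (by omega)]
  push_cast
  simp [AA, yy, map_ofNat]

end Lag

namespace Lag

instance : CharZero MM := algebraRat.charZero MM

lemma AAi_mul : AA * AAi = 1 := by
  rw [AA, AAi, ← map_mul, ← LaurentPolynomial.T_add]; simp

lemma DD_AA : DD AA = 0 := DD_C _

lemma two_MM_ne : (2 : MM) ≠ 0 := two_ne_zero

lemma DD_ofNat (n : ℕ) : DD (n : MM) = 0 := Derivation.map_natCast _ _

lemma DD_sP : DD (sP : MM) = 2 * (yy ^ 2 * ((AA + 1) - (AA - 1) ^ 2 * yy)) := by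
  rw [sP_coe]
  have h2 : DD (2 : MM) = 0 := DD_ofNat 2
  simp only [map_add, map_sub, Derivation.leibniz, Derivation.leibniz_pow, DD_AA, DD_yy, h2, Derivation.map_one_eq_zero,
    smul_eq_mul, nsmul_eq_mul]
  push_cast
  ring

lemma rD : rho * DD rho = yy ^ 2 * ((AA + 1) - (AA - 1) ^ 2 * yy) := by
  have h := DD_sP
  rw [← rho_sq, Derivation.leibniz_pow] at h
  simp only [smul_eq_mul, nsmul_eq_mul] at h
  apply mul_left_cancel₀ two_MM_ne
  rw [← h]; push_cast; ring

noncomputable def V1 : MM := -(DD rho * sig)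

lemma DD_sig : DD sig = -(DD rho * sig * sig) := der_inv _ rho_sig

noncomputable def qq (m : ℕ) : MM := yy ^ 2 * sig ^ (3 * m + 2) * Qh m

lemma qq_zero : qq 0 = 0 := by rw [qq, Qh_zero, mul_zero]

noncomputable def qS : PowerSeries MM := PowerSeries.mk qq

lemma rho2 : rho ^ 2 = 1 - 2 * (AA + 1) * yy + (AA - 1) ^ 2 * yy ^ 2 := by rw [rho_sq, sP_coe]

lemma rho_unit : IsUnit rho := IsUnit.of_mul_eq_one _ rho_sig

lemma ric1 : 4 * (rho * qq 1) + (2 * DD V1 + V1 ^ 2 + yy ^ 2) = 0 := by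
  have hd : DD (rho * DD rho) = -2 * yy ^ 3 * (AA + 1) + 3 * (AA - 1) ^ 2 * yy ^ 4 := by
    rw [rD]
    simp only [map_add, map_sub, Derivation.leibniz, Derivation.leibniz_pow, DD_AA, DD_yy, Derivation.map_one_eq_zero,
      smul_eq_mul, nsmul_eq_mul]
    push_cast
    ring
  rw [Derivation.leibniz, smul_eq_mul, smul_eq_mul] at hd
  have hV : DD V1 = - (DD (DD rho) * sig) + DD rho * (DD rho * sig * sig) := by
    rw [V1, map_neg, Derivation.leibniz, DD_sig, smul_eq_mul, smul_eq_mul]; ring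
  have hr := rD
  have hs := rho_sig
  have h1 := Qh_one
  have h2 := rho2
  have hu : IsUnit (rho ^ 4) := rho_unit.pow 4
  apply hu.mul_left_cancel
  rw [hV, V1, qq]
  generalize DD (DD rho) = d2 at *
  generalize DD rho = d1 at *
  have e1 : rho ^ 4 * (4 * (rho * (yy ^ 2 * sig ^ (3 * 1 + 2) * Qh 1))) = yy ^ 2 * (4 * Qh 1) := by
    have : rho ^ 5 * sig ^ 5 = 1 := by rw [← mul_pow, hs, one_pow]
    linear_combination 4 * yy ^ 2 * Qh 1 * this
  have e2 : rho ^ 4 * (2 * (-(d2 * sig) + d1 * (d1 * sig * sig)) + (-(d1 * sig)) ^ 2 + yy ^ 2) =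
      5 * (rho * d1) ^ 2 - 2 * rho ^ 2 * (rho * d2 + d1 * d1) + yy ^ 2 * (rho ^ 2) ^ 2 := by
    linear_combination (-2 * rho ^ 3 * d2 + 3 * rho ^ 2 * d1 ^ 2 * (rho * sig + 1)) * hs
  rw [mul_add, e1, e2, h1, hr, hd, h2]
  ring

lemma ricq (k : ℕ) (hk : 1 ≤ k) : rho * qq (k + 1) + (DD (qq k) + V1 * qq k +
    ∑ p ∈ Finset.HasAntidiagonal.antidiagonal k, qq p.1 * qq p.2) = 0 := by
  have hS : ∑ p ∈ Finset.HasAntidiagonal.antidiagonal k, qq p.1 * qq p.2 =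
      yy ^ 4 * sig ^ (3 * k + 4) * ∑ p ∈ Finset.HasAntidiagonal.antidiagonal k, Qh p.1 * Qh p.2 := by
    rw [Finset.mul_sum]
    apply Finset.sum_congr rfl
    rintro ⟨i, j⟩ hij
    rw [Finset.HasAntidiagonal.mem_antidiagonal] at hij
    simp only at hij ⊢
    subst hij
    rw [qq, qq]; ring
  have hD : DD (qq k) = -2 * yy ^ 3 * sig ^ (3 * k + 2) * Qh k
      - (3 * k + 2) * yy ^ 2 * sig ^ (3 * k + 3) * DD rho * Qh k + yy ^ 2 * sig ^ (3 * k + 2) * DD (Qh k) := by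
    rw [qq]
    simp only [Derivation.leibniz, Derivation.leibniz_pow, DD_yy, DD_sig, smul_eq_mul, nsmul_eq_mul]
    rw [show 3 * k + 2 - 1 = 3 * k + 1 by omega]
    push_cast
    ring
  rw [hS, hD, qq, qq, Qh_succ k hk, V1, ← rho_sq]
  have hr := rD
  have hs := rho_sig
  have h2 := rho2
  generalize ∑ p ∈ Finset.HasAntidiagonal.antidiagonal k, Qh p.1 * Qh p.2 = S
  generalize DD (Qh k) = DQ
  generalize DD rho = d1 at *
  generalize Qh k = q
  have hd : d1 = sig * (yy ^ 2 * ((AA + 1) - (AA - 1) ^ 2 * yy)) := by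
    linear_combination sig * hr - d1 * hs
  have e1 : rho * (yy ^ 2 * sig ^ (3 * (k + 1) + 2) *
        ((3 * ((k : MM) + 1) * yy * (1 - (AA + 1) * yy) - yy * rho ^ 2) * q
        - rho ^ 2 * (DQ + 3 * k * yy * q) - yy ^ 2 * S)) =
      yy ^ 2 * sig ^ (3 * k + 2) * (sig ^ 2 * (3 * ((k : MM) + 1) * yy * (1 - (AA + 1) * yy) * q - yy ^ 2 * S)
       - (yy * q + DQ + 3 * k * yy * q)) := by
    rw [show 3 * (k + 1) + 2 = (3 * k + 2) + 3 by ring, pow_add]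
    linear_combination yy ^ 2 * sig ^ (3 * k + 2) * (sig ^ 2 * ((3 * ((k : MM) + 1) * yy * (1 - (AA + 1) * yy)) * q - yy ^ 2 * S)
      - (yy * q + DQ + 3 * k * yy * q) * (rho ^ 2 * sig ^ 2 + rho * sig + 1)) * hs
  rw [e1, hd]
  have hs2 : sig ^ 2 * (1 - 2 * (AA + 1) * yy + (AA - 1) ^ 2 * yy ^ 2) = 1 := by
    rw [← h2, ← mul_pow, mul_comm, hs, one_pow]
  rw [show 3 * k + 3 = (3 * k + 2) + 1 by ring, show 3 * k + 4 = (3 * k + 2) + 2 by ring, pow_succ sig (3 * k + 2),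
    pow_add sig (3 * k + 2) 2]
  linear_combination 3 * (k + 1) * yy ^ 3 * sig ^ (3 * k + 2) * q * hs2

lemma ricS : 4 * (PowerSeries.C rho * qS) + 4 * (PowerSeries.X * (cD DD qS + PowerSeries.C V1 * qS + qS ^ 2))
    + PowerSeries.X * PowerSeries.C (2 * DD V1 + V1 ^ 2 + yy ^ 2) = 0 := by
  have e4 : (4 : PowerSeries MM) = PowerSeries.C 4 := (map_ofNat _ 4).symm
  ext1 n
  rw [e4, map_add, map_add, PowerSeries.coeff_C_mul, PowerSeries.coeff_C_mul, PowerSeries.coeff_C_mul]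
  rcases n with _ | n
  · simp [qS, qq_zero]
  · rw [PowerSeries.coeff_succ_X_mul, PowerSeries.coeff_succ_X_mul, map_add, map_add, coeff_cD, PowerSeries.coeff_C_mul,
      pow_two, PowerSeries.coeff_mul, PowerSeries.coeff_C]
    simp only [qS, PowerSeries.coeff_mk, map_zero]
    rcases n with _ | n
    · simp [qq_zero, ric1]
    · rw [if_neg (by omega)]
      linear_combination 4 * ricq (n + 1) (by omega)

noncomputable def VV : PowerSeries MM :=
  PowerSeries.C rho + PowerSeries.X * PowerSeries.C V1 + 2 * (PowerSeries.X * qS)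

noncomputable def LL : Ladder MM where
  D := DD
  E := EE
  hDE := DE_comm
  y := yy
  A := AA
  ρ := rho
  σ := sig
  Ai := AAi
  τ := exists_tau.choose
  hDy := DD_yy
  hEy := EE_yy
  hDA := DD_AA
  hEA := EE_AA
  hρ := rho2
  hσ := rho_sig
  hAi := AAi_mul
  hτ := exists_tau.choose_spec
  V := VV
  hV0 := by simp [VV]
  ric := by
    have h := ricS
    have h2 : cD DD (2 : PowerSeries MM) = 0 := Derivation.map_natCast _ 2
    have hv : cD DD VV = PowerSeries.C (DD rho) + PowerSeries.X * PowerSeries.C (DD V1) + 2 * (PowerSeries.X * cD DD qS) := by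
      rw [VV, map_add, map_add, Derivation.leibniz, Derivation.leibniz, Derivation.leibniz, cD_C, cD_C, cD_X, h2]
      simp only [smul_eq_mul]; ring
    have hV1 : PowerSeries.C rho * PowerSeries.C V1 = - PowerSeries.C (DD rho) := by
      rw [← map_mul, ← map_neg, V1]; congr 1
      linear_combination - DD rho * rho_sig
    rw [hv, VV]
    simp only [map_add, map_mul, map_pow, map_ofNat] at h ⊢
    linear_combination PowerSeries.X * h + 2 * PowerSeries.X * hV1

lemma coeff_VV_zero : PowerSeries.coeff 0 VV = rho := by simp [VV]
lemma coeff_VV_succ (m : ℕ) : PowerSeries.coeff (m + 1) VV = (if m = 0 then V1 else 0) + 2 * qq m := by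
  have e4 : (2 : PowerSeries MM) = PowerSeries.C 2 := (map_ofNat _ 2).symm
  rw [VV, e4, map_add, map_add, PowerSeries.coeff_C_mul, PowerSeries.coeff_succ_X_mul, PowerSeries.coeff_succ_X_mul,
    PowerSeries.coeff_C, PowerSeries.coeff_C, if_neg (by omega), zero_add, qS, PowerSeries.coeff_mk]

lemma Bev_yy : yy ∈ Bev := by
  have := coe_mem_Bev X
  rwa [Polynomial.coe_X] at this
lemma Bev_C (a : LR) : PowerSeries.C a ∈ Bev := by
  have := coe_mem_Bev (C a)
  rwa [Polynomial.coe_C] at this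
lemma Bev_rho2 : rho ^ 2 ∈ Bev := by rw [rho_sq]; exact coe_mem_Bev _
lemma Bev_hh (d : ℕ) (P : LR[X]) (h : natDegree P ≤ d) : hh d P ∈ Bev := by
  rw [hh_reflect d P h]; exact coe_mem_Bev _
lemma Bev_sig_even (n : ℕ) : sig ^ (2 * n) ∈ Bev := by
  rw [pow_mul]; exact Subalgebra.pow_mem _ sig_mem n

lemma rho_sig_pow (n : ℕ) : rho * sig ^ (n + 1) = sig ^ n := by
  rw [pow_succ]; linear_combination sig ^ n * rho_sig

lemma V1_mem : V1 ∈ Bev := by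
  have : V1 = - (sig ^ 2 * (yy ^ 2 * ((AA + 1) - (AA - 1) ^ 2 * yy))) := by
    rw [V1, ← rD]; linear_combination (sig * DD rho) * rho_sig
  rw [this]
  have hA : AA ∈ Bev := Bev_C _
  have h1 := Subalgebra.one_mem Bev
  exact Subalgebra.neg_mem _ (Subalgebra.mul_mem _ sig_mem (Subalgebra.mul_mem _ (Subalgebra.pow_mem _ Bev_yy _)
    (Subalgebra.sub_mem _ (Subalgebra.add_mem _ hA h1) (Subalgebra.mul_mem _ (Subalgebra.pow_mem _ (Subalgebra.sub_mem _ hA h1) _) Bev_yy))))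

lemma two_mem : (2 : MM) ∈ Bev := by
  have := Subalgebra.natCast_mem Bev 2
  exact_mod_cast this

lemma LLPar : LL.Par Bev where
  y := Bev_yy
  A := Bev_C _
  Ai := Bev_C _
  ρ2 := Bev_rho2
  σ2 := sig_mem
  E := Bev_E
  const := const_lemma
  Ve := by
    intro n hn
    change rho * PowerSeries.coeff n VV ∈ Bev
    rcases n with _ | m
    · rw [coeff_VV_zero, ← pow_two]; exact Bev_rho2
    · obtain ⟨l, hl⟩ := hn
      rw [coeff_VV_succ, if_neg (by omega), zero_add, qq]
      obtain ⟨j, hj⟩ : ∃ j, 3 * m + 2 = 2 * j + 1 := ⟨(3 * m + 1) / 2, by omega⟩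
      have : rho * (2 * (yy ^ 2 * sig ^ (3 * m + 2) * Qh m)) = 2 * (yy ^ 2 * sig ^ (2 * j) * Qh m) := by
        rw [hj, ← rho_sig_pow (2 * j)]; ring
      rw [this]
      exact Subalgebra.mul_mem _ two_mem (Subalgebra.mul_mem _ (Subalgebra.mul_mem _ (Subalgebra.pow_mem _ Bev_yy _) (Bev_sig_even _))
        (Bev_hh _ _ (QL_deg m)))
  Vo := by
    intro n hn
    change PowerSeries.coeff n VV ∈ Bev
    obtain ⟨l, hl⟩ := hn
    subst hl
    rw [coeff_VV_succ]
    apply Subalgebra.add_mem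
    · split_ifs
      · exact V1_mem
      · exact Subalgebra.zero_mem _
    · rw [qq, show 3 * (2 * l) + 2 = 2 * (3 * l + 1) by ring]
      exact Subalgebra.mul_mem _ two_mem (Subalgebra.mul_mem _ (Subalgebra.mul_mem _ (Subalgebra.pow_mem _ Bev_yy _) (Bev_sig_even _))
        (Bev_hh _ _ (QL_deg _)))

/-- primitives of `qq` -/
lemma prim (m : ℕ) (P : LR[X]) (hd : natDegree P ≤ 3 * m)
    (hP : sL * derivative P - C (3 * (m : LR)) * (wL * P) = QL m) :
    DD (sig ^ (3 * m) * hh (3 * m) P) = qq m := by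
  have h1 : (sP : MM) * hh (3 * m) (X * derivative P) = 3 * m * ((1 - (AA + 1) * yy) * hh (3 * m) P) + yy * Qh m := by
    have h2 := congrArg (fun F => hh (2 + 3 * m) (X * F)) hP
    simp only [mul_sub, hh_sub] at h2
    rw [mul_left_comm, hh_mul sL_deg (XD_deg hd), hh_sL, mul_left_comm, hh_C_mul,
      show 2 + 3 * m = (1 + 3 * m) + 1 by ring, hh_X_mul _ _ (deg_add_le 1 wL_deg hd le_rfl), hh_mul wL_deg hd, hh_wL,
      hh_X_mul _ _ ((QL_deg m).trans (by omega)), add_comm 1, hh_succ _ _ (QL_deg m)] at h2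
    rw [Qh, ← h2]
    simp [map_ofNat]
  have hD := DD_hh (3 * m) P hd
  rw [Derivation.leibniz, hD, Derivation.leibniz_pow, DD_sig, qq]
  simp only [smul_eq_mul, nsmul_eq_mul]
  have e : ((3 * m : ℕ) : MM) * (sig ^ (3 * m - 1) * -(DD rho * sig * sig)) = - (3 * m * sig ^ (3 * m) * (DD rho * sig)) := by
    rcases m with _ | m
    · simp
    · rw [show 3 * (m + 1) - 1 = 3 * m + 2 by omega]; push_cast; ring
  rw [e]
  have hs := rho_sig
  have hr := rD
  have hd : DD rho = sig * (yy ^ 2 * ((AA + 1) - (AA - 1) ^ 2 * yy)) := by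
    linear_combination sig * hr - DD rho * hs
  rw [hd]
  have h2 := rho2
  rw [← rho_sq] at h1
  have h1' : hh (3 * m) (X * derivative P) = sig ^ 2 * (3 * m * ((1 - (AA + 1) * yy) * hh (3 * m) P) + yy * Qh m) := by
    rw [← h1]
    linear_combination (-hh (3 * m) (X * derivative P)) * (rho * sig + 1) * hs
  rw [h1']
  have hs2 : sig ^ 2 * (1 - 2 * (AA + 1) * yy + (AA - 1) ^ 2 * yy ^ 2) = 1 := by
    rw [← h2, ← mul_pow, mul_comm, hs, one_pow]
  push_cast
  linear_combination 3 * m * yy * sig ^ (3 * m) * hh (3 * m) P * hs2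

end Lag

namespace Lag

noncomputable def phi2 : MM := PowerSeries.C (LaurentPolynomial.C (1 / 2 : ℚ)) * AAi * (sig * (1 - (AA + 1) * yy))

lemma halfMM : (2 : MM) * PowerSeries.C (LaurentPolynomial.C (1 / 2 : ℚ)) = 1 := by
  have : (2 : MM) = PowerSeries.C (LaurentPolynomial.C 2) := by rw [map_ofNat, map_ofNat]
  rw [this, ← map_mul, ← map_mul]; norm_num

lemma DD_phi2 : 2 * DD phi2 = -4 * yy ^ 3 * sig ^ 3 := by
  have hA : DD AAi = 0 := DD_C _
  have h1 : DD (sig * (1 - (AA + 1) * yy)) = -4 * AA * yy ^ 3 * sig ^ 3 := by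
    have hs := rho_sig
    have hr := rD
    have hd : DD rho = sig * (yy ^ 2 * ((AA + 1) - (AA - 1) ^ 2 * yy)) := by
      linear_combination sig * hr - DD rho * hs
    have hs2 : sig ^ 2 * (1 - 2 * (AA + 1) * yy + (AA - 1) ^ 2 * yy ^ 2) = 1 := by
      rw [← rho2, ← mul_pow, mul_comm, hs, one_pow]
    simp only [map_add, map_sub, Derivation.leibniz, DD_AA, DD_yy, DD_sig, Derivation.map_one_eq_zero, smul_eq_mul, hd]
    linear_combination (-sig * (AA + 1) * yy ^ 2) * hs2
  rw [phi2, Derivation.leibniz, h1, Derivation.leibniz, hA, DD_C]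
  simp only [smul_eq_mul]
  linear_combination (-4 * yy ^ 3 * sig ^ 3) * (AA * AAi * halfMM + AAi_mul)

lemma EE_rho : EE (EE rho) = -4 * yy ^ 3 * sig ^ 3 := by
  have h2 : EE (2 : MM) = 0 := Derivation.map_natCast _ 2
  have h1 : rho * EE rho = - yy + (AA - 1) * yy ^ 2 := by
    have := congrArg EE rho2
    simp only [map_add, map_sub, Derivation.leibniz, Derivation.leibniz_pow, EE_AA, EE_yy, h2, Derivation.map_one_eq_zero,
      smul_eq_mul, nsmul_eq_mul] at this
    push_cast at this
    apply mul_left_cancel₀ two_MM_ne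
    linear_combination this
  have h3 := congrArg EE h1
  simp only [map_add, map_sub, map_neg, Derivation.leibniz, Derivation.leibniz_pow, EE_AA, EE_yy, Derivation.map_one_eq_zero,
      smul_eq_mul, nsmul_eq_mul] at h3
  have h4 := rho2
  have hs := rho_sig
  apply (rho_unit.pow 3).mul_left_cancel
  have e : rho ^ 3 * (-4 * yy ^ 3 * sig ^ 3) = -4 * yy ^ 3 := by
    linear_combination (-4 * yy ^ 3) * (rho ^ 2 * sig ^ 2 + rho * sig + 1) * hs
  rw [e]
  linear_combination rho ^ 2 * h3 - (rho * EE rho - yy + (AA - 1) * yy ^ 2) * h1 + yy ^ 2 * h4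

noncomputable def piM : MM →ₐ[ℚ] LR := RingHom.toRatAlgHom PowerSeries.constantCoeff

lemma piM_apply (x : MM) : piM x = PowerSeries.constantCoeff x := rfl

lemma limitQ (Pf : ℕ → LR[X]) (hd : ∀ m, Odd m → natDegree (Pf m) ≤ 3 * m)
    (hP : ∀ m, Odd m → sL * derivative (Pf m) - C (3 * (m : LR)) * (wL * Pf m) = QL m)
    (p : PowerSeries LR)
    (hp : p = PowerSeries.mk fun n => if n ≠ 0 ∧ Even n then (Pf (n - 1)).coeff (3 * (n - 1)) else 0) :
    2 * (ThR dT (cD dT p) - cD dT p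
      + Ladder.om dT (LaurentPolynomial.C (1 / 2 : ℚ) * LaurentPolynomial.T (-1)))
      * (2 * PowerSeries.C (LaurentPolynomial.T 1) + PowerSeries.X) = 2 * PowerSeries.X := by
  set φ : PowerSeries MM := PowerSeries.mk fun n => if n ≠ 0 ∧ Even n then
    sig ^ (3 * (n - 1)) * hh (3 * (n - 1)) (Pf (n - 1)) else 0 with hφ
  have hodd : ∀ n, n ≠ 0 ∧ Even n → Odd (n - 1) := by
    rintro n ⟨h0, h1⟩
    exact Nat.Even.sub_odd (by omega) h1 odd_one
  have h := LLPar.limit φ phi2 ?_ ?_ ?_ ?_ piM dT ?_ ?_ ?_ ?_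
  · have e1 : PowerSeries.map (piM : MM →+* LR) φ = p := by
      rw [hp]
      ext1 n
      rw [PowerSeries.coeff_map, hφ, PowerSeries.coeff_mk, PowerSeries.coeff_mk]
      change piM _ = _
      rw [piM_apply]
      split_ifs with hn
      · rw [map_mul, map_pow, sig_0, one_pow, one_mul, ← PowerSeries.coeff_zero_eq_constantCoeff_apply, coeff_hh]
        simp
      · simp
    have e2 : piM phi2 = LaurentPolynomial.C (1 / 2 : ℚ) * LaurentPolynomial.T (-1) := by
      rw [piM_apply, phi2]; simp [sig_0, yy, AAi]
    have e3 : piM LL.A = LaurentPolynomial.T 1 := by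
      change piM AA = _
      rw [piM_apply, AA]; simp
    rw [e1, e2, e3] at h
    exact h
  · change 4 * cD DD φ = LL.O - 2 * PowerSeries.C rho
    have e4 : (4 : PowerSeries MM) = PowerSeries.C 4 := (map_ofNat _ 4).symm
    have e2 : (2 : PowerSeries MM) = PowerSeries.C 2 := (map_ofNat _ 2).symm
    ext1 n
    rw [e4, e2, PowerSeries.coeff_C_mul, coeff_cD, map_sub, PowerSeries.coeff_C_mul, Ladder.O, map_sub, Ladder.coeff_V', hφ,
      PowerSeries.coeff_mk, PowerSeries.coeff_C]
    change _ = PowerSeries.coeff n VV - -((-1) ^ n * PowerSeries.coeff n VV) - _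
    rcases n with _ | n
    · simp [coeff_VV_zero]; ring
    · rw [if_neg (show ¬ (n + 1 = 0) by omega)]
      split_ifs with hn
      · have ho := hodd _ hn
        rw [Nat.add_sub_cancel] at ho ⊢
        rw [prim n _ (hd n ho) (hP n ho), hn.2.neg_one_pow, coeff_VV_succ, if_neg]
        · ring
        · rintro rfl; simp at ho
      · have : Odd (n + 1) := by
          rw [← Nat.not_even_iff_odd]; intro h; exact hn ⟨by omega, h⟩
        rw [this.neg_one_pow]; simp
  · intro n
    change rho * _ ∈ Bev
    rw [hφ, PowerSeries.coeff_mk]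
    split_ifs with hn
    · obtain ⟨l, hl⟩ := hodd n hn
      rw [hl, show 3 * (2 * l + 1) = 2 * (3 * l + 1) + 1 by ring, ← mul_assoc, rho_sig_pow,
        show 2 * (3 * l + 1) + 1 = 3 * (2 * l + 1) by ring]
      exact Subalgebra.mul_mem _ (Bev_sig_even _) (Bev_hh _ _ (hd _ ⟨l, rfl⟩))
    · rw [mul_zero]; exact Subalgebra.zero_mem _
  · change 2 * DD phi2 = EE (EE rho)
    rw [DD_phi2, EE_rho]
  · change rho * phi2 ∈ Bev
    have : rho * phi2 = PowerSeries.C (LaurentPolynomial.C (1 / 2 : ℚ)) * AAi * (1 - (AA + 1) * yy) := by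
      rw [phi2]
      linear_combination PowerSeries.C (LaurentPolynomial.C (1 / 2 : ℚ)) * AAi * (1 - (AA + 1) * yy) * rho_sig
    rw [this]
    have h1 := Subalgebra.one_mem Bev
    exact Subalgebra.mul_mem _ (Subalgebra.mul_mem _ (Bev_C _) (Bev_C _))
      (Subalgebra.sub_mem _ h1 (Subalgebra.mul_mem _ (Subalgebra.add_mem _ (Bev_C _) h1) Bev_yy))
  · intro x
    change piM (EE x) = dT (piM x)
    rw [piM_apply, piM_apply, EE, ← PowerSeries.coeff_zero_eq_constantCoeff_apply, coeff_cD,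
      PowerSeries.coeff_zero_eq_constantCoeff_apply]
  · change piM yy = 0
    rw [piM_apply, yy]; simp
  · exact rho_0
  · intro n hn
    change piM (PowerSeries.coeff n VV) = 0
    rw [piM_apply]
    obtain ⟨m, rfl⟩ : ∃ m, n = m + 1 := ⟨n - 1, by omega⟩
    rw [coeff_VV_succ]
    have hD : PowerSeries.constantCoeff V1 = 0 := by
      rw [V1, DD_apply]; simp
    have hq : PowerSeries.constantCoeff (qq m) = 0 := by
      rw [qq, yy]; simp
    rw [map_add, map_mul, hq]
    split_ifs <;> simp [hD]

end Lag

namespace Lag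

/-- the operator in centred coordinates -/
noncomputable def Lop (M : ℕ) (p : LR[X]) : LR[X] :=
  (X ^ 2 - C (4 * LaurentPolynomial.T 1)) * derivative p - C (M : LR) * (X * p)

lemma Lop_add (M : ℕ) (p q : LR[X]) : Lop M (p + q) = Lop M p + Lop M q := by
  simp only [Lop, derivative_add]; ring
lemma Lop_sub (M : ℕ) (p q : LR[X]) : Lop M (p - q) = Lop M p - Lop M q := by
  simp only [Lop, derivative_sub]; ring
lemma Lop_C_mul (M : ℕ) (a : LR) (p : LR[X]) : Lop M (C a * p) = C a * Lop M p := by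
  simp only [Lop, derivative_C_mul]; ring
lemma Lop_sum {ι : Type*} (M : ℕ) (t : Finset ι) (f : ι → LR[X]) :
    Lop M (∑ i ∈ t, f i) = ∑ i ∈ t, Lop M (f i) := by
  classical
  induction t using Finset.induction_on with
  | empty => simp [Lop]
  | insert a t ha ih => rw [Finset.sum_insert ha, Finset.sum_insert ha, Lop_add, ih]

lemma Lop_X_pow (M j : ℕ) : Lop M (X ^ (j + 1)) =
    C ((j : LR) + 1 - M) * X ^ (j + 2) - C (4 * LaurentPolynomial.T 1 * ((j : LR) + 1)) * X ^ j := by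
  simp only [Lop, derivative_X_pow, map_sub, map_add, map_mul, map_natCast, map_one]
  push_cast
  ring

lemma Lop_one (M : ℕ) : Lop M 1 = - C (M : LR) * X := by
  simp only [Lop, derivative_one]; ring

noncomputable abbrev qC : ℚ →+* LR := LaurentPolynomial.C

lemma qC_nat (n : ℕ) : (n : LR) = qC n := (map_natCast (LaurentPolynomial.C : ℚ →+* LR) n).symm

lemma solEven (M : ℕ) (t : ℕ) : ∀ i, i + 1 + 2 * t = M →
    ∃ (p : LR[X]) (r : ℚ), natDegree p ≤ M ∧ Lop M p = X ^ i ∧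
      p.coeff M = qC r * LaurentPolynomial.T (-((t : ℤ) + 1)) := by
  have hTT : (LaurentPolynomial.T 1 : LR) * LaurentPolynomial.T (-1) = 1 := by
    rw [← LaurentPolynomial.T_add]; simp
  have key : ∀ j : ℕ, qC (1 / (4 * ((j : ℚ) + 1))) * LaurentPolynomial.T (-1) *
      (4 * LaurentPolynomial.T 1 * ((j : LR) + 1)) = 1 := by
    intro j
    have : qC (1 / (4 * ((j : ℚ) + 1))) * (4 * ((j : LR) + 1)) = 1 := by
      have h4 : (4 * ((j : LR) + 1)) = qC (4 * ((j : ℚ) + 1)) := by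
        rw [qC_nat]; simp only [map_mul, map_add, map_one, map_ofNat]
      rw [h4, ← map_mul, one_div_mul_cancel (by positivity), map_one]
    linear_combination this + qC (1 / (4 * ((j : ℚ) + 1))) * (4 * ((j : LR) + 1)) * hTT
  induction t with
  | zero =>
    intro i hi
    subst hi
    refine ⟨C (-(qC (1 / (4 * ((i : ℚ) + 1))) * LaurentPolynomial.T (-1))) * X ^ (i + 1), -(1 / (4 * ((i : ℚ) + 1))),
      ?_, ?_, ?_⟩
    · exact (natDegree_C_mul_X_pow_le _ _).trans (by omega)
    · rw [Lop_C_mul, Lop_X_pow]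
      have h0 : ((i : LR) + 1 - ((i + 1 + 2 * 0 : ℕ) : LR)) = 0 := by push_cast; ring
      rw [h0, map_zero, zero_mul, map_neg]
      have hk := congrArg (C : LR →+* LR[X]) (key i)
      rw [C_mul, C_1] at hk
      linear_combination X ^ i * hk
    · rw [coeff_C_mul, coeff_X_pow]; simp
  | succ t ih =>
    intro i hi
    obtain ⟨p, r, h1, h2, h3⟩ := ih (i + 2) (by omega)
    refine ⟨C (qC (1 / (4 * ((i : ℚ) + 1))) * LaurentPolynomial.T (-1)) * (C ((i : LR) + 1 - M) * p - X ^ (i + 1)),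
      1 / (4 * ((i : ℚ) + 1)) * (i + 1 - M) * r, ?_, ?_, ?_⟩
    · refine (natDegree_C_mul_le _ _).trans (deg_sub_le ((natDegree_C_mul_le _ _).trans h1) ?_)
      exact (natDegree_X_pow_le _).trans (by omega)
    · rw [Lop_C_mul, Lop_sub, Lop_C_mul, h2, Lop_X_pow, sub_sub_cancel, ← mul_assoc, ← map_mul, key, map_one, one_mul]
    · rw [coeff_C_mul, coeff_sub, coeff_C_mul, h3, coeff_X_pow, if_neg (by omega), sub_zero]
      have e : (LaurentPolynomial.T (-(((t + 1 : ℕ) : ℤ) + 1)) : LR) = LaurentPolynomial.T (-1) * LaurentPolynomial.T (-((t : ℤ) + 1)) := by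
        rw [← LaurentPolynomial.T_add]; congr 1; push_cast; ring
      rw [e, map_mul, map_mul, map_sub, map_add, map_one, qC_nat, qC_nat]
      ring

lemma solOdd (M : ℕ) (t : ℕ) : 2 * t + 1 ≤ M →
    ∃ (p : LR[X]), natDegree p ≤ 2 * t ∧ Lop M p = X ^ (2 * t + 1) := by
  have key : ∀ j : ℚ, j - M ≠ 0 → qC (1 / (j - M)) * (qC j - M) = 1 := by
    intro j hj
    rw [qC_nat, ← map_sub, ← map_mul, one_div_mul_cancel hj, map_one]
  induction t with
  | zero =>
    intro h
    refine ⟨C (qC (1 / (0 - M))), by simp, ?_⟩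
    have h0 : (0 : ℚ) - M ≠ 0 := by
      have : (M : ℚ) ≠ 0 := by norm_cast; omega
      simpa using this
    have := key 0 h0
    rw [← mul_one (C _), Lop_C_mul, Lop_one, ← map_neg, ← mul_assoc, ← map_mul]
    rw [map_zero, zero_sub (M : LR)] at this
    rw [this]; simp
  | succ t ih =>
    intro h
    obtain ⟨p, h1, h2⟩ := ih (by omega)
    refine ⟨C (qC (1 / ((2 * t + 2 : ℕ) - M))) * (X ^ (2 * t + 1 + 1) + C (4 * LaurentPolynomial.T 1 * (((2 * t + 1 : ℕ) : LR) + 1)) * p), ?_, ?_⟩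
    · refine (natDegree_C_mul_le _ _).trans ((natDegree_add_le_of_degree_le (n := 2 * (t + 1)) ?_ ?_))
      · exact (natDegree_X_pow_le _).trans (by omega)
      · exact (natDegree_C_mul_le _ _).trans (by omega)
    · rw [Lop_C_mul, Lop_add, Lop_C_mul, h2, Lop_X_pow, sub_add_cancel, ← mul_assoc, ← map_mul]
      have h0 : ((2 * t + 2 : ℕ) : ℚ) - M ≠ 0 := by
        intro h0
        rw [sub_eq_zero] at h0
        norm_cast at h0
        omega
      have := key _ h0
      have e : (((2 * t + 1 : ℕ) : LR) + 1 - M) = qC ((2 * t + 2 : ℕ) : ℚ) - M := by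
        rw [← qC_nat]; push_cast; ring
      rw [e, this, map_one, one_mul]
      congr 1

lemma solAll (M : ℕ) (hM : Odd M) (i : ℕ) (hi : i ≤ M) :
    ∃ (p : LR[X]) (r : ℚ) (t : ℕ), natDegree p ≤ M ∧ Lop M p = X ^ i ∧
      p.coeff M = qC r * LaurentPolynomial.T (-((t : ℤ) + 1)) ∧
      ((Odd i ∧ r = 0) ∨ (Even i ∧ i + 1 + 2 * t = M)) := by
  rcases Nat.even_or_odd i with h | h
  · obtain ⟨t, ht⟩ : ∃ t, i + 1 + 2 * t = M := by
      obtain ⟨a, ha⟩ := hM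
      obtain ⟨b, hb⟩ := h
      exact ⟨a - b, by omega⟩
    obtain ⟨p, r, h1, h2, h3⟩ := solEven M t i ht
    exact ⟨p, r, t, h1, h2, h3, Or.inr ⟨h, ht⟩⟩
  · obtain ⟨t, rfl⟩ := h
    obtain ⟨p, h1, h2⟩ := solOdd M t hi
    refine ⟨p, 0, 0, h1.trans (by omega), h2, ?_, Or.inl ⟨⟨t, rfl⟩, rfl⟩⟩
    rw [coeff_eq_zero_of_natDegree_lt (by omega)]; simp

def NP (f : LR) : Prop := ∀ j : ℤ, 0 < j → f.coeff j = 0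

lemma NP_add {f g : LR} (hf : NP f) (hg : NP g) : NP (f + g) := by
  intro j hj
  simp [hf j hj, hg j hj]

lemma NP_zero : NP 0 := by intro j hj; simp

lemma NP_sum {ι : Type*} (t : Finset ι) (f : ι → LR) (h : ∀ i ∈ t, NP (f i)) : NP (∑ i ∈ t, f i) :=
  Finset.sum_induction f NP (fun _ _ => NP_add) NP_zero h

lemma NP_CT (a : ℚ) (n : ℤ) (hn : n ≤ 0) : NP (qC a * LaurentPolynomial.T n) := by
  intro j hj
  rw [← LaurentPolynomial.single_eq_C_mul_T, AddMonoidAlgebra.coeff_single, Finsupp.single_apply, if_neg (by omega)]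

lemma NP_poly (f : ℚ[X]) (r : ℚ) (t : ℕ) (h : ∀ j, t + 1 < j → f.coeff j = 0) :
    NP (toLaurent f * (qC r * LaurentPolynomial.T (-((t : ℤ) + 1)))) := by
  have hf : f.natDegree < t + 2 := by
    rw [Nat.lt_succ_iff]
    exact natDegree_le_iff_coeff_eq_zero.mpr h
  rw [as_sum_range' f _ hf, map_sum, Finset.sum_mul]
  apply NP_sum
  intro j hj
  rw [Finset.mem_range] at hj
  rw [← C_mul_X_pow_eq_monomial, map_mul, toLaurent_C, map_pow, toLaurent_X, LaurentPolynomial.T_pow]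
  have : (LaurentPolynomial.C (f.coeff j) * LaurentPolynomial.T ((j : ℤ) * 1) * (qC r * LaurentPolynomial.T (-((t : ℤ) + 1))) : LR)
      = qC (f.coeff j * r) * LaurentPolynomial.T ((j : ℤ) + -((t : ℤ) + 1)) := by
    rw [LaurentPolynomial.T_add, map_mul, mul_one]; ring
  rw [this]
  exact NP_CT _ _ (by omega)

noncomputable def ev : LR →+* ℚ := LaurentPolynomial.eval₂ (RingHom.id ℚ) (-1 : ℚˣ)

lemma ev_toLaurent (f : ℚ[X]) : ev (toLaurent f) = f.eval (-1) := by
  rw [ev, LaurentPolynomial.eval₂_toLaurent, eval₂_id]; simp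

/-- weight condition -/
def Wt (N : ℕ) (q : Polynomial (Polynomial ℚ)) : Prop := ∀ i j, N < 2 * j + i → (q.coeff i).coeff j = 0

lemma solve (M : ℕ) (hM : Odd M) (q : Polynomial (Polynomial ℚ)) (hq : natDegree q ≤ M)
    (hw : Wt (M + 1) q) (he : ∀ i, Even i → (q.coeff i).eval (-1) = 0) :
    ∃ p : LR[X], natDegree p ≤ M ∧ Lop M p = q.map (toLaurent : ℚ[X] →+* LR) ∧ NP (p.coeff M) ∧
      ev (p.coeff M) = 0 := by
  have h : ∀ i : ℕ, ∃ (p : LR[X]) (r : ℚ) (t : ℕ), i ≤ M → natDegree p ≤ M ∧ Lop M p = X ^ i ∧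
      p.coeff M = qC r * LaurentPolynomial.T (-((t : ℤ) + 1)) ∧
      ((Odd i ∧ r = 0) ∨ (Even i ∧ i + 1 + 2 * t = M)) := by
    intro i
    by_cases hi : i ≤ M
    · obtain ⟨p, r, t, h⟩ := solAll M hM i hi
      exact ⟨p, r, t, fun _ => h⟩
    · exact ⟨0, 0, 0, fun h => absurd h hi⟩
  choose p r t h using h
  have hc : (∑ i ∈ Finset.range (M + 1), C (toLaurent (q.coeff i) : LR) * p i).coeff M =
      ∑ i ∈ Finset.range (M + 1), toLaurent (q.coeff i) * (qC (r i) * LaurentPolynomial.T (-((t i : ℤ) + 1))) := by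
    rw [finsetSum_coeff]
    apply Finset.sum_congr rfl
    intro i hi
    rw [Finset.mem_range] at hi
    rw [coeff_C_mul, (h i (by omega)).2.2.1]
  refine ⟨∑ i ∈ Finset.range (M + 1), C (toLaurent (q.coeff i) : LR) * p i, ?_, ?_, ?_, ?_⟩
  · apply natDegree_sum_le_of_forall_le
    intro i hi
    rw [Finset.mem_range] at hi
    exact (natDegree_C_mul_le _ _).trans (h i (by omega)).1
  · rw [Lop_sum, as_sum_range' (q.map _) (M + 1) (Nat.lt_succ_of_le (natDegree_map_le.trans hq))]
    apply Finset.sum_congr rfl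
    intro i hi
    rw [Finset.mem_range] at hi
    rw [Lop_C_mul, (h i (by omega)).2.1, coeff_map, C_mul_X_pow_eq_monomial]
  · rw [hc]
    apply NP_sum
    intro i hi
    rw [Finset.mem_range] at hi
    rcases (h i (by omega)).2.2.2 with ⟨-, h0⟩ | ⟨-, h0⟩
    · rw [h0, map_zero, zero_mul, mul_zero]; exact NP_zero
    · apply NP_poly
      intro j hj
      exact hw i j (by omega)
  · rw [hc, map_sum]
    apply Finset.sum_eq_zero
    intro i hi
    rw [Finset.mem_range] at hi
    rcases (h i (by omega)).2.2.2 with ⟨-, h0⟩ | ⟨h1, h0⟩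
    · rw [h0, map_zero, zero_mul, mul_zero, map_zero]
    · rw [map_mul, ev_toLaurent, he i h1, zero_mul]

end Lag

namespace Lag

lemma Wt_mono {N N' : ℕ} (h : N ≤ N') {q} (hq : Wt N q) : Wt N' q :=
  fun i j hij => hq i j (by omega)
lemma Wt_add {N : ℕ} {p q} (hp : Wt N p) (hq : Wt N q) : Wt N (p + q) := by
  intro i j hij; rw [coeff_add, coeff_add, hp i j hij, hq i j hij, add_zero]
lemma Wt_sub {N : ℕ} {p q} (hp : Wt N p) (hq : Wt N q) : Wt N (p - q) := by
  intro i j hij; rw [coeff_sub, coeff_sub, hp i j hij, hq i j hij, sub_zero]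
lemma Wt_zero {N : ℕ} : Wt N 0 := by intro i j _; simp
lemma Wt_sum {ι : Type*} {N : ℕ} (t : Finset ι) (f : ι → Polynomial (Polynomial ℚ)) (h : ∀ i ∈ t, Wt N (f i)) :
    Wt N (∑ i ∈ t, f i) := Finset.sum_induction f (Wt N) (fun _ _ => Wt_add) Wt_zero h
lemma Wt_mul {N N' K : ℕ} {p q} (hp : Wt N p) (hq : Wt N' q) (hK : N + N' ≤ K) : Wt K (p * q) := by
  intro i j hij
  rw [coeff_mul, finsetSum_coeff]
  apply Finset.sum_eq_zero
  rintro ⟨a, b⟩ hab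
  rw [Finset.HasAntidiagonal.mem_antidiagonal] at hab
  rw [coeff_mul]
  apply Finset.sum_eq_zero
  rintro ⟨c, d⟩ hcd
  rw [Finset.HasAntidiagonal.mem_antidiagonal] at hcd
  simp only at hab hcd ⊢
  by_cases h : N < 2 * c + a
  · rw [hp a c h, zero_mul]
  · rw [hq b d (by omega), mul_zero]
lemma Wt_C {N : ℕ} (f : ℚ[X]) (h : 2 * f.natDegree ≤ N) : Wt N (C f) := by
  intro i j hij
  rw [coeff_C]
  split_ifs with h0
  · exact coeff_eq_zero_of_natDegree_lt (by omega)
  · simp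
lemma Wt_X : Wt 1 X := by
  intro i j hij
  rw [coeff_X]
  split_ifs with h0
  · rw [coeff_one, if_neg (by omega)]
  · simp
lemma Wt_der {N : ℕ} {q} (h : Wt (N + 1) q) : Wt N (derivative q) := by
  intro i j hij
  rw [coeff_derivative]
  have : ((i : ℚ[X]) + 1) = C ((i : ℚ) + 1) := by simp
  rw [this, coeff_mul_C, h (i + 1) j (by omega), zero_mul]

noncomputable def Qt (m : ℕ) : Polynomial (Polynomial ℚ) := (QLag m).comp (X + C (Av + 1))

lemma Qt_zero : Qt 0 = 0 := by rw [Qt, Q_zero, zero_comp]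

lemma Qt_one : Qt 1 = C (C (-(1 : ℚ) / 4)) * (X ^ 3 + C (3 * (Av + 1)) * X ^ 2 + C (16 * Av) * X + C (8 * Av * (Av + 1))) := by
  rw [Qt, Q_one]
  simp only [mul_comp, add_comp, sub_comp, pow_comp, X_comp, C_comp]
  simp only [map_mul, map_add, map_sub, map_pow, map_one, map_ofNat]
  ring

lemma sLag_comp : sLag.comp (X + C (Av + 1)) = X ^ 2 - C (4 * Av) := by
  rw [sLag]
  simp only [mul_comp, add_comp, sub_comp, pow_comp, X_comp, C_comp]
  simp only [map_mul, map_add, map_sub, map_pow, map_one, map_ofNat]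
  ring

lemma wLag_comp : wLag.comp (X + C (Av + 1)) = X := by
  rw [wLag]
  simp only [sub_comp, X_comp, C_comp]
  ring

lemma Qt_succ (k : ℕ) (hk : 1 ≤ k) : Qt (k + 1) =
      (C (C (3 * ((k : ℚ) + 1))) * ((X + C (Av + 1)) * X) - (X ^ 2 - C (4 * Av))) * Qt k
        - (X + C (Av + 1)) * (X ^ 2 - C (4 * Av)) * derivative (Qt k)
        - (X + C (Av + 1)) * ∑ p ∈ Finset.HasAntidiagonal.antidiagonal k, Qt p.1 * Qt p.2 := by
  have hd : derivative (Qt k) = (derivative (QLag k)).comp (X + C (Av + 1)) := by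
    rw [Qt, derivative_comp]; simp
  rw [hd, Qt, Q_succ k hk]
  simp only [sub_comp, mul_comp, C_comp, X_comp, wLag_comp, sLag_comp, Polynomial.sum_comp, Qt]

lemma Av_deg : natDegree Av ≤ 1 := natDegree_X_le

lemma Wt_B : Wt 2 (X + C (Av + 1)) := by
  refine Wt_add (Wt_mono (by omega) Wt_X) (Wt_C _ ?_)
  have : natDegree (Av + 1) ≤ 1 := by unfold Av; compute_degree
  omega
lemma Wt_X2 : Wt 2 (X ^ 2) := by rw [pow_two]; exact Wt_mul Wt_X Wt_X le_rfl
lemma Wt_s : Wt 2 (X ^ 2 - C (4 * Av)) := by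
  refine Wt_sub Wt_X2 (Wt_C _ ?_)
  have : natDegree (4 * Av) ≤ 1 := by unfold Av; compute_degree
  omega

lemma Wt_Q (m : ℕ) : Wt (3 * m + 1) (Qt m) := by
  induction m using Nat.strong_induction_on with
  | _ m ih =>
    rcases m with _ | _ | m
    · rw [Qt_zero]; exact Wt_zero
    · rw [Qt_one]
      refine Wt_mul (N := 0) (N' := 4) (Wt_C _ (by simp)) ?_ (by omega)
      have hA : natDegree (16 * Av) ≤ 1 := by unfold Av; compute_degree
      have hB : natDegree (3 * (Av + 1)) ≤ 1 := by unfold Av; compute_degree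
      have hC : natDegree (8 * Av * (Av + 1)) ≤ 2 := by unfold Av; compute_degree
      refine Wt_add (Wt_add (Wt_add ?_ ?_) ?_) ?_
      · rw [pow_succ]; exact Wt_mul Wt_X2 Wt_X (by omega)
      · exact Wt_mul (N := 2) (Wt_C _ (by omega)) Wt_X2 (by omega)
      · exact Wt_mul (N := 2) (Wt_C _ (by omega)) Wt_X (by omega)
      · exact Wt_C _ (by omega)
    · rw [Qt_succ _ (by omega)]
      have h1 := ih (m + 1) (by omega)
      refine Wt_sub (Wt_sub ?_ ?_) ?_
      · refine Wt_mul (N := 3) (Wt_sub ?_ (Wt_mono (by omega) Wt_s)) h1 (by omega)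
        exact Wt_mul (N := 0) (N' := 3) (Wt_C _ (by simp [-map_mul, -map_add])) (Wt_mul Wt_B Wt_X (by omega)) (by omega)
      · exact Wt_mul (N := 4) (Wt_mul Wt_B Wt_s (by omega)) (Wt_der h1) (by omega)
      · refine Wt_mul (N' := 3 * (m + 1) + 2) Wt_B ?_ (by omega)
        apply Wt_sum
        rintro ⟨i, j⟩ hij
        rw [Finset.HasAntidiagonal.mem_antidiagonal] at hij
        simp only at hij
        rcases Nat.eq_zero_or_pos i with h0 | h0
        · subst h0; simp only [Qt_zero, zero_mul]; exact Wt_zero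
        rcases Nat.eq_zero_or_pos j with h0 | h0
        · subst h0; simp only [Qt_zero, mul_zero]; exact Wt_zero
        exact Wt_mul (ih i (by omega)) (ih j (by omega)) (by omega)

noncomputable def Qe (m : ℕ) : ℚ[X] := (Qt m).map (evalRingHom (-1))

lemma eAv : eval (-1 : ℚ) Av = -1 := by rw [Av, eval_X]

lemma Qe_odd (m : ℕ) : (Qe m).comp (-X) = - Qe m := by
  induction m using Nat.strong_induction_on with
  | _ m ih =>
    rcases m with _ | _ | m
    · simp [Qe, Qt_zero]
    · have : Qe 1 = C (-(1 : ℚ) / 4) * (X ^ 3 + C (-16) * X) := by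
        rw [Qe, Qt_one]
        simp only [Polynomial.map_mul, Polynomial.map_add, Polynomial.map_pow, map_X, map_C, coe_evalRingHom, eval_mul, eval_add,
          eAv, eval_C, eval_ofNat, eval_one]
        norm_num
      rw [zero_add, this]
      simp only [mul_comp, add_comp, pow_comp, X_comp, C_comp]
      ring
    · have h : Qe (m + 1 + 1) = (C (3 * (((m + 1 : ℕ) : ℚ) + 1)) * X ^ 2 - (X ^ 2 + 4)) * Qe (m + 1)
        - X * (X ^ 2 + 4) * derivative (Qe (m + 1))
        - X * ∑ p ∈ Finset.HasAntidiagonal.antidiagonal (m + 1), Qe p.1 * Qe p.2 := by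
        have e4 : (4 : ℚ[X]) = - C (-4 : ℚ) := by rw [← map_neg, neg_neg, map_ofNat]
        rw [Qe, Qt_succ _ (by omega)]
        simp only [Polynomial.map_mul, Polynomial.map_add, Polynomial.map_sub, Polynomial.map_pow, Polynomial.map_sum, map_X,
          map_C, coe_evalRingHom, eval_mul, eval_add, eAv, eval_C, eval_ofNat, eval_one, derivative_map, Qe]
        rw [neg_add_cancel, map_zero, add_zero, show (4 : ℚ) * -1 = -4 by norm_num, e4]
        ring
      have hd : (derivative (Qe (m + 1))).comp (-X) = derivative (Qe (m + 1)) := by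
        have := congrArg derivative (ih (m + 1) (by omega))
        rw [derivative_comp, derivative_neg, derivative_neg, derivative_X] at this
        linear_combination -this
      have hS : (∑ p ∈ Finset.HasAntidiagonal.antidiagonal (m + 1), Qe p.1 * Qe p.2).comp (-X) =
          ∑ p ∈ Finset.HasAntidiagonal.antidiagonal (m + 1), Qe p.1 * Qe p.2 := by
        rw [Polynomial.sum_comp]
        apply Finset.sum_congr rfl
        rintro ⟨i, j⟩ hij
        rw [Finset.HasAntidiagonal.mem_antidiagonal] at hij
        simp only at hij ⊢
        rcases Nat.eq_zero_or_pos i with h0 | h0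
        · subst h0; simp [Qe, Qt_zero]
        rcases Nat.eq_zero_or_pos j with h0 | h0
        · subst h0; simp [Qe, Qt_zero]
        rw [mul_comp, ih i (by omega), ih j (by omega)]; ring
      rw [h]
      simp only [sub_comp, mul_comp, add_comp, pow_comp, X_comp, C_comp, hd, hS, ih (m + 1) (by omega), ofNat_comp]
      ring

lemma Qt_even (m i : ℕ) (hi : Even i) : ((Qt m).coeff i).eval (-1) = 0 := by
  have h := congrArg (fun p => coeff p i) (Qe_odd m)
  have e : (Qe m).comp (-X) = (Qe m).comp (C (-1) * X) := by simp
  simp only [e, comp_C_mul_X_coeff, coeff_neg, hi.neg_one_pow, mul_one] at h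
  have h2 : (Qe m).coeff i = ((Qt m).coeff i).eval (-1) := by rw [Qe, coeff_map, coe_evalRingHom]
  rw [← h2]; linarith

lemma exP (m : ℕ) (hm : Odd m) : ∃ P : LR[X], natDegree P ≤ 3 * m ∧
    sL * derivative P - C (3 * (m : LR)) * (wL * P) = QL m ∧ NP (P.coeff (3 * m)) ∧ ev (P.coeff (3 * m)) = 0 := by
  have h1 : 1 ≤ m := hm.pos
  have hd : natDegree (Qt m) ≤ 3 * m := by
    rw [Qt, natDegree_comp, natDegree_X_add_C, mul_one]
    exact (Q_deg m).trans (by omega)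
  obtain ⟨p, hp1, hp2, hp3, hp4⟩ := solve (3 * m) (by
    obtain ⟨a, rfl⟩ := hm
    exact ⟨3 * a + 1, by ring⟩) (Qt m) hd (Wt_Q m) (Qt_even m)
  set Y : LR[X] := X - C (LaurentPolynomial.T 1 + 1) with hY
  have hYX : (X + C (LaurentPolynomial.T 1 + 1) : LR[X]).comp Y = X := by rw [hY]; simp
  have hc : (p.comp Y).coeff (3 * m) = p.coeff (3 * m) := by
    rcases hp1.lt_or_eq with h | h
    · rw [coeff_eq_zero_of_natDegree_lt h, coeff_eq_zero_of_natDegree_lt]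
      rwa [natDegree_comp, hY, natDegree_X_sub_C, mul_one]
    · rw [← h]
      have h2 : (p.comp Y).natDegree = p.natDegree := by rw [natDegree_comp, hY, natDegree_X_sub_C, mul_one]
      have h3 : (p.comp Y).leadingCoeff = p.leadingCoeff := by
        rw [leadingCoeff_comp (by rw [hY, natDegree_X_sub_C]; omega), hY, leadingCoeff_X_sub_C, one_pow, mul_one]
      rw [leadingCoeff, leadingCoeff, h2] at h3
      exact h3
  refine ⟨p.comp Y, ?_, ?_, by rwa [hc], by rwa [hc]⟩
  · rwa [natDegree_comp, hY, natDegree_X_sub_C, mul_one]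
  · have h := congrArg (fun q => q.comp Y) hp2
    have hQ : ((Qt m).map (toLaurent : ℚ[X] →+* LR)).comp Y = QL m := by
      rw [Qt, Polynomial.map_comp, Polynomial.map_add, map_X, map_C, comp_assoc, map_add, map_one, toL_Av, hYX, comp_X]
      rfl
    simp only [hQ] at h
    rw [← h, Lop]
    simp only [sub_comp, mul_comp, pow_comp, X_comp, C_comp, derivative_comp]
    have hs : sL = Y ^ 2 - C (4 * LaurentPolynomial.T 1) := by
      rw [sL, hY]; simp only [map_mul, map_add, map_sub, map_pow, map_one, map_ofNat]; ring
    have hw : wL = Y := rfl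
    have hYd : derivative Y = 1 := by rw [hY]; simp
    rw [hs, hw, hYd]
    push_cast
    ring

end Lag

namespace Lag

noncomputable def be (n : ℕ) : ℚ := (2 * (1 / 2 : ℚ) ^ n - 1) * _root_.bernoulli n

lemma be_zero : be 0 = 1 := by rw [be, _root_.bernoulli_zero]; norm_num

lemma be_odd (n : ℕ) (h : Odd n) : be n = 0 := by
  rcases eq_or_ne n 1 with rfl | h1
  · rw [be]; norm_num
  · rw [be, bernoulli_eq_zero_of_odd h (by have := h.pos; omega), mul_zero]

lemma be_sum (n : ℕ) : ∑ p ∈ Finset.HasAntidiagonal.antidiagonal n,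
    (((p.1 + 1).factorial : ℚ))⁻¹ * (be p.2 / (p.2.factorial : ℚ)) = (1 / 2 : ℚ) ^ n / n.factorial := by
  set e := PowerSeries.exp ℚ with he
  set E := PowerSeries.rescale (1 / 2 : ℚ) e with hE
  set B := bernoulliPowerSeries ℚ with hB
  have h1 : B * (e - 1) = PowerSeries.X := bernoulliPowerSeries_mul_exp_sub_one ℚ
  have h2 : E ^ 2 = e := by
    have := PowerSeries.exp_pow_eq_rescale_exp (A := ℚ) 2
    rw [hE, ← map_pow, this, PowerSeries.rescale_rescale]
    norm_num
    rfl
  have h3 : PowerSeries.rescale (1 / 2 : ℚ) B * (E - 1) = PowerSeries.C (1 / 2 : ℚ) * PowerSeries.X := by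
    have := congrArg (PowerSeries.rescale (1 / 2 : ℚ)) h1
    rw [map_mul, map_sub, map_one, PowerSeries.rescale_X] at this
    exact this
  have h4 : (e - 1) * (2 * PowerSeries.rescale (1 / 2 : ℚ) B - B) = PowerSeries.X * E := by
    have hc : (2 : PowerSeries ℚ) * PowerSeries.C (1 / 2 : ℚ) = 1 := by
      rw [← map_ofNat (PowerSeries.C : ℚ →+* PowerSeries ℚ) 2, ← map_mul]; norm_num
    rw [← h2] at h1 ⊢
    linear_combination 2 * (E + 1) * h3 - h1 + (E + 1) * PowerSeries.X * hc
  have h5 : 2 * PowerSeries.rescale (1 / 2 : ℚ) B - B = PowerSeries.mk fun n => be n / (n.factorial : ℚ) := by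
    ext n
    rw [← map_ofNat (PowerSeries.C : ℚ →+* PowerSeries ℚ) 2, map_sub, PowerSeries.coeff_C_mul, PowerSeries.coeff_rescale, hB, bernoulliPowerSeries, PowerSeries.coeff_mk, PowerSeries.coeff_mk, be]
    simp only [eq_ratCast, Rat.cast_id]
    ring
  have h6 := congrArg (PowerSeries.coeff (n + 1)) h4
  rw [h5, PowerSeries.coeff_succ_X_mul, PowerSeries.coeff_mul, Finset.Nat.sum_antidiagonal_succ, hE, PowerSeries.coeff_rescale, he,
    PowerSeries.coeff_exp] at h6
  simp only [map_sub, PowerSeries.coeff_exp, PowerSeries.coeff_one, PowerSeries.coeff_mk] at h6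
  simp at h6
  rw [← div_eq_mul_inv] at h6
  simpa using h6

lemma be_ne (k : ℕ) (hk : 1 ≤ k) : be (2 * k) ≠ 0 := by
  rw [be]
  apply mul_ne_zero
  · have h : (1 / 2 : ℚ) ^ (2 * k) ≤ (1 / 2 : ℚ) ^ 2 := pow_le_pow_of_le_one (by norm_num) (by norm_num) (by omega)
    norm_num at h ⊢
    intro h0
    linarith
  · intro h0
    have h := hasSum_zeta_nat (k := k) (by omega)
    rw [h0] at h
    have h2 := le_hasSum h 1 (by intro j _; positivity)
    norm_num at h2

lemma dT_it (a : ℚ) (j r : ℕ) : (dT : LR → LR)^[r] (LaurentPolynomial.C a * LaurentPolynomial.T (-((j : ℤ) + 1))) =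
    LaurentPolynomial.C (a * (-1) ^ r * ((j + r).factorial / j.factorial)) * LaurentPolynomial.T (-(((j + r : ℕ) : ℤ) + 1)) := by
  induction r with
  | zero => 
    rw [Function.iterate_zero, id, add_zero, div_self (by positivity)]; simp
  | succ r ih =>
    rw [Function.iterate_succ_apply', ih, dT_CT]
    congr 2
    · rw [← add_assoc, Nat.factorial_succ]; push_cast; ring

/-- the convolution system has a unique solution -/
lemma conv_unique (D : ℕ → LR)
    (h : ∀ n, ∑ p ∈ Finset.HasAntidiagonal.antidiagonal n, ((((p.1 + 1).factorial : ℚ))⁻¹) • (dT : LR → LR)^[p.1] (D p.2) =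
      LaurentPolynomial.C ((-1) ^ n / 2 ^ (n + 1) : ℚ) * LaurentPolynomial.T (-((n : ℤ) + 1))) (n : ℕ) :
    D n = LaurentPolynomial.C (be n / 2) * LaurentPolynomial.T (-((n : ℤ) + 1)) := by
  set D' : ℕ → LR := fun n => LaurentPolynomial.C (be n / 2) * LaurentPolynomial.T (-((n : ℤ) + 1)) with hD'
  have h' : ∀ n, ∑ p ∈ Finset.HasAntidiagonal.antidiagonal n, ((((p.1 + 1).factorial : ℚ))⁻¹) • (dT : LR → LR)^[p.1] (D' p.2) =
      LaurentPolynomial.C ((-1) ^ n / 2 ^ (n + 1) : ℚ) * LaurentPolynomial.T (-((n : ℤ) + 1)) := by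
    intro n
    have e : ∀ p ∈ Finset.HasAntidiagonal.antidiagonal n, ((((p.1 + 1).factorial : ℚ))⁻¹) • (dT : LR → LR)^[p.1] (D' p.2) =
       LaurentPolynomial.C (((-1) ^ n * n.factorial / 2) * ((((p.1 + 1).factorial : ℚ))⁻¹ * (be p.2 / (p.2.factorial : ℚ)))) * LaurentPolynomial.T (-((n : ℤ) + 1)) := by
      rintro ⟨i, j⟩ hij
      rw [Finset.HasAntidiagonal.mem_antidiagonal] at hij
      simp only at hij ⊢
      simp only [hD']
      rw [dT_it, LaurentPolynomial.smul_eq_C_mul, ← mul_assoc, ← map_mul, add_comm j i, hij]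
      congr 2
      have hs : be j * (-1) ^ i = be j * (-1) ^ n := by
        rcases Nat.even_or_odd j with hj | hj
        · rw [← hij, pow_add, hj.neg_one_pow, mul_one]
        · rw [be_odd j hj]; ring
      linear_combination (((i + 1).factorial : ℚ))⁻¹ * (n.factorial / j.factorial) / 2 * hs
    rw [Finset.sum_congr rfl e, ← Finset.sum_mul, ← map_sum, ← Finset.mul_sum, be_sum]
    congr 2
    rw [pow_succ, one_div, inv_pow]
    field_simp
  induction n using Nat.strong_induction_on with
  | _ n ih =>
    have h0 := (h n).trans (h' n).symm
    rw [← sub_eq_zero, ← Finset.sum_sub_distrib, Finset.sum_eq_single (0, n)] at h0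
    · simp only [Function.iterate_zero, id] at h0
      rw [← smul_sub, smul_eq_zero] at h0
      exact sub_eq_zero.mp (h0.resolve_left (by norm_num))
    · rintro ⟨i, j⟩ hij hne
      rw [Finset.HasAntidiagonal.mem_antidiagonal] at hij
      simp only at hij ⊢
      have hj : j < n := by
        rcases Nat.eq_zero_or_pos i with h0 | h0
        · exfalso; apply hne; subst h0; simp at hij; rw [hij]
        · omega
      rw [ih j hj, sub_self]
    · intro h; exact absurd (by simp) h

lemma leadP (Pf : ℕ → LR[X]) (hd : ∀ m, Odd m → natDegree (Pf m) ≤ 3 * m)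
    (hP : ∀ m, Odd m → sL * derivative (Pf m) - C (3 * (m : LR)) * (wL * Pf m) = QL m) (m : ℕ) (hm : Odd m) :
    dT (dT ((Pf m).coeff (3 * m))) = LaurentPolynomial.C (be (m + 1) / 2) * LaurentPolynomial.T (-((m : ℤ) + 2)) := by
  set p : PowerSeries LR := PowerSeries.mk fun n => if n ≠ 0 ∧ Even n then (Pf (n - 1)).coeff (3 * (n - 1)) else 0 with hp
  have h := limitQ Pf hd hP p hp
  set k0 : LR := LaurentPolynomial.C (1 / 2 : ℚ) * LaurentPolynomial.T (-1) with hk0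
  set G := ThR dT (cD dT p) - cD dT p + Ladder.om dT k0 with hG
  set u : PowerSeries LR := 2 * PowerSeries.C (LaurentPolynomial.T 1) + PowerSeries.X with hu
  have hT1 : (2 : LR) * LaurentPolynomial.T 1 * k0 = 1 := by
    have h2 : (2 : LR) = LaurentPolynomial.C 2 := (map_ofNat (LaurentPolynomial.C : ℚ →+* LR) 2).symm
    have h3 : (LaurentPolynomial.T 1 : LR) * LaurentPolynomial.T (-1) = 1 := by
      rw [← LaurentPolynomial.T_add]; simp
    have h4 : (LaurentPolynomial.C 2 : LR) * LaurentPolynomial.C (1 / 2 : ℚ) = 1 := by rw [← map_mul]; norm_num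
    rw [hk0, h2]; linear_combination (LaurentPolynomial.C 2 * LaurentPolynomial.C (1 / 2 : ℚ)) * h3 + h4
  set g : PowerSeries LR := PowerSeries.X * PowerSeries.mk fun n => LaurentPolynomial.C ((-1) ^ n / 2 ^ (n + 1) : ℚ) * LaurentPolynomial.T (-((n : ℤ) + 1)) with hg
  have hgu : (PowerSeries.mk fun n => (LaurentPolynomial.C ((-1) ^ n / 2 ^ (n + 1) : ℚ) * LaurentPolynomial.T (-((n : ℤ) + 1)) : LR)) * u = 1 := by
    rw [hu, mul_add, mul_comm _ (2 * _), mul_comm _ PowerSeries.X]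
    have h2 : (2 : PowerSeries LR) * PowerSeries.C (LaurentPolynomial.T 1) = PowerSeries.C (LaurentPolynomial.C 2 * LaurentPolynomial.T 1) := by
      rw [map_mul, map_ofNat (LaurentPolynomial.C : ℚ →+* LR) 2, map_ofNat]
    rw [h2]
    ext1 n
    rw [map_add, PowerSeries.coeff_C_mul, PowerSeries.coeff_mk]
    have ee : ∀ (a b : ℚ) (r s : ℤ), (LaurentPolynomial.C a * LaurentPolynomial.T r : LR) * (LaurentPolynomial.C b * LaurentPolynomial.T s) =
        LaurentPolynomial.C (a * b) * LaurentPolynomial.T (r + s) := by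
      intro a b r s; rw [map_mul, LaurentPolynomial.T_add]; ring
    rw [ee]
    cases n with
    | zero => rw [PowerSeries.coeff_zero_X_mul]; simp
    | succ n =>
      rw [PowerSeries.coeff_succ_X_mul, PowerSeries.coeff_mk, PowerSeries.coeff_one, if_neg (by omega)]
      have e1 : (2 : ℚ) * ((-1) ^ (n + 1) / 2 ^ (n + 1 + 1)) = - ((-1) ^ n / 2 ^ (n + 1)) := by
        field_simp; ring
      have e2 : (1 : ℤ) + -(((n + 1 : ℕ) : ℤ) + 1) = -((n : ℤ) + 1) := by push_cast; ring
      rw [e1, e2, map_neg]; ring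
  have hGg : G = g := by
    have h2 : (PowerSeries.C (LaurentPolynomial.C (1 / 2 : ℚ) : LR)) * 2 = (1 : PowerSeries LR) := by
      rw [← map_ofNat (PowerSeries.C : LR →+* PowerSeries LR) 2, ← map_mul, ← map_ofNat (LaurentPolynomial.C : ℚ →+* LR) 2, ← map_mul]
      norm_num
    have h3 : G * u = PowerSeries.X := by
      linear_combination PowerSeries.C (LaurentPolynomial.C (1 / 2 : ℚ) : LR) * h + (PowerSeries.X - G * u) * h2
    rw [hg]
    linear_combination (PowerSeries.mk fun n => (LaurentPolynomial.C ((-1) ^ n / 2 ^ (n + 1) : ℚ) * LaurentPolynomial.T (-((n : ℤ) + 1)) : LR)) * h3 - G * hgu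
  have hp0 : PowerSeries.coeff 0 p = 0 := by rw [hp, PowerSeries.coeff_mk]; simp
  have key := conv_unique (fun n => if n = 0 then k0 else dT (dT (PowerSeries.coeff n p))) ?_ (m + 1)
  · simp only [if_neg (Nat.succ_ne_zero m)] at key
    rw [hp, PowerSeries.coeff_mk, if_pos ⟨by omega, hm.add_one⟩, Nat.add_sub_cancel] at key
    rw [key]; congr 2
  · intro n
    have hn := congrArg (PowerSeries.coeff (n + 1)) hGg
    rw [hg, PowerSeries.coeff_succ_X_mul, PowerSeries.coeff_mk, hG, map_add, map_sub, ThR_apply, coeff_Th,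
      Finset.Nat.sum_antidiagonal_succ, Ladder.om, PowerSeries.coeff_mk, if_neg (Nat.succ_ne_zero n)] at hn
    rw [← hn]
    simp only [Function.iterate_zero, id, Nat.factorial_zero, Nat.cast_one, inv_one, one_smul, add_sub_cancel_left, coeff_cD, Nat.add_sub_cancel]
    have hs : (((n + 1).factorial : ℚ)⁻¹ • (dT : LR → LR)^[n] k0) = 
      ∑ p ∈ Finset.HasAntidiagonal.antidiagonal n, if p = (n, 0) then (((p.1 + 1).factorial : ℚ)⁻¹ • (dT : LR → LR)^[p.1] k0) else 0 := by
      rw [Finset.sum_ite_eq' ]; simp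
    rw [hs, ← Finset.sum_add_distrib]
    apply Finset.sum_congr rfl
    rintro ⟨i, j⟩ hij
    rw [Finset.HasAntidiagonal.mem_antidiagonal] at hij
    simp only at hij ⊢
    rcases Nat.eq_zero_or_pos j with h0 | h0
    · subst h0
      have hi : i = n := by omega
      subst hi
      have hz : ∀ r, (dT : LR → LR)^[r] 0 = 0 := by
        intro r; induction r with
        | zero => rfl
        | succ r ih => rw [Function.iterate_succ_apply, map_zero, ih]
      rw [if_pos rfl, if_pos rfl, hp0, map_zero, hz, smul_zero, zero_add]
    · rw [if_neg (by omega), if_neg (by intro h; simp at h; omega), add_zero, Function.iterate_succ_apply]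

lemma leadP' (F : LR) (m : ℕ) (hm : Odd m) (b : ℚ) (h : dT (dT F) = LaurentPolynomial.C b * LaurentPolynomial.T (-((m : ℤ) + 2)))
    (hN : NP F) (he : ev F = 0) : F = LaurentPolynomial.C (b / (m * (m + 1))) * (1 + LaurentPolynomial.T (-(m : ℤ))) := by
  have hm0 := hm.pos
  have h1 : ∀ l : ℤ, ((l - 1) * l : ℚ) * F.coeff l = if l = -m then b else 0 := by
    intro l
    have := congrArg (fun G => AddMonoidAlgebra.coeff G (l - 2)) h
    simp only [coeff_dT] at this
    rw [← LaurentPolynomial.single_eq_C_mul_T, AddMonoidAlgebra.coeff_single, Finsupp.single_apply] at this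
    have e : l - 2 + 1 + 1 = l := by ring
    rw [e] at this
    push_cast at this
    have e2 : (-((m : ℤ) + 2) = l - 2) ↔ l = -m := by omega
    simp only [e2] at this
    rw [← this]; ring
  have hF : F = LaurentPolynomial.C (F.coeff 0) * LaurentPolynomial.T 0 + LaurentPolynomial.C (b / (m * (m + 1))) * LaurentPolynomial.T (-(m : ℤ)) := by
    apply AddMonoidAlgebra.ext
    ext l
    rw [← LaurentPolynomial.single_eq_C_mul_T, ← LaurentPolynomial.single_eq_C_mul_T]
    rw [AddMonoidAlgebra.coeff_add, Finsupp.add_apply]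
    simp only [AddMonoidAlgebra.coeff_single, Finsupp.single_apply]
    have h1l := h1 l
    by_cases hl0 : l = 0
    · subst hl0; rw [if_pos rfl, if_neg (by omega), add_zero]
    rw [if_neg (Ne.symm hl0), zero_add]
    by_cases hl1 : 0 < l
    · rw [hN l hl1, if_neg (by omega)]
    have hne : ((l - 1) * l : ℚ) ≠ 0 := by
      apply mul_ne_zero
      · rw [sub_ne_zero]; norm_cast; omega
      · norm_cast
    by_cases hlm : l = -m
    · rw [if_pos hlm] at h1l
      rw [if_pos hlm.symm, eq_div_iff, ← h1l, hlm]
      · push_cast; ring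
      · positivity
    · rw [if_neg hlm] at h1l
      rw [if_neg (Ne.symm hlm)]
      exact (mul_eq_zero.mp h1l).resolve_left hne
  have hev : F.coeff 0 = b / (m * (m + 1)) := by
    rw [hF, map_add, map_mul, map_mul] at he
    simp only [ev, LaurentPolynomial.eval₂_C, LaurentPolynomial.eval₂_T] at he
    have hz : ((-1 : ℚˣ) ^ (-(m : ℤ))) = -1 := by
      rw [zpow_neg, zpow_natCast, hm.neg_one_pow]; norm_num
    rw [hz] at he
    simp at he
    linarith
  rw [hF, hev]
  simp; ring

end Lag

namespace Lag

lemma uniq_aux {K : Type*} [Field K] [CharZero K] (a : K) (ha : a ≠ 0) (M : ℕ) (hM : Odd M) (p : K[X])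
    (h : (X ^ 2 - C a) * derivative p - C (M : K) * (X * p) = 0) : p = 0 := by
  have h0 : p.coeff 1 = 0 := by
    have := congrArg (fun q => coeff q 0) h
    simp [sub_mul, mul_coeff_zero, coeff_derivative] at this
    exact this.resolve_left ha
  have hn : ∀ n : ℕ, ((n : K) - M) * p.coeff n = a * (n + 2) * p.coeff (n + 2) := by
    intro n
    have := congrArg (fun q => coeff q (n + 1)) h
    simp only [sub_mul, coeff_sub, pow_two, mul_assoc, coeff_X_mul, coeff_C_mul, coeff_zero, coeff_derivative] at this
    rcases n with _ | n
    · simp at this ⊢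
      linear_combination this
    · rw [coeff_X_mul, coeff_derivative] at this
      push_cast at this ⊢
      linear_combination this
  have hodd : ∀ n : ℕ, p.coeff (2 * n + 1) = 0 := by
    intro n
    induction n with
    | zero => exact h0
    | succ n ih =>
      have h1 := hn (2 * n + 1)
      rw [ih, mul_zero] at h1
      have h2 : a * (((2 * n + 1 : ℕ) : K) + 2) ≠ 0 := mul_ne_zero ha (by norm_cast)
      exact (mul_eq_zero.mp h1.symm).resolve_left h2
  have heven : ∀ N n : ℕ, p.natDegree < 2 * n + 2 * N → p.coeff (2 * n) = 0 := by
    intro N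
    induction N with
    | zero => intro n hN; exact coeff_eq_zero_of_natDegree_lt hN
    | succ N ih =>
      intro n hN
      have h1 := hn (2 * n)
      have h2 := ih (n + 1) (by omega)
      rw [show 2 * n + 2 = 2 * (n + 1) by ring, h2, mul_zero] at h1
      refine (mul_eq_zero.mp h1).resolve_left ?_
      change _ ≠ _
      rw [sub_ne_zero]
      norm_cast
      rintro rfl
      obtain ⟨c, hc⟩ := hM
      omega
  ext n
  rw [coeff_zero]
  rcases Nat.even_or_odd' n with ⟨c, rfl | rfl⟩
  · exact heven (p.natDegree + 1) c (by omega)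
  · exact hodd c

lemma toKA_comp (P Q : Polynomial (Polynomial ℚ)) : toKA (P.comp Q) = (toKA P).comp (toKA Q) := Polynomial.map_comp _ _ _

lemma AK_eq : AK = RatFunc.X := RatFunc.algebraMap_X

lemma uniqK (M : ℕ) (hM : Odd M) (P : Polynomial KA)
    (h : toKA sLag * derivative P - C (M : KA) * (toKA wLag * P) = 0) : P = 0 := by
  have e : toKA (X + C (Av + 1)) = X + C (AK + 1) := by
    simp [toKA, Av, AK]
  have h1 : (toKA sLag).comp (X + C (AK + 1)) = X ^ 2 - C (4 * AK) := by
    rw [← e, ← toKA_comp, sLag_comp]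
    rw [toKA, Polynomial.map_sub, Polynomial.map_pow, map_X, map_C, map_mul (algebraMap _ KA), map_ofNat (algebraMap _ KA)]
    rfl
  have h2 : (toKA wLag).comp (X + C (AK + 1)) = X := by
    rw [← e, ← toKA_comp, wLag_comp]
    simp [toKA]
  have h3 := congrArg (fun q => q.comp (X + C (AK + 1))) h
  simp only [sub_comp, mul_comp, h1, h2, C_comp, zero_comp] at h3
  have h4 : P.comp (X + C (AK + 1)) = 0 := by
    apply uniq_aux (4 * AK) _ M hM
    · rw [derivative_comp, derivative_add, derivative_X, derivative_C, add_zero, one_mul]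
      exact h3
    · exact mul_ne_zero (by norm_num) (by rw [AK_eq]; exact RatFunc.X_ne_zero)
  have h5 := congrArg (fun q => q.comp (X - C (AK + 1))) h4
  simp only [comp_assoc, zero_comp] at h5
  have h6 : (X + C (AK + 1) : Polynomial KA).comp (X - C (AK + 1)) = X := by simp
  rwa [h6, comp_X] at h5

lemma toKA_L (P : Polynomial (Polynomial ℚ)) : toKA P = (P.map (toLaurent : ℚ[X] →+* LR)).map toK := by
  rw [toKA, Polynomial.map_map]
  congr 1
  exact RingHom.ext fun p => (toK_toLaurent p).symm

theorem part1 (k : ℕ) (hk : 1 ≤ k) : (∃! P : Polynomial KA,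
        toKA sLag * derivative P - C (6 * (k : KA) - 3) * (toKA wLag * P) =
          toKA (QLag (2 * k - 1))) ∧
      (∀ P : Polynomial KA,
        toKA sLag * derivative P - C (6 * (k : KA) - 3) * (toKA wLag * P) =
          toKA (QLag (2 * k - 1)) →
        P.degree = (6 * k - 3 : ℕ) ∧
        (∀ i : ℕ, ∃ (p : Polynomial ℚ) (n : ℕ),
          P.coeff i * AK ^ n = algebraMap (Polynomial ℚ) KA p) ∧
        P.leadingCoeff =
          algebraMap ℚ KA
              (((2 : ℚ) ^ ((1 : ℤ) - 2 * (k : ℤ)) - 1) * _root_.bernoulli (2 * k) /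
                (4 * (k : ℚ) * (2 * (k : ℚ) - 1))) *
            (1 + AK ^ ((1 : ℤ) - 2 * (k : ℤ)))) := by
  obtain ⟨m, hm⟩ : ∃ m, 2 * k = m + 1 := ⟨2 * k - 1, by omega⟩
  have hmo : Odd m := ⟨k - 1, by omega⟩
  have hmk : 2 * k - 1 = m := by omega
  have hdeg : 6 * k - 3 = 3 * m := by omega
  have hkQ : (2 * (k : ℚ)) = m + 1 := by exact_mod_cast hm
  have hkK : (2 * (k : KA)) = m + 1 := by exact_mod_cast hm
  have hC : (6 * (k : KA) - 3) = ((3 * m : ℕ) : KA) := by push_cast; linear_combination 3 * hkK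
  rw [hmk, hdeg, hC]
  have hex : ∀ m : ℕ, ∃ P : LR[X], Odd m → (natDegree P ≤ 3 * m ∧
    sL * derivative P - C (3 * (m : LR)) * (wL * P) = QL m ∧ NP (P.coeff (3 * m)) ∧ ev (P.coeff (3 * m)) = 0) := by
    intro m
    by_cases h : Odd m
    · obtain ⟨P, hP⟩ := exP m h; exact ⟨P, fun _ => hP⟩
    · exact ⟨0, fun h' => absurd h' h⟩
  choose Pf hPf using hex
  have hl := leadP Pf (fun m h => (hPf m h).1) (fun m h => (hPf m h).2.1) m hmo
  have hl2 := leadP' _ m hmo _ hl (hPf m hmo).2.2.1 (hPf m hmo).2.2.2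
  set c : ℚ := be (m + 1) / 2 / (m * (m + 1)) with hc
  have hc0 : c ≠ 0 := by
    have hb : be (m + 1) ≠ 0 := by rw [← hm]; exact be_ne k hk
    have := hmo.pos
    rw [hc]; positivity
  have hF0 : (Pf m).coeff (3 * m) ≠ 0 := by
    intro h0
    have := congrArg (fun G => AddMonoidAlgebra.coeff G 0) (hl2.symm.trans h0)
    have e1 : (LaurentPolynomial.C c * (1 + LaurentPolynomial.T (-(m : ℤ))) : LR) = 
       LaurentPolynomial.C c * LaurentPolynomial.T 0 + LaurentPolynomial.C c * LaurentPolynomial.T (-(m : ℤ)) := by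
      rw [LaurentPolynomial.T_zero]; ring
    simp only [e1] at this
    rw [← LaurentPolynomial.single_eq_C_mul_T, ← LaurentPolynomial.single_eq_C_mul_T,
      AddMonoidAlgebra.coeff_add, Finsupp.add_apply] at this
    simp only [AddMonoidAlgebra.coeff_single, Finsupp.single_apply] at this
    have hm1 : -(m : ℤ) ≠ 0 := by have := hmo.pos; omega
    rw [if_pos trivial, if_neg hm1, add_zero] at this
    exact hc0 this
  set P0 : Polynomial KA := (Pf m).map toK with hP0
  have hsol : toKA sLag * derivative P0 - C ((3 * m : ℕ) : KA) * (toKA wLag * P0) = toKA (QLag m) := by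
    have h := congrArg (fun q => q.map toK) (hPf m hmo).2.1
    simp only [Polynomial.map_sub, Polynomial.map_mul, map_C] at h
    rw [toKA_L sLag, toKA_L wLag, toKA_L (QLag m), sL_eq, wL_eq, hP0, derivative_map]
    have e : toK (3 * (m : LR)) = ((3 * m : ℕ) : KA) := by
      rw [map_mul, map_natCast, map_ofNat]; push_cast; rfl
    rw [e] at h
    exact h
  have huniq : ∀ P : Polynomial KA,
        toKA sLag * derivative P - C ((3 * m : ℕ) : KA) * (toKA wLag * P) = toKA (QLag m) → P = P0 := by
    intro P hP
    rw [← sub_eq_zero]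
    apply uniqK (3 * m) (Odd.mul (by decide) hmo)
    rw [derivative_sub]
    linear_combination hP - hsol
  have hcoef : P0.coeff (3 * m) ≠ 0 := by
    rw [hP0, coeff_map]
    intro h
    exact hF0 (toK_injective (by rw [h, map_zero]))
  have hnd : P0.natDegree = 3 * m :=
    le_antisymm (natDegree_map_le.trans (hPf m hmo).1) (le_natDegree_of_ne_zero hcoef)
  refine ⟨⟨P0, hsol, huniq⟩, ?_⟩
  intro P hP
  rw [huniq P hP]
  refine ⟨?_, ?_, ?_⟩
  · rw [degree_eq_natDegree (by rintro h; rw [h] at hcoef; simp at hcoef), hnd]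
  · intro i
    obtain ⟨n, p, hp⟩ := LaurentPolynomial.exists_T_pow ((Pf m).coeff i)
    refine ⟨p, n, ?_⟩
    rw [← toK_toLaurent, hp, map_mul, toK_T, hP0, coeff_map, AK_eq, zpow_natCast]
  · rw [leadingCoeff, hnd, hP0, coeff_map, hl2, map_mul, map_add, map_one, toK_T, AK_eq]
    have e1 : (1 : ℤ) - 2 * (k : ℤ) = -(m : ℤ) := by
      have : (2 * (k : ℤ)) = m + 1 := by exact_mod_cast hm
      rw [this]; ring
    rw [e1]
    congr 1
    rw [toK, LaurentPolynomial.eval₂_C]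
    congr 1
    rw [hc, be, hm]
    have e2 : (2 : ℚ) * (1 / 2) ^ (m + 1) = 2 ^ (-(m : ℤ)) := by
      rw [zpow_neg, zpow_natCast, pow_succ, one_div, inv_pow]; ring
    have e3 : 4 * (k : ℚ) * (2 * k - 1) = 2 * (m * (m + 1)) := by
      linear_combination (2 * (2 * (k : ℚ) - 1) + 2 * (m + 1)) * hkQ
    rw [e2, e3, div_div]

end Lag

namespace Lag

abbrev PP : Type := Polynomial (Polynomial ℚ)

noncomputable def dX : Derivation ℚ PP PP := (Polynomial.derivative' (R := ℚ[X])).restrictScalars ℚ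

lemma dX_apply (p : PP) : dX p = derivative p := rfl

noncomputable def thetaM (M : Type*) [CommRing M] [Algebra ℚ M] : Derivation ℚ (PowerSeries M) (PowerSeries M) :=
  (PowerSeries.X : PowerSeries M) • (PowerSeries.derivative M).restrictScalars ℚ

lemma coeff_thetaM {M : Type*} [CommRing M] [Algebra ℚ M] (F : PowerSeries M) (n : ℕ) :
    PowerSeries.coeff n (thetaM M F) = (n : M) * PowerSeries.coeff n F := by
  have : thetaM M F = PowerSeries.X * PowerSeries.derivative M F := by simp [thetaM]
  rw [this]
  cases n with
  | zero => rw [PowerSeries.coeff_zero_X_mul]; simp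
  | succ n =>
    rw [PowerSeries.coeff_succ_X_mul, PowerSeries.coeff_derivative]; push_cast; ring

noncomputable def theta : Derivation ℚ (PowerSeries PP) (PowerSeries PP) := thetaM PP

lemma coeff_theta (F : PowerSeries PP) (n : ℕ) : PowerSeries.coeff n (theta F) = (n : PP) * PowerSeries.coeff n F :=
  coeff_thetaM F n

noncomputable def delta : Derivation ℚ (PowerSeries PP) (PowerSeries PP) :=
  (PowerSeries.C sLag : PowerSeries PP) • cD dX - (PowerSeries.C (6 * wLag) : PowerSeries PP) • theta

lemma coeff_delta (F : PowerSeries PP) (n : ℕ) : PowerSeries.coeff n (delta F) =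
    sLag * derivative (PowerSeries.coeff n F) - 6 * (n : PP) * (wLag * PowerSeries.coeff n F) := by
  have : delta F = PowerSeries.C sLag * cD dX F - PowerSeries.C (6 * wLag) * theta F := by
    simp only [delta, Derivation.sub_apply, Derivation.smul_apply, smul_eq_mul]
  rw [this, map_sub, PowerSeries.coeff_C_mul, PowerSeries.coeff_C_mul, coeff_theta, coeff_cD, dX_apply]
  ring

lemma delta_theta (F : PowerSeries PP) : delta (theta F) = theta (delta F) := by
  ext1 n
  rw [coeff_delta, coeff_theta, coeff_theta, coeff_delta, derivative_mul, derivative_natCast]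
  ring

noncomputable def FF : PowerSeries PP := PowerSeries.mk fun n => if n = 0 then 1 else 2 * X * QLag (2 * n - 1)

noncomputable def RR : PowerSeries PP := PowerSeries.mk fun n => QLag (2 * n)

lemma anti_odd (n : ℕ) (hn : 1 ≤ n) : ∑ p ∈ Finset.HasAntidiagonal.antidiagonal (2 * n - 1), QLag p.1 * QLag p.2 =
    2 * ∑ p ∈ Finset.HasAntidiagonal.antidiagonal n, (if p.1 = 0 then 0 else QLag (2 * p.1 - 1)) * QLag (2 * p.2) := by
  classical
  set f : ℕ × ℕ → PP := fun p => QLag p.1 * QLag p.2 with hf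
  have h1 : ∑ p ∈ Finset.HasAntidiagonal.antidiagonal (2 * n - 1), f p =
      ∑ p ∈ (Finset.HasAntidiagonal.antidiagonal (2 * n - 1)).filter (fun p => Odd p.1), f p +
      ∑ p ∈ (Finset.HasAntidiagonal.antidiagonal (2 * n - 1)).filter (fun p => ¬ Odd p.1), f p :=
    (Finset.sum_filter_add_sum_filter_not _ _ _).symm
  have h2 : ∑ p ∈ (Finset.HasAntidiagonal.antidiagonal (2 * n - 1)).filter (fun p => ¬ Odd p.1), f p =
      ∑ p ∈ (Finset.HasAntidiagonal.antidiagonal (2 * n - 1)).filter (fun p => Odd p.1), f p := by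
    refine Finset.sum_bij' (fun p _ => p.swap) (fun p _ => p.swap) ?_ ?_ ?_ ?_ ?_
    · rintro ⟨i, j⟩ h
      simp only [Finset.mem_filter, Finset.HasAntidiagonal.mem_antidiagonal, Prod.swap] at h ⊢
      refine ⟨by omega, ?_⟩
      rw [Nat.odd_iff] at *; omega
    · rintro ⟨i, j⟩ h
      simp only [Finset.mem_filter, Finset.HasAntidiagonal.mem_antidiagonal, Prod.swap] at h ⊢
      refine ⟨by omega, ?_⟩
      rw [Nat.odd_iff] at *; omega
    · intros; simp
    · intros; simp
    · rintro ⟨i, j⟩ h; simp only [hf, Prod.swap]; ring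
  have h3 : ∑ p ∈ Finset.HasAntidiagonal.antidiagonal n, (if p.1 = 0 then 0 else QLag (2 * p.1 - 1)) * QLag (2 * p.2) =
      ∑ p ∈ (Finset.HasAntidiagonal.antidiagonal n).filter (fun p => p.1 ≠ 0), QLag (2 * p.1 - 1) * QLag (2 * p.2) := by
    rw [Finset.sum_filter]
    apply Finset.sum_congr rfl
    rintro p _
    by_cases h : p.1 = 0
    · rw [if_pos h, if_neg (by simpa using h), zero_mul]
    · rw [if_neg h, if_pos h]
  have h4 : ∑ p ∈ (Finset.HasAntidiagonal.antidiagonal (2 * n - 1)).filter (fun p => Odd p.1), f p =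
      ∑ p ∈ (Finset.HasAntidiagonal.antidiagonal n).filter (fun p => p.1 ≠ 0), QLag (2 * p.1 - 1) * QLag (2 * p.2) := by
    refine Finset.sum_bij' (fun p _ => ((p.1 + 1) / 2, p.2 / 2)) (fun p _ => (2 * p.1 - 1, 2 * p.2)) ?_ ?_ ?_ ?_ ?_
    · rintro ⟨i, j⟩ h
      simp only [Finset.mem_filter, Finset.HasAntidiagonal.mem_antidiagonal, Nat.odd_iff] at h ⊢
      omega
    · rintro ⟨i, j⟩ h
      simp only [Finset.mem_filter, Finset.HasAntidiagonal.mem_antidiagonal, Nat.odd_iff] at h ⊢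
      omega
    · rintro ⟨i, j⟩ h
      simp only [Finset.mem_filter, Finset.HasAntidiagonal.mem_antidiagonal, Nat.odd_iff] at h
      simp only [Prod.mk.injEq]
      omega
    · rintro ⟨i, j⟩ h
      simp only [Finset.mem_filter, Finset.HasAntidiagonal.mem_antidiagonal] at h
      simp only [Prod.mk.injEq]
      omega
    · rintro ⟨i, j⟩ h
      simp only [Finset.mem_filter, Finset.HasAntidiagonal.mem_antidiagonal, Nat.odd_iff] at h
      simp only [hf]
      rw [show 2 * ((i + 1) / 2) - 1 = i by omega, show 2 * (j / 2) = j by omega]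
  rw [h1, h2, h3, h4]; ring

lemma delta_FF : delta FF = -2 * (FF * RR) := by
  ext1 n
  have e2 : (-2 : PowerSeries PP) = PowerSeries.C (-2 : PP) := by rw [map_neg, map_ofNat]
  rw [coeff_delta, e2, PowerSeries.coeff_C_mul, PowerSeries.coeff_mul, FF, PowerSeries.coeff_mk]
  rcases Nat.eq_zero_or_pos n with h0 | h0
  · subst h0
    simp [RR, Q_zero]
  rw [if_neg (by omega)]
  have hr := Q_succ (2 * n - 1) (by omega)
  rw [show 2 * n - 1 + 1 = 2 * n by omega, anti_odd n h0] at hr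
  have hs : ∑ p ∈ Finset.HasAntidiagonal.antidiagonal n, PowerSeries.coeff p.1
      (PowerSeries.mk fun n => if n = 0 then (1 : PP) else 2 * X * QLag (2 * n - 1)) * PowerSeries.coeff p.2 RR =
      QLag (2 * n) + 2 * X * ∑ p ∈ Finset.HasAntidiagonal.antidiagonal n, (if p.1 = 0 then 0 else QLag (2 * p.1 - 1)) * QLag (2 * p.2) := by
    have e1 : QLag (2 * n) = ∑ p ∈ Finset.HasAntidiagonal.antidiagonal n, if p = (0, n) then QLag (2 * p.2) else 0 := by
      rw [Finset.sum_ite_eq']; simp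
    rw [e1, Finset.mul_sum, ← Finset.sum_add_distrib]
    apply Finset.sum_congr rfl
    rintro ⟨i, j⟩ hij
    rw [Finset.HasAntidiagonal.mem_antidiagonal] at hij
    simp only [RR, PowerSeries.coeff_mk] at hij ⊢
    by_cases h : i = 0
    · subst h
      have : j = n := by omega
      subst this
      simp
    · rw [if_neg h, if_neg h, if_neg (by simp [h])]; ring
  have hc : (C (C (3 * (((2 * n - 1 : ℕ) : ℚ) + 1))) : PP) = 6 * (n : PP) := by
    have e : ((2 * n - 1 : ℕ) : ℚ) + 1 = 2 * n := by
      have : (2 * n - 1 : ℕ) + 1 = 2 * n := by omega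
      exact_mod_cast this
    rw [e]; simp only [map_mul, map_ofNat, map_natCast]; ring
  rw [hs, derivative_mul, derivative_mul, derivative_X, derivative_ofNat]
  rw [hc] at hr
  linear_combination (2 : PP) * hr

lemma exEven : ∃ H : ℕ → PP, ∀ n, natDegree (H n) ≤ 4 * n ∧
    sLag * derivative (H n) - 6 * (n : PP) * (wLag * H n) = -2 * (n : PP) * QLag (2 * n) := by
  obtain ⟨I, hI⟩ := exists_inv FF 1 (by
    rw [mul_one, ← PowerSeries.coeff_zero_eq_constantCoeff_apply, FF, PowerSeries.coeff_mk, if_pos rfl])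
  set H := theta FF * I with hH
  have h1 : delta H = -2 * theta RR := by
    rw [hH, der_log_comm delta_theta hI, delta_FF]
    have e : -2 * (FF * RR) * I = - (RR + RR) := by linear_combination (-2 * RR) * hI
    rw [e, map_neg, map_add]; ring
  have h2 : FF * H = theta FF := by rw [hH]; linear_combination theta FF * hI
  refine ⟨fun n => PowerSeries.coeff n H, fun n => ⟨?_, ?_⟩⟩
  · have hF : ∀ i, natDegree (PowerSeries.coeff i FF) ≤ 4 * i := by
      intro i
      rw [FF, PowerSeries.coeff_mk]
      split_ifs with h
      · simp
      · refine deg_add_le 1 (deg_add_le 0 (by simp) natDegree_X_le (by omega)) (Q_deg (2 * i - 1)) (by omega)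
    induction n using Nat.strong_induction_on with
    | _ n ih =>
      have h3 := congrArg (PowerSeries.coeff n) h2
      rw [coeff_theta, PowerSeries.coeff_mul, ← Finset.add_sum_erase _ _ (a := (0, n)) (by simp)] at h3
      have h4 : PowerSeries.coeff 0 FF = 1 := by rw [FF, PowerSeries.coeff_mk, if_pos rfl]
      rw [h4, one_mul] at h3
      have h5 := eq_sub_of_add_eq h3
      simp only at h5 ⊢
      rw [h5]
      apply deg_sub_le
      · exact deg_add_le 0 (by simp) (hF n) (by omega)
      · apply natDegree_sum_le_of_forall_le
        rintro ⟨i, j⟩ hij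
        simp only [Finset.mem_erase, Finset.HasAntidiagonal.mem_antidiagonal, ne_eq, Prod.mk.injEq, not_and] at hij
        exact deg_add_le (4 * i) (hF i) (ih j (by omega)) (by omega)
  · have h3 := congrArg (PowerSeries.coeff n) h1
    have e2 : (-2 : PowerSeries PP) = PowerSeries.C (-2 : PP) := by rw [map_neg, map_ofNat]
    rw [coeff_delta, e2, PowerSeries.coeff_C_mul, coeff_theta, RR, PowerSeries.coeff_mk] at h3
    rw [h3]; ring

lemma coeff_top (c : KA) (P : Polynomial KA) (n : ℕ) (hn : natDegree P ≤ n) :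
    (toKA sLag * derivative P - C c * (toKA wLag * P)).coeff (n + 1) = (n - c) * P.coeff n := by
  obtain ⟨a, b, hs⟩ : ∃ a b : KA, toKA sLag = X * X + C a * X + C b :=
    ⟨-algebraMap _ KA (2 * (Av + 1)), algebraMap _ KA ((Av - 1) ^ 2), by
      rw [toKA, sLag, Polynomial.map_add, Polynomial.map_sub, Polynomial.map_mul, Polynomial.map_pow, map_X, map_C, map_C, map_neg]; ring⟩
  obtain ⟨d, hw⟩ : ∃ d : KA, toKA wLag = X + C d := ⟨-algebraMap _ KA (Av + 1), by
      rw [toKA, wLag, Polynomial.map_sub, map_X, map_C, map_neg]; ring⟩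
  have hx : ∀ i, (X * derivative P).coeff i = i * P.coeff i := by
    intro i
    cases i with
    | zero => simp
    | succ i => rw [coeff_X_mul, coeff_derivative]; push_cast; ring
  rw [hs, hw]
  have e : (X * X + C a * X + C b) * derivative P - C c * ((X + C d) * P) =
    X * (X * derivative P) + C a * (X * derivative P) + C b * derivative P - C c * (X * P + C d * P) := by ring
  rw [e]
  simp only [coeff_sub, coeff_add, coeff_C_mul, coeff_X_mul, hx, coeff_derivative]
  rw [coeff_eq_zero_of_natDegree_lt (p := P) (n := n + 1) (by omega), coeff_eq_zero_of_natDegree_lt (p := P) (n := n + 1 + 1) (by omega)]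
  ring

theorem part2 (k : ℕ) (hk : 1 ≤ k) : (∃! P : Polynomial KA,
        P.degree < (6 * k : ℕ) ∧
        toKA sLag * derivative P - C (6 * (k : KA)) * (toKA wLag * P) =
          toKA (QLag (2 * k))) ∧
      (∀ P : Polynomial KA,
        P.degree < (6 * k : ℕ) →
        toKA sLag * derivative P - C (6 * (k : KA)) * (toKA wLag * P) =
          toKA (QLag (2 * k)) →
        P.degree = (4 * k : ℕ) ∧
        ∀ i : ℕ, P.coeff i ∈ (algebraMap (Polynomial ℚ) KA).range) := by
  have hne : ∀ n : ℕ, n < 6 * k → ((n : KA) - 6 * k) ≠ 0 := by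
    intro n hn
    rw [sub_ne_zero]
    norm_cast
    omega
  have huniq : ∀ D : Polynomial KA, D.degree < (6 * k : ℕ) →
      toKA sLag * derivative D - C (6 * (k : KA)) * (toKA wLag * D) = 0 → D = 0 := by
    intro D hD h
    by_contra h0
    have hd : D.natDegree < 6 * k := (natDegree_lt_iff_degree_lt h0).mpr hD
    have := coeff_top (6 * k) D _ le_rfl
    rw [h, coeff_zero] at this
    have h3 := (mul_eq_zero.mp this.symm).resolve_left (hne _ hd)
    exact h0 (leadingCoeff_eq_zero.mp h3)
  obtain ⟨H, hH⟩ := exEven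
  obtain ⟨hH1, hH2⟩ := hH k
  set P1 : PP := C (C (-(1 : ℚ) / (2 * k))) * H k with hP1
  have hk0 : (k : ℚ) ≠ 0 := by norm_cast; omega
  have hP1e : sLag * derivative P1 - 6 * (k : PP) * (wLag * P1) = QLag (2 * k) := by
    have e : (C (C (-(1 : ℚ) / (2 * k))) : PP) * (-2 * (k : PP)) = 1 := by
      have e1 : (-2 * (k : PP)) = C (C (-2 * (k : ℚ))) := by
        simp only [map_mul, map_neg, map_ofNat, map_natCast]
      rw [e1, ← map_mul, ← map_mul]
      have : -(1 : ℚ) / (2 * k) * (-2 * k) = 1 := by field_simp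
      rw [this, map_one, map_one]
    rw [hP1, derivative_C_mul]
    linear_combination C (C (-(1 : ℚ) / (2 * k))) * hH2 + QLag (2 * k) * e
  have hP1d : natDegree P1 ≤ 4 * k := (natDegree_C_mul_le _ _).trans hH1
  have hsol : toKA sLag * derivative (toKA P1) - C (6 * (k : KA)) * (toKA wLag * toKA P1) = toKA (QLag (2 * k)) := by
    rw [← hP1e]
    have e : toKA (6 * (k : PP)) = C (6 * (k : KA)) := by
      rw [toKA]; simp only [Polynomial.map_mul, Polynomial.map_ofNat, Polynomial.map_natCast, map_mul, map_ofNat, map_natCast]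
    rw [← e]
    simp only [toKA, Polynomial.map_sub, Polynomial.map_mul, derivative_map]
  have hdeg : (toKA P1).degree < (6 * k : ℕ) := by
    refine lt_of_le_of_lt degree_le_natDegree ?_
    have : natDegree (toKA P1) ≤ 4 * k := natDegree_map_le.trans hP1d
    norm_cast
    omega
  have hu2 : ∀ P : Polynomial KA,
        P.degree < (6 * k : ℕ) →
        toKA sLag * derivative P - C (6 * (k : KA)) * (toKA wLag * P) =
          toKA (QLag (2 * k)) → P = toKA P1 := by
    intro P hPd hP
    rw [← sub_eq_zero]
    apply huniq
    · exact lt_of_le_of_lt (degree_sub_le _ _) (max_lt hPd hdeg)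
    · rw [derivative_sub]; linear_combination hP - hsol
  refine ⟨⟨toKA P1, ⟨hdeg, hsol⟩, fun P hP => hu2 P hP.1 hP.2⟩, ?_⟩
  intro P hPd hP
  rw [hu2 P hPd hP]
  refine ⟨?_, fun i => ?_⟩
  · have hle : natDegree (toKA P1) ≤ 4 * k := natDegree_map_le.trans hP1d
    have h1 := coeff_top (6 * k) (toKA P1) (4 * k) hle
    rw [hsol] at h1
    have hq : (toKA (QLag (2 * k))).coeff (4 * k + 1) ≠ 0 := by
      rw [toKA, coeff_map]
      obtain ⟨r, hr, -, h⟩ := Q_lead (2 * k)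
      have := h (by omega)
      rw [show 4 * k + 1 = 2 * (2 * k) + 1 by ring, hr]
      intro h0
      rw [map_eq_zero_iff _ (RatFunc.algebraMap_injective ℚ), C_eq_zero] at h0
      linarith
    have h2 : (toKA P1).coeff (4 * k) ≠ 0 := by
      intro h0
      rw [h0, mul_zero] at h1
      exact hq h1
    have h3 : natDegree (toKA P1) = 4 * k := le_antisymm hle (le_natDegree_of_ne_zero h2)
    rw [degree_eq_natDegree (by intro h; rw [h] at h2; simp at h2), h3]
  · rw [toKA, coeff_map]; exact ⟨_, rfl⟩

end Lag

/-- For every `k ≥ 1`: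
(i) the equation `s·P′ − 3(2k−1)·w·P = Q_{2k−1}` has exactly one solution `P ∈ K[X]`;
its degree in `X` is exactly `6k−3`, all its coefficients lie in `ℚ[A, A⁻¹]`, and its
leading coefficient is `(2^{1−2k} − 1)·B_{2k}·(1 + A^{1−2k})/(4k(2k−1))`; and
(ii) the equation `s·P′ − 6k·w·P = Q_{2k}` has exactly one solution `P ∈ K[X]` of degree
`< 6k`; its degree in `X` is exactly `4k` and all its coefficients lie in `ℚ[A]`. -/
theorem stmt16 (k : ℕ) (hk : 1 ≤ k) :
    ((∃! P : Polynomial KA,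
        toKA sLag * derivative P - C (6 * (k : KA) - 3) * (toKA wLag * P) =
          toKA (QLag (2 * k - 1))) ∧
      (∀ P : Polynomial KA,
        toKA sLag * derivative P - C (6 * (k : KA) - 3) * (toKA wLag * P) =
          toKA (QLag (2 * k - 1)) →
        P.degree = (6 * k - 3 : ℕ) ∧
        (∀ i : ℕ, ∃ (p : Polynomial ℚ) (n : ℕ),
          P.coeff i * AK ^ n = algebraMap (Polynomial ℚ) KA p) ∧
        P.leadingCoeff =
          algebraMap ℚ KA
              (((2 : ℚ) ^ ((1 : ℤ) - 2 * (k : ℤ)) - 1) * _root_.bernoulli (2 * k) /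
                (4 * (k : ℚ) * (2 * (k : ℚ) - 1))) *
            (1 + AK ^ ((1 : ℤ) - 2 * (k : ℤ))))) ∧
    ((∃! P : Polynomial KA,
        P.degree < (6 * k : ℕ) ∧
        toKA sLag * derivative P - C (6 * (k : KA)) * (toKA wLag * P) =
          toKA (QLag (2 * k))) ∧
      (∀ P : Polynomial KA,
        P.degree < (6 * k : ℕ) →
        toKA sLag * derivative P - C (6 * (k : KA)) * (toKA wLag * P) =
          toKA (QLag (2 * k)) →
        P.degree = (4 * k : ℕ) ∧
        ∀ i : ℕ, P.coeff i ∈ (algebraMap (Polynomial ℚ) KA).range)) := by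
  exact ⟨Lag.part1 k hk, Lag.part2 k hk⟩
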